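/- arXiv:0807.0706 — 2 statements merged into one kernel-verified Lean document; each statement's English description precedes it below -/
import Mathlib

section
/- Let φ : R → S be a faithfully flat homomorphism of commutative noetherian rings such that the Krull dimension of S is finite, and let M be a cotorsion R-module (i.e., Ext^1_R(F, M) = 0 for every flat R-module F). Then Gid_R(M) = Gid_S(Hom_R(S, M)); in particular, Gid_R(M) is finite if and only if Gid_S(Hom_R(S, M)) is finite. -/
/-!
Let `φ : R → S` be a faithfully flat homomorphism of commutative noetherian rings with
`dim S < ∞`, and let `M` be a cotorsion `R`-module (`Ext¹_R(F, M) = 0` for every flat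
`R`-module `F`). Then `Gid_R M = Gid_S (Hom_R(S, M))` (with the `S`-module structure
`(s • f) t = f (s * t)` on `Hom_R(S, M)`); in particular the two dimensions are
simultaneously finite.
-/

universe u

open CategoryTheory

/-- A witness that `J` is a Gorenstein injective `R`-module: an exact complex `I` of
injective `R`-modules (with differentials `d i : I (i+1) →ₗ[R] I i`) such that
`Hom_R(E, I)` is exact for every injective `R`-module `E`, together with an
isomorphism `J ≅ ker (I 0 → I (-1))`. -/
structure GorensteinInjectiveWitness (R : Type u) [CommRing R]
    (J : Type u) [AddCommGroup J] [Module R J] : Type (u + 1) where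
  I : ℤ → Type u
  [acg : ∀ i, AddCommGroup (I i)]
  [mod : ∀ i, Module R (I i)]
  inj : ∀ i, Module.Injective R (I i)
  d : ∀ i : ℤ, I (i + 1) →ₗ[R] I i
  d_comp_d : ∀ i : ℤ, (d i).comp (d (i + 1)) = 0
  exact : ∀ i : ℤ, LinearMap.ker (d i) = LinearMap.range (d (i + 1))
  hom_exact : ∀ (E : Type u) [AddCommGroup E] [Module R E], Module.Injective R E →
    ∀ (i : ℤ) (f : E →ₗ[R] I (i + 1)), (d i).comp f = 0 →
      ∃ g : E →ₗ[R] I (i + 1 + 1), (d (i + 1)).comp g = f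
  ker_iso : Nonempty (J ≃ₗ[R] LinearMap.ker (d (-1)))

/-- `J` is a Gorenstein injective `R`-module. -/
def IsGorensteinInjective (R : Type u) [CommRing R]
    (J : Type u) [AddCommGroup J] [Module R J] : Prop :=
  Nonempty (GorensteinInjectiveWitness R J)

/-- A witness for an exact sequence `0 → M → J⁰ → J¹ → ⋯ → Jⁿ → 0` with each `Jⁱ`
Gorenstein injective (modules beyond index `n` are trivial, which encodes that the
sequence stops at `Jⁿ`). -/
structure GidWitness (R : Type u) [CommRing R]
    (M : Type u) [AddCommGroup M] [Module R M] (n : ℕ) : Type (u + 1) where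
  J : ℕ → Type u
  [acg : ∀ i, AddCommGroup (J i)]
  [mod : ∀ i, Module R (J i)]
  gi : ∀ i ≤ n, IsGorensteinInjective R (J i)
  triv : ∀ i, n < i → Subsingleton (J i)
  ε : M →ₗ[R] J 0
  ε_inj : Function.Injective ε
  d : ∀ i : ℕ, J i →ₗ[R] J (i + 1)
  exact_zero : LinearMap.ker (d 0) = LinearMap.range ε
  exact : ∀ i : ℕ, LinearMap.ker (d (i + 1)) = LinearMap.range (d i)

/-- The Gorenstein injective dimension of a module: the least `n` admitting an exact
sequence `0 → M → J⁰ → ⋯ → Jⁿ → 0` of Gorenstein injective modules, as an element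
of `ℕ∞` (`⊤` if there is no such `n`). -/
noncomputable def gid (R : Type u) [CommRing R]
    (M : Type u) [AddCommGroup M] [Module R M] : ℕ∞ :=
  sInf {c : ℕ∞ | ∃ n : ℕ, c = n ∧ Nonempty (GidWitness R M n)}

section HomModule

variable (R S : Type u) [CommRing R] [CommRing S] [Algebra R S]
variable (E : Type u) [AddCommGroup E] [Module R E]

/-- The scalar action of `S` on `Hom_R(S, E)` given by `(s • f) t = f (s * t)`. -/
noncomputable instance homSMul : SMul S (S →ₗ[R] E) :=
  ⟨fun s f => f.comp (LinearMap.mulLeft R s)⟩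

lemma homSMul_apply (s : S) (f : S →ₗ[R] E) (t : S) : (s • f) t = f (s * t) := rfl

/-- The `S`-module structure on `Hom_R(S, E)` given by `(s • f) t = f (s * t)`. -/
noncomputable instance homModule : Module S (S →ₗ[R] E) where
  one_smul f := LinearMap.ext fun t => by rw [homSMul_apply, one_mul]
  mul_smul s s' f := LinearMap.ext fun t => by
    rw [homSMul_apply, homSMul_apply, homSMul_apply, mul_assoc, mul_left_comm]
  smul_zero s := LinearMap.ext fun t => by rw [homSMul_apply]; rfl
  smul_add s f g := LinearMap.ext fun t => by
    rw [homSMul_apply, LinearMap.add_apply, LinearMap.add_apply, homSMul_apply, homSMul_apply]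
  add_smul s s' f := LinearMap.ext fun t => by
    rw [homSMul_apply, LinearMap.add_apply, homSMul_apply, homSMul_apply, add_mul, map_add]
  zero_smul f := LinearMap.ext fun t => by
    rw [homSMul_apply, zero_mul, map_zero]; rfl

end HomModule

attribute [local instance] HasDerivedCategory.standard
attribute [local instance] CategoryTheory.hasExt_of_hasDerivedCategory

set_option synthInstance.maxHeartbeats 1000000
set_option maxHeartbeats 1000000

/-!
Coextension of scalars `Hom_R(S, -)` is controlled on cotorsion modules: it is exact on short exact
sequences with cotorsion kernel, and `Ext¹_S(N, Hom_R(S, M)) = 0` iff `Ext¹_R(N, M) = 0`.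

Gorenstein injective modules `G` over a noetherian ring are cotorsion. To see this, embed a flat
module `F` into an injective module to which all maps from `F` to Gorenstein injectives extend.
Such a module is the union of a chain of modules of the form `J ⊞ (C ⊗ K)` with `J` injective and
`K` flat. From `0 ⟶ C ⟶ E ⟶ C' ⟶ 0` with `E` injective and `0 ⟶ K' ⟶ P ⟶ K ⟶ 0` with `P` projective
one gets a monomorphism `C ⊗ K ⟶ (E ⊗ K) ⊞ (C' ⊗ K')` with cokernel `C' ⊗ P`. Here `E ⊗ K` is
injective, and a map from an ideal of `R` to `C ⊗ K` extends to `R` in the target, because it lifts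
to `C ⊗ P` and then extends to `R` in the injective module `E ⊗ P`. So `Hom_R(S, -)` preserves
Gorenstein injectivity.

Conversely, suppose that `M` is cotorsion and `Hom_R(S, M)` is Gorenstein injective. An injective
`R`-module `E` is a retract of `Hom_R(S, E)`, so `Ext¹_R(E, M) = 0`. A syzygy `p : I ⟶ Hom_R(S, M)`
transposes to a map `I ⟶ M`, and maps from flat modules `F` to `M` lift along it, since the cokernel
of `F ⟶ S ⊗ F` is flat by faithfully flat descent. Hence its kernel is again cotorsion with
Gorenstein injective coextension, and the construction can be iterated. The equality of dimensions
follows by dimension shifting along injective embeddings.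
-/

open Limits

section ExtVanishing

open Abelian

universe w v u₁

variable {C : Type u₁} [Category.{v} C] [Abelian C] [HasExt.{w} C]

lemma subsingleton_ext_of_retract_left {X X' : C} (r : Retract X X') (Y : C) (n : ℕ)
    [Subsingleton (Ext X' Y n)] : Subsingleton (Ext X Y n) :=
  subsingleton_of_forall_eq 0 fun x => by
    rw [← x.mk₀_id_comp, ← r.retract, ← Ext.mk₀_comp_mk₀, Ext.comp_assoc_of_second_deg_zero,
      Subsingleton.elim ((Ext.mk₀ r.r).comp x (zero_add n)) 0, Ext.comp_zero]

lemma subsingleton_ext_of_iso_right {Y Y' : C} (e : Y ≅ Y') (X : C) (n : ℕ)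
    [Subsingleton (Ext X Y' n)] : Subsingleton (Ext X Y n) :=
  subsingleton_of_forall_eq 0 fun x => by
    rw [← x.comp_mk₀_id, ← e.hom_inv_id, ← Ext.mk₀_comp_mk₀,
      ← Ext.comp_assoc_of_second_deg_zero,
      Subsingleton.elim (x.comp (Ext.mk₀ e.hom) (add_zero n)) 0, Ext.zero_comp]

variable {T : ShortComplex C} (hT : T.ShortExact)
include hT

lemma subsingleton_ext_X₂ (Y : C) (n : ℕ) [Subsingleton (Ext Y T.X₁ n)]
    [Subsingleton (Ext Y T.X₃ n)] : Subsingleton (Ext Y T.X₂ n) := by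
  refine subsingleton_of_forall_eq 0 fun x => ?_
  obtain ⟨y, rfl⟩ := Ext.covariant_sequence_exact₂ Y hT x (Subsingleton.elim _ _)
  rw [Subsingleton.elim y 0, Ext.zero_comp]

lemma subsingleton_ext_X₃ (Y : C) (n : ℕ) [Subsingleton (Ext Y T.X₂ n)]
    [Subsingleton (Ext Y T.X₁ (n + 1))] : Subsingleton (Ext Y T.X₃ n) := by
  refine subsingleton_of_forall_eq 0 fun x => ?_
  obtain ⟨y, rfl⟩ := Ext.covariant_sequence_exact₃ Y hT x rfl (Subsingleton.elim _ _)
  rw [Subsingleton.elim y 0, Ext.zero_comp]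

lemma subsingleton_ext_X₁ (Y : C) (n : ℕ) [Subsingleton (Ext Y T.X₃ n)]
    [Subsingleton (Ext Y T.X₂ (n + 1))] : Subsingleton (Ext Y T.X₁ (n + 1)) := by
  refine subsingleton_of_forall_eq 0 fun x => ?_
  obtain ⟨y, rfl⟩ := Ext.covariant_sequence_exact₁ Y hT x (Subsingleton.elim _ _) rfl
  rw [Subsingleton.elim y 0, Ext.zero_comp]

lemma exists_lift_of_subsingleton_ext {Y : C} [Subsingleton (Ext Y T.X₁ 1)] (f : Y ⟶ T.X₃) :
    ∃ g : Y ⟶ T.X₂, g ≫ T.g = f := by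
  obtain ⟨y, hy⟩ := Ext.covariant_sequence_exact₃ Y hT (Ext.mk₀ f) rfl (Subsingleton.elim _ _)
  obtain ⟨g, rfl⟩ := Ext.homEquiv₀.symm.surjective y
  exact ⟨g, Ext.homEquiv₀.symm.injective (by simpa using hy)⟩

lemma exists_extension_of_subsingleton_ext {Y : C} [Subsingleton (Ext T.X₃ Y 1)] (f : T.X₁ ⟶ Y) :
    ∃ g : T.X₂ ⟶ Y, T.f ≫ g = f := by
  obtain ⟨y, hy⟩ := Ext.contravariant_sequence_exact₁ hT Y (Ext.mk₀ f) rfl (Subsingleton.elim _ _)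
  obtain ⟨g, rfl⟩ := Ext.homEquiv₀.symm.surjective y
  exact ⟨g, Ext.homEquiv₀.symm.injective (by simpa using hy)⟩

lemma subsingleton_ext_one_of_exists_lift {Y : C} [Subsingleton (Ext Y T.X₂ 1)]
    (h : ∀ f : Y ⟶ T.X₃, ∃ g : Y ⟶ T.X₂, g ≫ T.g = f) : Subsingleton (Ext Y T.X₁ 1) := by
  refine subsingleton_of_forall_eq 0 fun x => ?_
  obtain ⟨y, rfl⟩ := Ext.covariant_sequence_exact₁ Y hT x (Subsingleton.elim _ _) (zero_add 1)
  obtain ⟨f, rfl⟩ := Ext.homEquiv₀.symm.surjective y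
  obtain ⟨g, rfl⟩ := h f
  simp [← Ext.mk₀_comp_mk₀]

lemma subsingleton_ext_one_of_exists_extension {Y : C} [Subsingleton (Ext T.X₂ Y 1)]
    (h : ∀ f : T.X₁ ⟶ Y, ∃ g : T.X₂ ⟶ Y, T.f ≫ g = f) : Subsingleton (Ext T.X₃ Y 1) := by
  refine subsingleton_of_forall_eq 0 fun x => ?_
  obtain ⟨y, rfl⟩ := Ext.contravariant_sequence_exact₃ hT Y x (Subsingleton.elim _ _) (add_zero 1)
  obtain ⟨f, rfl⟩ := Ext.homEquiv₀.symm.surjective y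
  obtain ⟨g, rfl⟩ := h f
  simp [← Ext.mk₀_comp_mk₀]

end ExtVanishing

section DiagramChases

universe v u₁

variable {C : Type u₁} [Category.{v} C] [Abelian C] {T T' : ShortComplex C}

lemma shortExact_kernelMap (hT : T.ShortExact) (hT' : T'.ShortExact) (φ : T ⟶ T') [Epi φ.τ₁] :
    (ShortComplex.mk (kernel.map φ.τ₁ φ.τ₂ T.f T'.f φ.comm₁₂)
      (kernel.map φ.τ₂ φ.τ₃ T.g T'.g φ.comm₂₃)
      (by simp [← cancel_mono (kernel.ι φ.τ₃)])).ShortExact := by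
  have := hT.mono_f
  have := hT'.mono_f
  have := hT.epi_g
  refine { exact := ?_, mono_f := ?_, epi_g := ?_ }
  · rw [ShortComplex.exact_iff_exact_up_to_refinements]
    intro A x hx
    obtain ⟨y, hy⟩ := hT.exact.lift' (x ≫ kernel.ι φ.τ₂) (by
      simpa using hx =≫ kernel.ι φ.τ₃)
    refine ⟨A, 𝟙 A, inferInstance, kernel.lift _ y ?_, ?_⟩
    · rw [← cancel_mono T'.f, Category.assoc, φ.comm₁₂, reassoc_of% hy]; simp
    · simp [← cancel_mono (kernel.ι φ.τ₂), hy]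
  · exact mono_of_mono_fac (kernel.lift_ι _ _ _)
  · rw [epi_iff_surjective_up_to_refinements]
    intro A z
    obtain ⟨A₁, π₁, _, x, hx⟩ := surjective_up_to_refinements_of_epi T.g (z ≫ kernel.ι φ.τ₃)
    obtain ⟨y, hy⟩ := hT'.exact.lift' (x ≫ φ.τ₂) (by
      simpa [φ.comm₂₃] using (hx =≫ φ.τ₃).symm)
    obtain ⟨A₂, π₂, _, w, hw⟩ := surjective_up_to_refinements_of_epi φ.τ₁ y
    refine ⟨A₂, π₂ ≫ π₁, inferInstance, kernel.lift _ (π₂ ≫ x - w ≫ T.f) ?_, ?_⟩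
    · simp [← φ.comm₁₂, ← hy, reassoc_of% hw]
    · simp [← cancel_mono (kernel.ι φ.τ₃), hx]

lemma shortExact_kernel_comp {X Y Z : C} (f : X ⟶ Y) (g : Y ⟶ Z) [Epi f] :
    (ShortComplex.mk (kernel.map f (f ≫ g) (𝟙 _) g (by simp))
      (kernel.map (f ≫ g) g f (𝟙 _) (by simp))
      (by simp [← cancel_mono (kernel.ι _)])).ShortExact where
  exact := (kernelCokernelCompSequence.snakeInput f g).L₀_exact
  mono_f := inferInstance
  epi_g := (kernelCokernelCompSequence.snakeInput f g).L₁'_exact.epi_f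
    ((isZero_cokernel_of_epi f).eq_of_tgt _ _)

lemma shortExact_cokernel_comp {X Y Z : C} (f : X ⟶ Y) (g : Y ⟶ Z) [Mono g] :
    (ShortComplex.mk (cokernel.map f (f ≫ g) (𝟙 _) g (by simp))
      (cokernel.map (f ≫ g) g f (𝟙 _) (by simp))
      (by simp [← cancel_epi (cokernel.π _)])).ShortExact where
  exact := (kernelCokernelCompSequence.snakeInput f g).L₃_exact
  mono_f := (kernelCokernelCompSequence.snakeInput f g).L₂'_exact.mono_g
    ((isZero_kernel_of_mono g).eq_of_src _ _)
  epi_g := inferInstance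

lemma shortExact_of_isIso_τ₁ (hT : T.ShortExact) (hT' : T'.ShortExact) (φ : T ⟶ T') [IsIso φ.τ₁] :
    (ShortComplex.mk (biprod.lift φ.τ₂ T.g) (biprod.desc T'.g (-φ.τ₃)) (by
      simp [φ.comm₂₃])).ShortExact := by
  have := hT.mono_f
  have := hT'.mono_f
  have := hT.epi_g
  have := hT'.epi_g
  refine { exact := ?_, mono_f := ?_, epi_g := epi_of_epi_fac (biprod.inl_desc _ _) }
  · rw [ShortComplex.exact_iff_exact_up_to_refinements]
    intro A yz hyz
    obtain ⟨y, z, rfl⟩ := biprod.decomp_hom_to yz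
    obtain ⟨A₁, π, _, x, hx⟩ := surjective_up_to_refinements_of_epi T.g z
    obtain ⟨v, hv⟩ := hT'.exact.lift' (π ≫ y - x ≫ φ.τ₂) (by
      have : y ≫ T'.g - z ≫ φ.τ₃ = 0 := by simpa [← sub_eq_add_neg] using hyz
      simp [φ.comm₂₃, ← reassoc_of% hx, ← Preadditive.comp_sub, this])
    refine ⟨A₁, π, inferInstance, x + v ≫ inv φ.τ₁ ≫ T.f, ?_⟩
    have : inv φ.τ₁ ≫ T.f ≫ φ.τ₂ = T'.f := by simp [← φ.comm₁₂]
    ext <;> simp [hx, this, hv]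
  · refine Preadditive.mono_of_cancel_zero _ fun x hx => ?_
    obtain ⟨y, rfl⟩ := hT.exact.lift' x (by simpa using hx =≫ biprod.snd)
    have : y ≫ φ.τ₁ ≫ T'.f = 0 := by simpa [← φ.comm₁₂] using hx =≫ biprod.fst
    have : y = 0 := by simpa [← cancel_mono (φ.τ₁ ≫ T'.f)] using this
    simp [this]

lemma shortExact_of_isIso_τ₃ (hT : T.ShortExact) (hT' : T'.ShortExact) (φ : T ⟶ T') [IsIso φ.τ₃] :
    (ShortComplex.mk (biprod.lift T.f φ.τ₁) (biprod.desc φ.τ₂ (-T'.f)) (by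
      simp [φ.comm₁₂])).ShortExact := by
  have := hT.mono_f
  have := hT'.mono_f
  have := hT.epi_g
  refine { exact := ?_, mono_f := mono_of_mono_fac (biprod.lift_fst _ _), epi_g := ?_ }
  · rw [ShortComplex.exact_iff_exact_up_to_refinements]
    intro A xw hxw
    obtain ⟨x, w, rfl⟩ := biprod.decomp_hom_to xw
    have h : x ≫ φ.τ₂ = w ≫ T'.f := by simpa [← sub_eq_add_neg, sub_eq_zero] using hxw
    obtain ⟨v, hv⟩ := hT.exact.lift' x (by
      rw [← cancel_mono φ.τ₃, Category.assoc, ← φ.comm₂₃, reassoc_of% h]; simp)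
    have : v ≫ φ.τ₁ = w := by
      rw [← cancel_mono T'.f, Category.assoc, φ.comm₁₂, reassoc_of% hv, h]
    exact ⟨A, 𝟙 A, inferInstance, v, by ext <;> simp [hv, this]⟩
  · rw [epi_iff_surjective_up_to_refinements]
    intro A y
    obtain ⟨A₁, π, _, x, hx⟩ := surjective_up_to_refinements_of_epi T.g (y ≫ T'.g ≫ inv φ.τ₃)
    obtain ⟨w, hw⟩ := hT'.exact.lift' (π ≫ y - x ≫ φ.τ₂) (by
      simp [φ.comm₂₃, ← reassoc_of% hx])
    exact ⟨A₁, π, inferInstance, biprod.lift x (-w), by simp [hw]⟩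

lemma exists_factorization_biprod_lift (hT' : T'.ShortExact) (φ : T ⟶ T') {A B : C} {e : A ⟶ B}
    {c : A ⟶ T.X₁} {x : B ⟶ T.X₂} {y : B ⟶ T'.X₂} (hx : e ≫ x = c ≫ T.f) (hy : e ≫ y = 0)
    (hxy : x ≫ T.g ≫ φ.τ₃ = y ≫ T'.g) :
    ∃ m : B ⟶ T.X₂ ⊞ T'.X₁, e ≫ m = c ≫ biprod.lift T.f φ.τ₁ := by
  have := hT'.mono_f
  obtain ⟨r, hr⟩ := hT'.exact.lift' (x ≫ φ.τ₂ - y) (by simp [φ.comm₂₃, hxy])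
  have her : e ≫ r = c ≫ φ.τ₁ := by
    rw [← cancel_mono T'.f, Category.assoc, hr, Category.assoc, φ.comm₁₂, Preadditive.comp_sub, hy,
      reassoc_of% hx, sub_zero]
  exact ⟨biprod.lift x r, by ext <;> simp [hx, her]⟩

end DiagramChases

section GorensteinInjective

open Abelian

universe w v u₁

variable {C : Type u₁} [Category.{v} C] [Abelian C]

/-- There is an epimorphism from an injective object onto `N` with kernel in `P`: one step of a
left resolution of `N` by injective objects. -/
def HasInjectiveSyzygy (P : ObjectProperty C) (N : C) : Prop :=
  ∃ (I : C) (_ : Injective I) (p : I ⟶ N) (_ : Epi p), P (kernel p)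

/-- There is a monomorphism from `N` into an injective object with cokernel in `P`: one step of an
injective resolution of `N`. -/
def HasInjectiveCosyzygy (P : ObjectProperty C) (N : C) : Prop :=
  ∃ (I : C) (_ : Injective I) (i : N ⟶ I) (_ : Mono i), P (cokernel i)

/-- The kernel term of a short exact sequence is the kernel of its epimorphism. -/
noncomputable def kernelIso {T : ShortComplex C} (hT : T.ShortExact) : kernel T.g ≅ T.X₁ :=
  IsLimit.conePointUniqueUpToIso (kernelIsKernel T.g) hT.fIsKernel

/-- The cokernel term of a short exact sequence is the cokernel of its monomorphism. -/
noncomputable def cokernelIso {T : ShortComplex C} (hT : T.ShortExact) : cokernel T.f ≅ T.X₃ :=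
  IsColimit.coconePointUniqueUpToIso (cokernelIsCokernel T.f) hT.gIsCokernel

lemma shortExact_kernel {X Y : C} (f : X ⟶ Y) [Epi f] :
    (ShortComplex.mk (kernel.ι f) f (kernel.condition f)).ShortExact where
  exact := ShortComplex.exact_kernel f

lemma shortExact_cokernel {X Y : C} (f : X ⟶ Y) [Mono f] :
    (ShortComplex.mk f (cokernel.π f) (cokernel.condition f)).ShortExact where
  exact := ShortComplex.exact_cokernel f

section
variable {P Q : ObjectProperty C} {N N' : C}

lemma HasInjectiveSyzygy.mono (h : HasInjectiveSyzygy P N) (hPQ : P ≤ Q) :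
    HasInjectiveSyzygy Q N :=
  let ⟨I, hI, p, hp, hP⟩ := h
  ⟨I, hI, p, hp, hPQ _ hP⟩

variable [P.IsClosedUnderIsomorphisms]

lemma HasInjectiveSyzygy.of_iso (h : HasInjectiveSyzygy P N) (e : N ≅ N') :
    HasInjectiveSyzygy P N' :=
  let ⟨I, hI, p, _, hP⟩ := h
  ⟨I, hI, p ≫ e.hom, inferInstance, P.prop_of_iso (kernelCompMono p e.hom).symm hP⟩

lemma HasInjectiveCosyzygy.of_iso (h : HasInjectiveCosyzygy P N) (e : N ≅ N') :
    HasInjectiveCosyzygy P N' :=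
  let ⟨I, hI, i, _, hP⟩ := h
  ⟨I, hI, e.inv ≫ i, inferInstance, P.prop_of_iso (cokernelEpiComp e.inv i).symm hP⟩

lemma HasInjectiveSyzygy.of_shortExact {T : ShortComplex C} (hT : T.ShortExact)
    [Injective T.X₂] (h : P T.X₁) : HasInjectiveSyzygy P T.X₃ :=
  ⟨T.X₂, inferInstance, T.g, hT.epi_g, P.prop_of_iso (kernelIso hT).symm h⟩

lemma HasInjectiveCosyzygy.of_shortExact {T : ShortComplex C} (hT : T.ShortExact)
    [Injective T.X₂] (h : P T.X₃) : HasInjectiveCosyzygy P T.X₁ :=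
  ⟨T.X₂, inferInstance, T.f, hT.mono_f, P.prop_of_iso (cokernelIso hT).symm h⟩

end

section
variable [HasExt.{w} C]

/-- All `Ext`-groups of positive degree from injective objects to `N` vanish. -/
def extInjectiveAcyclic : ObjectProperty C := fun N =>
  ∀ (E : C) [Injective E] (n : ℕ), Subsingleton (Ext E N (n + 1))

instance : (extInjectiveAcyclic (C := C)).IsClosedUnderIsomorphisms where
  of_iso e h E _ n :=
    have := h E n
    subsingleton_ext_of_iso_right e.symm E (n + 1)

/-- The Gorenstein injective objects, described coinductively: the largest class of objects which
are acyclic for `Hom (E, -)` with `E` injective and have an injective syzygy in the class. Splicing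
the syzygies gives the left half of a totally acyclic complex; its right half comes for free, since
the class contains the cokernels of its embeddings into injective objects. -/
def gorensteinInjective : ObjectProperty C := fun N =>
  ∃ P : ObjectProperty C, P N ∧ ∀ ⦃X⦄, P X → extInjectiveAcyclic X ∧ HasInjectiveSyzygy P X

namespace gorensteinInjective

variable {N N' : C} {T : ShortComplex C}

lemma extInjectiveAcyclic (h : gorensteinInjective N) : extInjectiveAcyclic N :=
  let ⟨_, hN, hP⟩ := h
  (hP hN).1

lemma hasInjectiveSyzygy (h : gorensteinInjective N) :
    HasInjectiveSyzygy gorensteinInjective N :=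
  let ⟨P, hN, hP⟩ := h
  (hP hN).2.mono fun _ hX => ⟨P, hX, hP⟩

instance : (gorensteinInjective (C := C)).IsClosedUnderIsomorphisms where
  of_iso e h := by
    obtain ⟨P, hN, hP⟩ := h
    refine ⟨P.isoClosure, ⟨_, hN, ⟨e.symm⟩⟩, ?_⟩
    rintro X ⟨Y, hY, ⟨e'⟩⟩
    exact ⟨ObjectProperty.prop_of_iso _ e'.symm (hP hY).1,
      ((hP hY).2.mono P.le_isoClosure).of_iso e'.symm⟩

lemma of_hasInjectiveSyzygy (hN : _root_.extInjectiveAcyclic N)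
    (h : HasInjectiveSyzygy gorensteinInjective N) : gorensteinInjective N :=
  ⟨fun X => gorensteinInjective X ∨ X = N, Or.inr rfl, by
    rintro X (hX | rfl)
    · exact ⟨hX.extInjectiveAcyclic, hX.hasInjectiveSyzygy.mono fun _ => Or.inl⟩
    · exact ⟨hN, h.mono fun _ => Or.inl⟩⟩

lemma of_injective (I : C) [Injective I] : gorensteinInjective I :=
  ⟨fun X => Injective X, inferInstance, fun X _ =>
    ⟨fun _ _ _ => Ext.subsingleton_of_injective _ _ _,
      X, inferInstance, 𝟙 X, inferInstance, (isZero_kernel_of_mono (𝟙 X)).injective⟩⟩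

/-- The horseshoe lemma produces a syzygy of `T.X₂` which is again an extension. -/
lemma of_extension (hT : T.ShortExact) (h₁ : gorensteinInjective T.X₁)
    (h₃ : gorensteinInjective T.X₃) : gorensteinInjective T.X₂ := by
  refine ⟨fun X => ∃ T' : ShortComplex C, T'.ShortExact ∧ gorensteinInjective T'.X₁ ∧
    gorensteinInjective T'.X₃ ∧ T'.X₂ = X, ⟨T, hT, h₁, h₃, rfl⟩, ?_⟩
  rintro _ ⟨T, hT, h₁, h₃, rfl⟩
  refine ⟨fun E _ n => ?_, ?_⟩
  · have := h₁.extInjectiveAcyclic E n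
    have := h₃.extInjectiveAcyclic E n
    exact subsingleton_ext_X₂ hT E _
  · obtain ⟨I, _, p, _, hp⟩ := h₁.hasInjectiveSyzygy
    obtain ⟨J, _, q, _, hq⟩ := h₃.hasInjectiveSyzygy
    have := h₁.extInjectiveAcyclic J 0
    obtain ⟨r, hr⟩ : ∃ r : J ⟶ T.X₂, r ≫ T.g = q :=
      exists_lift_of_subsingleton_ext hT q
    let φ : ShortComplex.mk (biprod.inl : I ⟶ I ⊞ J) biprod.snd (by simp) ⟶ T :=
      { τ₁ := p
        τ₂ := biprod.desc (p ≫ T.f) r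
        τ₃ := q
        comm₁₂ := by simp
        comm₂₃ := by ext <;> simp [hr] }
    have hI : (ShortComplex.mk (biprod.inl : I ⟶ I ⊞ J) biprod.snd (by simp)).ShortExact :=
      (ShortComplex.Splitting.ofHasBinaryBiproduct I J).shortExact
    have : Epi φ.τ₁ := ‹Epi p›
    have : Epi φ.τ₃ := ‹Epi q›
    have := hT.epi_g
    have : Epi φ.τ₂ := ShortComplex.epi_τ₂_of_exact_of_epi φ hT.exact
    exact ⟨I ⊞ J, inferInstance, φ.τ₂, this, _, shortExact_kernelMap hI hT φ, hp, hq, rfl⟩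

lemma of_cokernel (hT : T.ShortExact) (h₁ : gorensteinInjective T.X₁)
    (h₂ : gorensteinInjective T.X₂) : gorensteinInjective T.X₃ := by
  have := hT.epi_g
  refine of_hasInjectiveSyzygy (fun E _ n => ?_) ?_
  · have := h₂.extInjectiveAcyclic E n
    have := h₁.extInjectiveAcyclic E (n + 1)
    exact subsingleton_ext_X₃ hT E _
  · obtain ⟨I, hI, p, _, hp⟩ := h₂.hasInjectiveSyzygy
    exact ⟨I, hI, p ≫ T.g, inferInstance, of_extension (shortExact_kernel_comp p T.g) hp
      (ObjectProperty.prop_of_iso _ (kernelIso hT).symm h₁)⟩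

lemma hasInjectiveCosyzygy [EnoughInjectives C] (h : gorensteinInjective N) :
    HasInjectiveCosyzygy gorensteinInjective N :=
  ⟨_, inferInstance, Injective.ι N, inferInstance,
    of_cokernel (shortExact_cokernel (Injective.ι N)) h (of_injective _)⟩

/-- In a class closed under syzygies and cosyzygies, dimension shifting reduces the vanishing of
all `Ext`-groups from injective objects to degree one. -/
lemma of_forall (P : ObjectProperty C) [P.IsClosedUnderIsomorphisms]
    (hext : ∀ X, P X → ∀ (E : C) [Injective E], Subsingleton (Ext E X 1))
    (hsyz : ∀ X, P X → HasInjectiveSyzygy P X)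
    (hcosyz : ∀ X, P X → HasInjectiveCosyzygy P X) (hN : P N) : gorensteinInjective N := by
  refine ⟨P, hN, fun X hX => ⟨fun E _ n => ?_, hsyz X hX⟩⟩
  induction n generalizing X with
  | zero => exact hext X hX E
  | succ n ih =>
    obtain ⟨I, _, i, _, hi⟩ := hcosyz X hX
    have := ih (cokernel i) hi
    have : Subsingleton (Ext E I (n + 1 + 1)) := Ext.subsingleton_of_injective E I (n + 1)
    exact subsingleton_ext_X₁ (shortExact_cokernel i) E (n + 1)

end gorensteinInjective
end
end GorensteinInjective

section GorensteinInjectiveDimension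

universe w v u₁

variable {C : Type u₁} [Category.{v} C] [Abelian C] [HasExt.{w} C]

/-- There is an exact sequence `0 ⟶ N ⟶ J⁰ ⟶ ⋯ ⟶ Jⁿ ⟶ 0` with Gorenstein injective `Jⁱ`, i.e. the
Gorenstein injective dimension of `N` is at most `n`. -/
def gorensteinInjectiveDimLE : ℕ → ObjectProperty C
  | 0 => gorensteinInjective
  | n + 1 => fun N => ∃ (J : C) (_ : gorensteinInjective J) (i : N ⟶ J) (_ : Mono i),
      gorensteinInjectiveDimLE n (cokernel i)

namespace gorensteinInjectiveDimLE

instance (n : ℕ) : (gorensteinInjectiveDimLE (C := C) n).IsClosedUnderIsomorphisms := by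
  induction n with
  | zero => exact inferInstanceAs gorensteinInjective.IsClosedUnderIsomorphisms
  | succ n ih =>
    refine ⟨fun {X Y} e ⟨J, hJ, i, _, hi⟩ => ⟨J, hJ, e.inv ≫ i, inferInstance, ?_⟩⟩
    exact ih.of_iso (cokernelEpiComp e.inv i).symm hi

variable {T : ShortComplex C} {n : ℕ}

lemma succ_of_shortExact (hT : T.ShortExact) (h₂ : gorensteinInjective T.X₂)
    (h₃ : gorensteinInjectiveDimLE n T.X₃) : gorensteinInjectiveDimLE (n + 1) T.X₁ :=
  ⟨T.X₂, h₂, T.f, hT.mono_f, ObjectProperty.prop_of_iso _ (cokernelIso hT).symm h₃⟩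

lemma of_quotient (hT : T.ShortExact) (h₁ : gorensteinInjective T.X₁)
    (h₂ : gorensteinInjectiveDimLE n T.X₂) : gorensteinInjectiveDimLE n T.X₃ := by
  cases n with
  | zero => exact gorensteinInjective.of_cokernel hT h₁ h₂
  | succ n =>
    obtain ⟨J, hJ, i, _, hi⟩ := h₂
    have := hT.mono_f
    refine ObjectProperty.prop_of_iso _ (cokernelIso hT)
      (succ_of_shortExact (shortExact_cokernel_comp T.f i) ?_ hi)
    exact gorensteinInjective.of_cokernel (shortExact_cokernel (T.f ≫ i)) h₁ hJ

lemma biprod_of_injective (I : C) [Injective I] {N : C} (hN : gorensteinInjectiveDimLE n N) :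
    gorensteinInjectiveDimLE n (I ⊞ N) := by
  have biprod_gorenstein {N : C} (hN : gorensteinInjective N) : gorensteinInjective (I ⊞ N) :=
    gorensteinInjective.of_extension (ShortComplex.Splitting.ofHasBinaryBiproduct I N).shortExact
      (.of_injective I) hN
  cases n with
  | zero => exact biprod_gorenstein hN
  | succ n =>
    obtain ⟨J, hJ, i, _, hi⟩ := hN
    have hT : (ShortComplex.mk (biprod.map (𝟙 I) i) (biprod.snd ≫ cokernel.π i)
        (by simp)).ShortExact := by
      refine { exact := ?_ }
      rw [ShortComplex.exact_iff_exact_up_to_refinements]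
      intro A x hx
      obtain ⟨y, hy⟩ := (ShortComplex.exact_cokernel i).lift' (x ≫ biprod.snd) (by simpa using hx)
      exact ⟨A, 𝟙 A, inferInstance, biprod.lift (x ≫ biprod.fst) y, by ext <;> simp [hy]⟩
    exact succ_of_shortExact hT (biprod_gorenstein hJ) hi

lemma of_injective_X₂ (hT : T.ShortExact) [Injective T.X₂]
    (h₁ : gorensteinInjectiveDimLE (n + 1) T.X₁) : gorensteinInjectiveDimLE n T.X₃ := by
  obtain ⟨J, hJ, i, _, hi⟩ := h₁
  let φ : ShortComplex.mk i (cokernel.π i) (cokernel.condition i) ⟶ T :=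
    { τ₁ := 𝟙 T.X₁
      τ₂ := Injective.factorThru T.f i
      τ₃ := cokernel.desc i (Injective.factorThru T.f i ≫ T.g) (by simp) }
  have : IsIso φ.τ₁ := inferInstanceAs (IsIso (𝟙 T.X₁))
  have hC := of_quotient (shortExact_of_isIso_τ₁ (shortExact_cokernel i) hT φ) hJ
    (biprod_of_injective T.X₂ hi)
  exact hC

end gorensteinInjectiveDimLE

end GorensteinInjectiveDimension

section Witness

variable {R : Type u} [CommRing R] {J : Type u} [AddCommGroup J] [Module R J]

namespace GorensteinInjectiveWitness

attribute [local instance] acg mod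

variable (W : GorensteinInjectiveWitness R J)

/-- The sequence `0 ⟶ ker dᵢ₊₁ ⟶ Iᵢ₊₂ ⟶ ker dᵢ ⟶ 0` cut out of a totally acyclic complex. -/
abbrev cyclesSequence (i : ℤ) : ShortComplex (ModuleCat.{u} R) :=
  ModuleCat.shortComplexOfCompEqZero (LinearMap.ker (W.d (i + 1))).subtype
    ((W.d (i + 1)).codRestrict (LinearMap.ker (W.d i)) (LinearMap.congr_fun (W.d_comp_d i)))
    (LinearMap.ext fun x => Subtype.ext x.2)

lemma shortExact_cyclesSequence (i : ℤ) : (W.cyclesSequence i).ShortExact := by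
  refine ModuleCat.shortComplex_shortExact _ (fun x => ⟨fun hx => ?_, ?_⟩)
    Subtype.val_injective ?_
  · exact ⟨⟨x, congrArg Subtype.val hx⟩, rfl⟩
  · rintro ⟨y, rfl⟩
    exact Subtype.ext y.2
  · rintro ⟨x, hx⟩
    obtain ⟨y, rfl⟩ := (W.exact i).le hx
    exact ⟨y, rfl⟩

lemma injective_cyclesSequence_X₂ (i : ℤ) : Injective (W.cyclesSequence i).X₂ :=
  (Module.injective_iff_injective_object R _).1 (W.inj (i + 1 + 1))

lemma subsingleton_ext_ker (i : ℤ) (E : ModuleCat.{u} R) [hE : Injective E] :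
    Subsingleton (Abelian.Ext E (ModuleCat.of R (LinearMap.ker (W.d i))) 1) := by
  obtain ⟨j, rfl⟩ : ∃ j, i = j + 1 := ⟨i - 1, by ring⟩
  have := W.injective_cyclesSequence_X₂ j
  have : Subsingleton (Abelian.Ext E (W.cyclesSequence j).X₂ 1) :=
    Abelian.Ext.subsingleton_of_injective _ _ _
  refine subsingleton_ext_one_of_exists_lift (W.shortExact_cyclesSequence j) fun φ => ?_
  obtain ⟨g, hg⟩ := W.hom_exact E ((Module.injective_iff_injective_object R E).2 hE) j
    ((LinearMap.ker (W.d j)).subtype ∘ₗ φ.hom) (LinearMap.ext fun x => (φ.hom x).2)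
  exact ⟨ModuleCat.ofHom g, ModuleCat.hom_ext <| LinearMap.ext fun x =>
    Subtype.ext (LinearMap.congr_fun hg x)⟩

lemma gorensteinInjective (W : GorensteinInjectiveWitness R J) :
    gorensteinInjective (ModuleCat.of R J) := by
  let P : ObjectProperty (ModuleCat.{u} R) :=
    (ObjectProperty.ofObj fun i => ModuleCat.of R (LinearMap.ker (W.d i))).isoClosure
  have hP (i : ℤ) : P (ModuleCat.of R (LinearMap.ker (W.d i))) :=
    ObjectProperty.le_isoClosure _ _ (ObjectProperty.ofObj_apply _ i)
  refine gorensteinInjective.of_forall P ?_ ?_ ?_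
    ⟨_, ObjectProperty.ofObj_apply _ (-1), ⟨W.ker_iso.some.toModuleIso⟩⟩
  · rintro X ⟨_, ⟨i⟩, ⟨e⟩⟩ E _
    have := W.subsingleton_ext_ker i E
    exact subsingleton_ext_of_iso_right e E 1
  · rintro X ⟨_, ⟨i⟩, ⟨e⟩⟩
    have := W.injective_cyclesSequence_X₂ i
    exact (HasInjectiveSyzygy.of_shortExact (W.shortExact_cyclesSequence i) (hP _)).of_iso e.symm
  · rintro X ⟨_, ⟨i⟩, ⟨e⟩⟩
    obtain ⟨j, rfl⟩ : ∃ j, i = j + 1 := ⟨i - 1, by ring⟩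
    have := W.injective_cyclesSequence_X₂ j
    exact (HasInjectiveCosyzygy.of_shortExact (W.shortExact_cyclesSequence j) (hP _)).of_iso e.symm

end GorensteinInjectiveWitness

lemma exists_int_chain {α : Type*} {r : α → α → Prop} (hl : ∀ a, ∃ b, r b a)
    (hr : ∀ a, ∃ b, r a b) (a : α) (k : ℤ) : ∃ Z : ℤ → α, Z k = a ∧ ∀ i, r (Z (i + 1)) (Z i) := by
  choose l hl using hl
  choose g hg using hr
  let Z : ℤ → α
    | .ofNat n => l^[n] a
    | .negSucc n => g^[n + 1] a
  have hZ : ∀ i, r (Z (i + 1)) (Z i)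
    | .ofNat n => by
      change r (l^[n + 1] a) (l^[n] a)
      exact Function.iterate_succ_apply' l n a ▸ hl _
    | .negSucc 0 => hg a
    | .negSucc (n + 1) => by
      change r (g^[n + 1] a) (g^[n + 1 + 1] a)
      exact Function.iterate_succ_apply' g (n + 1) a ▸ hg _
  refine ⟨fun i => Z (i - k), by simp [Z], fun i => ?_⟩
  simpa only [sub_add_eq_add_sub] using hZ (i - k)

lemma exists_injectiveSequences (h : gorensteinInjective (ModuleCat.of R J)) (k : ℤ) :
    ∃ (Z I : ℤ → ModuleCat.{u} R) (ι : ∀ i, Z (i + 1) ⟶ I i) (π : ∀ i, I i ⟶ Z i)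
      (w : ∀ i, ι i ≫ π i = 0), Nonempty (ModuleCat.of R J ≅ Z k) ∧
      (∀ i, gorensteinInjective (Z i)) ∧ (∀ i, Injective (I i)) ∧
      ∀ i, (ShortComplex.mk (ι i) (π i) (w i)).ShortExact := by
  let r (K N : {N : ModuleCat.{u} R // gorensteinInjective N}) : Prop :=
    ∃ (I : ModuleCat.{u} R) (ι : K.1 ⟶ I) (π : I ⟶ N.1) (w : ι ≫ π = 0),
      Injective I ∧ (ShortComplex.mk ι π w).ShortExact
  have hl (N) : ∃ K, r K N := by
    obtain ⟨I, hI, p, _, hp⟩ := N.2.hasInjectiveSyzygy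
    exact ⟨⟨_, hp⟩, I, _, p, _, hI, shortExact_kernel p⟩
  have hr (K) : ∃ N, r K N := by
    obtain ⟨I, hI, i, _, hi⟩ := K.2.hasInjectiveCosyzygy
    exact ⟨⟨_, hi⟩, I, i, _, _, hI, shortExact_cokernel i⟩
  obtain ⟨Z, hZ, hr⟩ := exists_int_chain hl hr ⟨_, h⟩ k
  choose I ι π w hI hs using hr
  exact ⟨fun i => (Z i).1, I, ι, π, w, ⟨eqToIso (congrArg Subtype.val hZ.symm)⟩,
    fun i => (Z i).2, hI, hs⟩

lemma isGorensteinInjective_of_gorensteinInjective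
    (h : gorensteinInjective (ModuleCat.of R J)) : IsGorensteinInjective R J := by
  obtain ⟨Z, I, ι, π, w, ⟨e⟩, hZ, hI, hs⟩ := exists_injectiveSequences h (-1 + 1 + 1)
  have ker_d (i : ℤ) : LinearMap.ker ((ι i).hom ∘ₗ (π (i + 1)).hom) =
      LinearMap.range (ι (i + 1)).hom :=
    (LinearMap.ker_comp_of_ker_eq_bot _ (LinearMap.ker_eq_bot.2 (hs i).moduleCat_injective_f)).trans
      (hs (i + 1)).exact.moduleCat_range_eq_ker.symm
  refine ⟨{ I := fun i => I i
            inj := fun i => (Module.injective_iff_injective_object R _).2 (hI i)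
            d := fun i => (ι i).hom ∘ₗ (π (i + 1)).hom
            d_comp_d := fun i => ?_
            exact := fun i => ?_
            hom_exact := fun E _ _ hE i f hf => ?_
            ker_iso := ⟨e.toLinearEquiv ≪≫ₗ LinearEquiv.ofInjective _
              (hs (-1 + 1)).moduleCat_injective_f ≪≫ₗ LinearEquiv.ofEq _ _ (ker_d (-1)).symm⟩ }⟩
  · ext x
    have := (ShortComplex.mk _ _ (w (i + 1))).moduleCat_zero_apply ((π (i + 1 + 1)).hom x)
    simp_all
  · rw [ker_d, LinearMap.range_comp_of_range_eq_top _
      (LinearMap.range_eq_top.2 (hs (i + 1 + 1)).moduleCat_surjective_g)]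
  · have : Injective (ModuleCat.of R E) := (Module.injective_iff_injective_object R E).1 hE
    have := (hs (i + 1)).mono_f
    obtain ⟨a, ha⟩ := (hs (i + 1)).exact.lift' (ModuleCat.ofHom f) (by
      have := (hs i).mono_f
      rw [← cancel_mono (ι i), zero_comp]
      exact ModuleCat.hom_ext hf)
    have := (hZ (i + 1 + 1 + 1)).extInjectiveAcyclic (ModuleCat.of R E) 0
    obtain ⟨b, hb⟩ := exists_lift_of_subsingleton_ext (hs (i + 1 + 1)) a
    exact ⟨b.hom, congrArg ModuleCat.Hom.hom
      (show b ≫ π (i + 1 + 1) ≫ ι (i + 1) = ModuleCat.ofHom f by rw [reassoc_of% hb, ha])⟩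

lemma isGorensteinInjective_iff :
    IsGorensteinInjective R J ↔ gorensteinInjective (ModuleCat.of R J) :=
  ⟨fun ⟨W⟩ => W.gorensteinInjective, isGorensteinInjective_of_gorensteinInjective⟩

end Witness

namespace GidWitness

attribute [local instance] acg mod

/-- A Gorenstein injective module, viewed as a resolution of itself of length zero. -/
def ofIsGorensteinInjective {R : Type u} [CommRing R] {J : Type u} [AddCommGroup J] [Module R J]
    (h : IsGorensteinInjective R J) : GidWitness R J 0 where
  J
    | 0 => J
    | _ + 1 => PUnit
  acg
    | 0 => inferInstance
    | _ + 1 => inferInstance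
  mod
    | 0 => inferInstance
    | _ + 1 => inferInstance
  gi
    | 0, _ => h
  triv
    | _ + 1, _ => inferInstanceAs (Subsingleton PUnit)
  ε := LinearMap.id
  ε_inj := Function.injective_id
  d _ := 0
  exact_zero := LinearMap.ker_zero.trans LinearMap.range_id.symm
  exact _ := Subsingleton.elim (α := Submodule R PUnit.{u + 1}) _ _

variable {R : Type u} [CommRing R] {M J N : Type u} [AddCommGroup M] [AddCommGroup J]
  [AddCommGroup N] [Module R M] [Module R J] [Module R N] {n : ℕ}

/-- Splices `0 ⟶ M ⟶ J ⟶ N ⟶ 0` with a resolution of `N`. -/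
def cons (hJ : IsGorensteinInjective R J) (W : GidWitness R N n) {f : M →ₗ[R] J} {g : J →ₗ[R] N}
    (hf : Function.Injective f) (hfg : Function.Exact f g) (hg : Function.Surjective g) :
    GidWitness R M (n + 1) where
  J
    | 0 => J
    | i + 1 => W.J i
  acg
    | 0 => inferInstance
    | i + 1 => W.acg i
  mod
    | 0 => inferInstance
    | i + 1 => W.mod i
  gi
    | 0, _ => hJ
    | i + 1, hi => W.gi i (Nat.le_of_succ_le_succ hi)
  triv
    | i + 1, hi => W.triv i (Nat.lt_of_succ_lt_succ hi)
  ε := f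
  ε_inj := hf
  d
    | 0 => W.ε ∘ₗ g
    | i + 1 => W.d i
  exact_zero := (LinearMap.ker_comp_of_ker_eq_bot g (LinearMap.ker_eq_bot.2 W.ε_inj)).trans
    hfg.linearMap_ker_eq
  exact
    | 0 => W.exact_zero.trans
        (LinearMap.range_comp_of_range_eq_top W.ε (LinearMap.range_eq_top.2 hg)).symm
    | i + 1 => W.exact i

/-- Drops the first term of a resolution. -/
def tail (W : GidWitness R M (n + 1)) :
    GidWitness R (W.J 0 ⧸ LinearMap.range W.ε) n where
  J i := W.J (i + 1)
  gi i hi := W.gi (i + 1) (Nat.succ_le_succ hi)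
  triv i hi := W.triv (i + 1) (Nat.succ_lt_succ hi)
  ε := (LinearMap.range W.ε).liftQ (W.d 0) W.exact_zero.ge
  ε_inj := LinearMap.ker_eq_bot.1 (Submodule.ker_liftQ_eq_bot _ _ _ W.exact_zero.le)
  d i := W.d (i + 1)
  exact_zero := (W.exact 0).trans (Submodule.range_liftQ _ _ _).symm
  exact i := W.exact (i + 1)

lemma gorensteinInjectiveDimLE {n : ℕ} {M : Type u} [AddCommGroup M] [Module R M]
    (W : GidWitness R M n) : gorensteinInjectiveDimLE n (ModuleCat.of R M) := by
  induction n generalizing M with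
  | zero =>
    have : Subsingleton (W.J (0 + 1)) := W.triv 1 one_pos
    have hε : LinearMap.range W.ε = ⊤ :=
      W.exact_zero.symm.trans (LinearMap.ker_eq_top.2 (Subsingleton.elim _ _))
    let e := LinearEquiv.ofBijective W.ε ⟨W.ε_inj, LinearMap.range_eq_top.1 hε⟩
    exact gorensteinInjective.prop_of_iso e.symm.toModuleIso
      (isGorensteinInjective_iff.1 (W.gi 0 le_rfl))
  | succ n ih =>
    exact gorensteinInjectiveDimLE.succ_of_shortExact (n := n)
      (ModuleCat.shortComplex_shortExact
        (ModuleCat.shortComplexOfCompEqZero W.ε (LinearMap.range W.ε).mkQ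
          (LinearMap.range_mkQ_comp W.ε))
        (LinearMap.exact_map_mkQ_range W.ε) W.ε_inj (Submodule.mkQ_surjective _))
      (isGorensteinInjective_iff.1 (W.gi 0 (Nat.zero_le _))) (ih W.tail)

end GidWitness

lemma nonempty_gidWitness_iff {R : Type u} [CommRing R] {M : ModuleCat.{u} R} {n : ℕ} :
    Nonempty (GidWitness R M n) ↔ gorensteinInjectiveDimLE n M := by
  refine ⟨fun ⟨W⟩ => W.gorensteinInjectiveDimLE, fun h => ?_⟩
  induction n generalizing M with
  | zero => exact ⟨.ofIsGorensteinInjective (isGorensteinInjective_iff.2 h)⟩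
  | succ n ih =>
    obtain ⟨J, hJ, i, _, hi⟩ := h
    obtain ⟨W⟩ := ih hi
    have hs := shortExact_cokernel i
    exact ⟨W.cons (isGorensteinInjective_iff.2 hJ) hs.moduleCat_injective_f
      ((ShortComplex.ShortExact.moduleCat_exact_iff_function_exact _).1 hs.exact)
      hs.moduleCat_surjective_g⟩

lemma gid_eq_sInf {R : Type u} [CommRing R] (M : ModuleCat.{u} R) :
    gid R M = sInf {c : ℕ∞ | ∃ n : ℕ, c = n ∧ gorensteinInjectiveDimLE n M} := by
  simp only [gid, nonempty_gidWitness_iff]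

section InjectiveTower

variable {R : Type u} [CommRing R]

lemma iSup_range_colimit_ι (F : ℕ ⥤ ModuleCat.{u} R) :
    ⨆ n, LinearMap.range (colimit.ι F n).hom = ⊤ := by
  set V := ⨆ n, LinearMap.range (colimit.ι F n).hom
  have hV : ModuleCat.ofHom V.mkQ = 0 := colimit.hom_ext fun n => ModuleCat.hom_ext <|
    LinearMap.ext fun x => (Submodule.Quotient.mk_eq_zero V).2 <|
      le_iSup (fun n => LinearMap.range (colimit.ι F n).hom) n ⟨x, rfl⟩
  rw [← V.ker_mkQ, ← ModuleCat.hom_ofHom V.mkQ, hV, ModuleCat.hom_zero, LinearMap.ker_zero]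

lemma exists_factorization_colimit_ι (F : ℕ ⥤ ModuleCat.{u} R)
    [∀ i j (φ : i ⟶ j), Mono (F.map φ)] {N : ModuleCat.{u} R} [Module.Finite R N]
    (g : N ⟶ colimit F) : ∃ (n : ℕ) (g' : N ⟶ F.obj n), g' ≫ colimit.ι F n = g := by
  have : AB5OfSize.{0, 0} (ModuleCat.{u} R) := AB5OfSize_shrink.{0, 0, u, u} _
  have (n : ℕ) : Mono (colimit.ι F n) := (colimit.isColimit F).mono_ι_app_of_isFiltered n
  let V : ℕ →o Submodule R (colimit F : ModuleCat R) :=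
    { toFun n := LinearMap.range (colimit.ι F n).hom
      monotone' m n h := by
        beta_reduce
        rw [← colimit.w F (homOfLE h), ModuleCat.hom_comp]
        exact LinearMap.range_comp_le_range _ _ }
  obtain ⟨_, ⟨n, rfl⟩, hn⟩ :=
    (CompleteLattice.isCompactElement_iff_le_of_directed_sSup_le _ _).1
      ((Submodule.fg_iff_compact _).1 (Module.Finite.fg_top.map g.hom))
      _ (Set.range_nonempty V) V.monotone.directed_le.directedOn_range
      (le_top.trans_eq (iSup_range_colimit_ι F).symm)
  rw [Submodule.map_top] at hn
  let e := LinearEquiv.ofInjective (colimit.ι F n).hom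
    ((ModuleCat.mono_iff_injective _).1 inferInstance)
  refine ⟨n, ModuleCat.ofHom (e.symm.toLinearMap ∘ₗ g.hom.codRestrict _ fun x => hn ⟨x, rfl⟩), ?_⟩
  ext x
  exact congrArg Subtype.val (e.apply_symm_apply _)

lemma mono_map_of_mono_map_succ {C : Type*} [Category* C] (F : ℕ ⥤ C)
    [∀ n : ℕ, Mono (F.map (homOfLE (n.le_add_right 1)))] {m n : ℕ} (φ : m ⟶ n) :
    Mono (F.map φ) := by
  obtain ⟨k, rfl⟩ := Nat.exists_eq_add_of_le (leOfHom φ)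
  obtain rfl := Subsingleton.elim φ (homOfLE (m.le_add_right k))
  induction k with
  | zero => exact inferInstanceAs (Mono (F.map (𝟙 m)))
  | succ k ih =>
    rw [← homOfLE_comp (m.le_add_right k) ((m + k).le_add_right 1), F.map_comp]
    infer_instance

/-- One stage of the construction of an injective module: morphisms to objects of `𝒢` extend along
`j`, and Baer's criterion is satisfied by the morphisms which come from `X`. -/
structure IsBaerStep (𝒢 : ObjectProperty (ModuleCat.{u} R)) {X X' : ModuleCat.{u} R}
    (j : X ⟶ X') : Prop where
  mono : Mono j
  exists_extension {G : ModuleCat.{u} R} (hG : 𝒢 G) (f : X ⟶ G) : ∃ f' : X' ⟶ G, j ≫ f' = f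
  exists_extension_ideal (I : Ideal R) (g : ModuleCat.of R I ⟶ X) :
    ∃ g' : ModuleCat.of R R ⟶ X', ModuleCat.ofHom I.subtype ≫ g' = g ≫ j

section
variable {𝒢 : ObjectProperty (ModuleCat.{u} R)} {F : ℕ ⥤ ModuleCat.{u} R}
  (hF : ∀ n : ℕ, IsBaerStep 𝒢 (F.map (homOfLE (n.le_add_right 1))))
include hF

lemma injective_colimit_of_isBaerStep [IsNoetherianRing R] : Injective (colimit F) := by
  have (n : ℕ) : Mono (F.map (homOfLE (n.le_add_right 1))) := (hF n).mono
  have (m n : ℕ) (φ : m ⟶ n) : Mono (F.map φ) := mono_map_of_mono_map_succ F φ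
  rw [← Module.injective_iff_injective_object, ← Module.Baer.iff_injective]
  intro I g
  obtain ⟨n, g₀, hg₀⟩ := exists_factorization_colimit_ι F (ModuleCat.ofHom g)
  obtain ⟨g', hg'⟩ := (hF n).exists_extension_ideal I g₀
  have h : ModuleCat.ofHom I.subtype ≫ g' ≫ colimit.ι F (n + 1) = ModuleCat.ofHom g := by
    rw [reassoc_of% hg', colimit.w, hg₀]
  exact ⟨(g' ≫ colimit.ι F (n + 1)).hom, fun x hx => congr($h ⟨x, hx⟩)⟩

lemma exists_extension_colimit_of_isBaerStep {G : ModuleCat.{u} R} (hG : 𝒢 G) (f : F.obj 0 ⟶ G) :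
    ∃ f' : colimit F ⟶ G, colimit.ι F 0 ≫ f' = f := by
  choose ext hext using fun n => (hF n).exists_extension hG
  let f' (n : ℕ) : F.obj n ⟶ G := Nat.rec f ext n
  exact ⟨colimit.desc F (.mk G (NatTrans.ofSequence f' fun n => by
    simpa using hext n (f' n))), colimit.ι_desc _ _⟩

end

lemma exists_injective_extension [IsNoetherianRing R] {P 𝒢 : ObjectProperty (ModuleCat.{u} R)}
    (step : ∀ X, P X → ∃ (X' : ModuleCat.{u} R) (j : X ⟶ X'), P X' ∧ IsBaerStep 𝒢 j)
    {X : ModuleCat.{u} R} (hX : P X) : ∃ (U : ModuleCat.{u} R) (_ : Injective U) (ι : X ⟶ U),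
      ∀ ⦃G⦄, 𝒢 G → ∀ f : X ⟶ G, ∃ f' : U ⟶ G, ι ≫ f' = f := by
  choose next j hP hj using fun Y : Subtype P => step Y.1 Y.2
  let Y (n : ℕ) : Subtype P := Nat.rec ⟨X, hX⟩ (fun _ Y => ⟨next Y, hP Y⟩) n
  let F : ℕ ⥤ ModuleCat R := Functor.ofSequence (X := fun n => (Y n).1) fun n => j (Y n)
  have hF (n : ℕ) : IsBaerStep 𝒢 (F.map (homOfLE (n.le_add_right 1))) := by
    rw [Functor.ofSequence_map_homOfLE_succ]
    exact hj (Y n)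
  exact ⟨colimit F, injective_colimit_of_isBaerStep hF, colimit.ι F 0,
    fun _ hG f => exists_extension_colimit_of_isBaerStep hF hG f⟩

end InjectiveTower

section Flat

variable {R : Type u} [CommRing R]

section
variable {A B C : Type u} [AddCommGroup A] [AddCommGroup B] [AddCommGroup C]
  [Module R A] [Module R B] [Module R C] {f : A →ₗ[R] B} {g : B →ₗ[R] C}

lemma exact_characterModule_dual (hfg : Function.Exact f g) (hg : Function.Surjective g) :
    Function.Exact (CharacterModule.dual g) (CharacterModule.dual f) := fun φ => by
  constructor
  · intro hφ
    have hker : g.toAddMonoidHom.ker ≤ φ.ker := fun b hb => by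
      obtain ⟨a, rfl⟩ := (hfg b).1 hb
      exact DFunLike.congr_fun hφ a
    exact ⟨g.toAddMonoidHom.liftOfSurjective hg ⟨φ, hker⟩,
      AddMonoidHom.liftOfRightInverse_comp _ _ _ ⟨φ, hker⟩⟩
  · rintro ⟨ψ, rfl⟩
    exact CharacterModule.ext _ fun a =>
      (congrArg ψ (hfg.apply_apply_eq_zero a)).trans (map_zero ψ)

lemma exists_section_characterModule_dual (hf : Function.Injective f) (hfg : Function.Exact f g)
    (hg : Function.Surjective g) [Module.Flat R C] :
    ∃ s, CharacterModule.dual f ∘ₗ s = LinearMap.id := by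
  have := Module.Flat.iff_characterModule_injective.1 ‹Module.Flat R C›
  have hg' := CharacterModule.dual_injective_of_surjective g hg
  obtain ⟨r, hr⟩ := Module.Injective.out (CharacterModule.dual g) hg' LinearMap.id
  have hsplit := (exact_characterModule_dual hfg hg).split_tfae hg'
    (CharacterModule.dual_surjective_of_injective f hf)
  have hsec : ∃ r, r ∘ₗ CharacterModule.dual g = LinearMap.id := ⟨r, LinearMap.ext hr⟩
  exact (hsplit.out 1 0).1 hsec

lemma lTensor_injective_of_flat_cokernel (hf : Function.Injective f) (hfg : Function.Exact f g)
    (hg : Function.Surjective g) [Module.Flat R C] (X : Type u) [AddCommGroup X] [Module R X] :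
    Function.Injective (f.lTensor X) := by
  obtain ⟨s, hs⟩ := exists_section_characterModule_dual hf hfg hg
  rw [← CharacterModule.dual_surjective_iff_injective]
  refine fun φ => ⟨CharacterModule.uncurry (s ∘ₗ CharacterModule.curry φ), ?_⟩
  refine CharacterModule.homEquiv.symm.injective (LinearMap.ext fun x => ?_)
  exact LinearMap.congr_fun hs (CharacterModule.curry φ x)

lemma flat_of_flat_cokernel (hf : Function.Injective f) (hfg : Function.Exact f g)
    (hg : Function.Surjective g) [Module.Flat R B] [Module.Flat R C] : Module.Flat R A := by
  obtain ⟨s, hs⟩ := exists_section_characterModule_dual hf hfg hg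
  rw [Module.Flat.iff_characterModule_baer]
  intro I φ
  obtain ⟨ψ, hψ⟩ := Module.Flat.iff_characterModule_baer.1 ‹Module.Flat R B› I (s ∘ₗ φ)
  refine ⟨CharacterModule.dual f ∘ₗ ψ, fun x hx => ?_⟩
  rw [LinearMap.comp_apply, hψ x hx]
  exact LinearMap.congr_fun hs (φ ⟨x, hx⟩)

end
open MonoidalCategory

lemma flat_X₁ {T : ShortComplex (ModuleCat.{u} R)} (hT : T.ShortExact) [Module.Flat R T.X₂]
    [Module.Flat R T.X₃] : Module.Flat R T.X₁ :=
  flat_of_flat_cokernel hT.moduleCat_injective_f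
    ((ShortComplex.ShortExact.moduleCat_exact_iff_function_exact T).1 hT.exact)
    hT.moduleCat_surjective_g

lemma shortExact_whiskerLeft_of_flat_X₃ {T : ShortComplex (ModuleCat.{u} R)} (hT : T.ShortExact)
    [Module.Flat R T.X₃] (X : ModuleCat.{u} R) : (T.map (tensorLeft X)).ShortExact where
  exact := (ShortComplex.ShortExact.moduleCat_exact_iff_function_exact _).2 <|
    lTensor_exact X ((ShortComplex.ShortExact.moduleCat_exact_iff_function_exact T).1 hT.exact)
      hT.moduleCat_surjective_g
  mono_f := (ModuleCat.mono_iff_injective _).2 <|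
    lTensor_injective_of_flat_cokernel hT.moduleCat_injective_f
      ((ShortComplex.ShortExact.moduleCat_exact_iff_function_exact T).1 hT.exact)
      hT.moduleCat_surjective_g X
  epi_g := (ModuleCat.epi_iff_surjective _).2 <|
    LinearMap.lTensor_surjective X hT.moduleCat_surjective_g

lemma shortExact_whiskerRight_of_flat {T : ShortComplex (ModuleCat.{u} R)} (hT : T.ShortExact)
    (X : ModuleCat.{u} R) [Module.Flat R X] : (T.map (tensorRight X)).ShortExact :=
  hT.map_of_exact (tensorRight X)

lemma rTensorHomToHomRTensor_surjective (N C K : Type*) [AddCommGroup N] [AddCommGroup C]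
    [AddCommGroup K] [Module R N] [Module R C] [Module R K] [Module.FinitePresentation R N]
    [Module.Flat R K] :
    Function.Surjective (TensorProduct.rTensorHomToHomRTensor (.id R) N C K) := by
  obtain ⟨n, m, q, r, hq, hqr⟩ := Module.FinitePresentation.exists_fin' R N
  have hfree (k : ℕ) : Function.Bijective
      (TensorProduct.rTensorHomToHomRTensor (.id R) (Fin k → R) C K) := by
    rw [← rTensorHomEquivHomRTensor_toLinearMap]
    exact (rTensorHomEquivHomRTensor R (Fin k → R) C K).bijective
  exact LinearMap.surjective_of_surjective_of_injective_of_left_exact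
    ((q.lcomp R C).rTensor K) ((r.lcomp R C).rTensor K) (q.lcomp R (TensorProduct R C K))
    (r.lcomp R (TensorProduct R C K)) _ _ _ (by ext; simp) (by ext; simp)
    (Module.Flat.rTensor_exact K (LinearMap.exact_lcomp_of_exact_of_surjective C hqr hq))
    (LinearMap.exact_lcomp_of_exact_of_surjective _ hqr hq) (hfree n).2 (hfree m).1
    (LinearMap.lcomp_injective_of_surjective q hq)

lemma injective_tensor_of_flat [IsNoetherianRing R] (E K : ModuleCat.{u} R) [Injective E]
    [Module.Flat R K] : Injective (E ⊗ K) := by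
  have hE : Module.Injective R E := Module.injective_module_of_injective_object R E
  refine (Module.injective_iff_injective_object R (TensorProduct R E K)).1
    (Module.Baer.injective fun I g => ?_)
  have := Module.finitePresentation_of_finite R I
  obtain ⟨t, rfl⟩ := rTensorHomToHomRTensor_surjective I E K g
  induction t with
  | zero => exact ⟨0, fun _ _ => by simp⟩
  | tmul h k =>
    obtain ⟨l, hl⟩ := Module.Baer.of_injective hE I h
    exact ⟨(TensorProduct.mk R E K).flip k ∘ₗ l, fun x hx => by simp [hl x hx]⟩
  | add s t hs ht =>
    obtain ⟨l, hl⟩ := hs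
    obtain ⟨l', hl'⟩ := ht
    exact ⟨l + l', fun x hx => by simp [hl x hx, hl' x hx]⟩

lemma exists_lift_whiskerLeft {N P K : ModuleCat.{u} R} [Module.FinitePresentation R N]
    [Module.Flat R K] (C : ModuleCat.{u} R) (p : P ⟶ K) [Epi p] (g : N ⟶ C ⊗ K) :
    ∃ g' : N ⟶ C ⊗ P, g' ≫ C ◁ p = g := by
  obtain ⟨t, ht⟩ := rTensorHomToHomRTensor_surjective N C K g.hom
  obtain ⟨t, rfl⟩ := LinearMap.lTensor_surjective _ ((ModuleCat.epi_iff_surjective p).1 ‹_›) t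
  have hnat : LinearMap.llcomp R _ _ _ (p.hom.lTensor C) ∘ₗ
      TensorProduct.rTensorHomToHomRTensor (.id R) N C P =
        TensorProduct.rTensorHomToHomRTensor (.id R) N C K ∘ₗ p.hom.lTensor (N →ₗ[R] C) := by
    ext; simp
  exact ⟨ModuleCat.ofHom (TensorProduct.rTensorHomToHomRTensor (.id R) N C P t),
    ModuleCat.hom_ext ((LinearMap.congr_fun hnat t).trans ht)⟩

end Flat

section Orthogonal
open Abelian MonoidalCategory

universe w v u₁

/-- The left orthogonal class of the Gorenstein injectives: the objects `X` such that
`Ext¹ (X, G) = 0` for all Gorenstein injective `G`. -/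
def orthogonalGorensteinInjective {C : Type u₁} [Category.{v} C] [Abelian C] [HasExt.{w} C] :
    ObjectProperty C := fun X => ∀ ⦃G⦄, gorensteinInjective G → Subsingleton (Ext X G 1)

lemma orthogonalGorensteinInjective_X₃ {C : Type u₁} [Category.{v} C] [Abelian C] [HasExt.{w} C]
    {T : ShortComplex C} (hT : T.ShortExact) [Injective T.X₂]
    (h : orthogonalGorensteinInjective T.X₁) : orthogonalGorensteinInjective T.X₃ := by
  intro G hG
  obtain ⟨J, _, p, _, hp⟩ := hG.hasInjectiveSyzygy
  have := hG.extInjectiveAcyclic T.X₂ 0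
  have := hT.mono_f
  have := h hp
  refine subsingleton_ext_one_of_exists_extension hT fun f => ?_
  obtain ⟨g, rfl⟩ := exists_lift_of_subsingleton_ext (shortExact_kernel p) f
  exact ⟨Injective.factorThru g T.f ≫ p, by simp⟩

variable {R : Type u} [CommRing R]

/-- The modules `C` such that `Ext¹ (C ⊗ P, G) = 0` for all projective `P` and Gorenstein injective
`G`. They contain `R` and its cosyzygies, and are the coefficient modules in the construction of an
injective module around a flat one. -/
def tensorProjectiveOrthogonal : ObjectProperty (ModuleCat.{u} R) := fun C =>
  ∀ (P : ModuleCat.{u} R) [Projective P], orthogonalGorensteinInjective (C ⊗ P)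

lemma tensorProjectiveOrthogonal_tensorUnit :
    tensorProjectiveOrthogonal (𝟙_ (ModuleCat.{u} R)) := fun P _ _ _ =>
  have := Ext.subsingleton_of_projective P
  subsingleton_ext_of_retract_left (Retract.ofIso (λ_ P)) _ 1

lemma flat_of_projective (P : ModuleCat.{u} R) [Projective P] : Module.Flat R P :=
  have := (IsProjective.iff_projective P).2 ‹_›
  inferInstance

lemma tensorProjectiveOrthogonal_X₃ [IsNoetherianRing R] {T : ShortComplex (ModuleCat.{u} R)}
    (hT : T.ShortExact) [Injective T.X₂] (h : tensorProjectiveOrthogonal T.X₁) :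
    tensorProjectiveOrthogonal T.X₃ := fun P _ => by
  have := flat_of_projective P
  have : Injective (T.map (tensorRight P)).X₂ := injective_tensor_of_flat T.X₂ P
  exact orthogonalGorensteinInjective_X₃ (shortExact_whiskerRight_of_flat hT P) (h P)

section Step
variable [IsNoetherianRing R] {T T' : ShortComplex (ModuleCat.{u} R)} (hT : T.ShortExact)
  (hT' : T'.ShortExact) [Injective T.X₂] [Module.Flat R T'.X₃]

include hT' in
lemma exists_tensorRight_hom_tensorLeft [Module.Flat R T'.X₁] :
    ∃ φ : T.map (tensorRight T'.X₃) ⟶ T'.map (tensorLeft T.X₃), φ.τ₃ = 𝟙 (T.X₃ ⊗ T'.X₃) := by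
  have hD : (T'.map (tensorLeft T.X₂)).ShortExact := shortExact_whiskerLeft_of_flat_X₃ hT' T.X₂
  have hC : (T'.map (tensorLeft T.X₃)).ShortExact := shortExact_whiskerLeft_of_flat_X₃ hT' T.X₃
  have : Injective (T'.map (tensorLeft T.X₂)).X₁ := injective_tensor_of_flat T.X₂ T'.X₁
  have := hC.mono_f
  let σ : T.X₂ ⊗ T'.X₃ ⟶ T.X₂ ⊗ T'.X₂ := hD.splittingOfInjective.s
  have hσ : σ ≫ T.X₂ ◁ T'.g = 𝟙 _ := hD.splittingOfInjective.s_g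
  have hτ : (σ ≫ T.g ▷ T'.X₂) ≫ T.X₃ ◁ T'.g = T.g ▷ T'.X₃ := by
    rw [Category.assoc, ← whisker_exchange, reassoc_of% hσ]
  have h0 : (T.f ▷ T'.X₃ ≫ σ ≫ T.g ▷ T'.X₂) ≫ T.X₃ ◁ T'.g = 0 := by
    rw [Category.assoc, hτ, ← comp_whiskerRight, T.zero, MonoidalPreadditive.zero_whiskerRight]
  obtain ⟨τ₁, hτ₁⟩ := hC.exact.lift' _ h0
  exact ⟨⟨τ₁, σ ≫ T.g ▷ T'.X₂, 𝟙 _, hτ₁, hτ.trans (Category.comp_id _).symm⟩, rfl⟩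

include hT hT' in
lemma exists_extension_ideal_biprod_lift [Projective T'.X₂]
    {φ : T.map (tensorRight T'.X₃) ⟶ T'.map (tensorLeft T.X₃)} (hφ : φ.τ₃ = 𝟙 (T.X₃ ⊗ T'.X₃))
    (I : Ideal R) (g : ModuleCat.of R I ⟶ T.X₁ ⊗ T'.X₃) :
    ∃ g' : ModuleCat.of R R ⟶ (T.X₂ ⊗ T'.X₃) ⊞ (T.X₃ ⊗ T'.X₁),
      ModuleCat.ofHom I.subtype ≫ g' = g ≫ biprod.lift (T.f ▷ T'.X₃) φ.τ₁ := by
  have := hT.mono_f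
  have := hT'.epi_g
  have := Module.finitePresentation_of_finite R I
  have := flat_of_projective T'.X₂
  have := injective_tensor_of_flat T.X₂ T'.X₂
  have : Mono (ModuleCat.ofHom I.subtype) :=
    (ModuleCat.mono_iff_injective _).2 I.subtype_injective
  obtain ⟨g₁, rfl⟩ := exists_lift_whiskerLeft T.X₁ T'.g g
  obtain ⟨h, hh⟩ : ∃ h, ModuleCat.ofHom I.subtype ≫ h = g₁ ≫ T.f ▷ T'.X₂ :=
    ⟨Injective.factorThru _ _, Injective.comp_factorThru _ _⟩
  have hx : ModuleCat.ofHom I.subtype ≫ h ≫ T.X₂ ◁ T'.g = (g₁ ≫ T.X₁ ◁ T'.g) ≫ T.f ▷ T'.X₃ := by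
    rw [reassoc_of% hh, Category.assoc, ← whisker_exchange]
  have hy : ModuleCat.ofHom I.subtype ≫ h ≫ T.g ▷ T'.X₂ = 0 := by
    rw [reassoc_of% hh, ← comp_whiskerRight, T.zero, MonoidalPreadditive.zero_whiskerRight,
      comp_zero]
  have hxy : (h ≫ T.X₂ ◁ T'.g) ≫ T.g ▷ T'.X₃ = (h ≫ T.g ▷ T'.X₂) ≫ T.X₃ ◁ T'.g := by
    rw [Category.assoc, Category.assoc, whisker_exchange]
  refine exists_factorization_biprod_lift (shortExact_whiskerLeft_of_flat_X₃ hT' T.X₃) φ hx hy ?_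
  rw [hφ]
  exact hxy

include hT hT' in
lemma isBaerStep_biprod_lift [Projective T'.X₂] (hT₁ : tensorProjectiveOrthogonal T.X₁)
    {φ : T.map (tensorRight T'.X₃) ⟶ T'.map (tensorLeft T.X₃)} (hφ : φ.τ₃ = 𝟙 (T.X₃ ⊗ T'.X₃)) :
    IsBaerStep gorensteinInjective (biprod.lift (T.f ▷ T'.X₃) φ.τ₁) := by
  have : IsIso φ.τ₃ := hφ ▸ inferInstanceAs (IsIso (𝟙 _))
  have hj := shortExact_of_isIso_τ₃ (shortExact_whiskerRight_of_flat hT T'.X₃)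
    (shortExact_whiskerLeft_of_flat_X₃ hT' T.X₃) φ
  refine ⟨hj.mono_f, fun {G} hG f => ?_, exists_extension_ideal_biprod_lift hT hT' hφ⟩
  have : Subsingleton (Ext (T'.map (tensorLeft T.X₃)).X₂ G 1) :=
    tensorProjectiveOrthogonal_X₃ hT hT₁ T'.X₂ hG
  exact exists_extension_of_subsingleton_ext hj f

end Step

section BaerStage
variable {𝒢 : ObjectProperty (ModuleCat.{u} R)} {X X' Y J : ModuleCat.{u} R}

lemma IsBaerStep.biprod_map {j : X ⟶ X'} (h : IsBaerStep 𝒢 j) [Injective J] :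
    IsBaerStep 𝒢 (biprod.map (𝟙 J) j) where
  mono := have := h.mono; inferInstance
  exists_extension hG f := by
    obtain ⟨f', hf'⟩ := h.exists_extension hG (biprod.inr ≫ f)
    exact ⟨biprod.desc (biprod.inl ≫ f) f', by apply biprod.hom_ext' <;> simp [hf']⟩
  exists_extension_ideal I g := by
    have : Mono (ModuleCat.ofHom I.subtype) :=
      (ModuleCat.mono_iff_injective _).2 I.subtype_injective
    obtain ⟨g', hg'⟩ := h.exists_extension_ideal I (g ≫ biprod.snd)
    exact ⟨biprod.lift (Injective.factorThru (g ≫ biprod.fst) (ModuleCat.ofHom I.subtype)) g',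
      by apply biprod.hom_ext <;> simp [hg']⟩

lemma IsBaerStep.iso_comp {j : Y ⟶ X'} (h : IsBaerStep 𝒢 j) (e : X ≅ Y) :
    IsBaerStep 𝒢 (e.hom ≫ j) where
  mono := have := h.mono; inferInstance
  exists_extension hG f := by
    obtain ⟨f', hf'⟩ := h.exists_extension hG (e.inv ≫ f)
    exact ⟨f', by rw [Category.assoc, hf', e.hom_inv_id_assoc]⟩
  exists_extension_ideal I g := by
    obtain ⟨g', hg'⟩ := h.exists_extension_ideal I (g ≫ e.hom)
    exact ⟨g', by rw [hg', Category.assoc]⟩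

/-- The modules `J ⊞ (C ⊗ K)` with `J` injective, `C` in `tensorProjectiveOrthogonal` and `K` flat:
the stages of an injective module built around a flat module. -/
def IsBaerStage (X : ModuleCat.{u} R) : Prop :=
  ∃ J C K : ModuleCat.{u} R, Injective J ∧ tensorProjectiveOrthogonal C ∧ Module.Flat R K ∧
    Nonempty (X ≅ J ⊞ (C ⊗ K))

lemma isBaerStage_of_flat (F : ModuleCat.{u} R) [Module.Flat R F] : IsBaerStage F :=
  ⟨ModuleCat.of R PUnit, 𝟙_ _, F, (ModuleCat.isZero_of_subsingleton _).injective,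
    tensorProjectiveOrthogonal_tensorUnit, inferInstance,
    ⟨(λ_ F).symm ≪≫ isoZeroBiprod (ModuleCat.isZero_of_subsingleton _)⟩⟩

lemma exists_isBaerStep [IsNoetherianRing R] (hX : IsBaerStage X) :
    ∃ (X' : ModuleCat.{u} R) (j : X ⟶ X'), IsBaerStage X' ∧ IsBaerStep gorensteinInjective j := by
  obtain ⟨J, C, K, _, hC, _, ⟨e⟩⟩ := hX
  let T := ShortComplex.mk (Injective.ι C) _ (cokernel.condition _)
  let T' := ShortComplex.mk _ (Projective.π K) (kernel.condition _)
  have hT : T.ShortExact := shortExact_cokernel _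
  have hT' : T'.ShortExact := shortExact_kernel _
  have : Injective T.X₂ := inferInstanceAs (Injective (Injective.under C))
  have : Projective T'.X₂ := inferInstanceAs (Projective (Projective.over K))
  have : Module.Flat R T'.X₃ := ‹Module.Flat R K›
  have := flat_of_projective T'.X₂
  have : Module.Flat R T'.X₁ := flat_X₁ hT'
  have := injective_tensor_of_flat T.X₂ T'.X₃
  obtain ⟨φ, hφ⟩ := exists_tensorRight_hom_tensorLeft (T := T) hT'
  exact ⟨_, _, ⟨J ⊞ (T.X₂ ⊗ T'.X₃), T.X₃, T'.X₁, inferInstance,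
    tensorProjectiveOrthogonal_X₃ hT hC, inferInstance, ⟨(biprod.associator _ _ _).symm⟩⟩,
    (isBaerStep_biprod_lift hT hT' hC hφ).biprod_map.iso_comp e⟩

end BaerStage

/-- The cotorsion modules `M`: `Ext¹ (F, M) = 0` for all flat `F`. -/
def cotorsion : ObjectProperty (ModuleCat.{u} R) := fun M =>
  ∀ (F : ModuleCat.{u} R) [Module.Flat R F], Subsingleton (Ext F M 1)

lemma cotorsion_of_gorensteinInjective [IsNoetherianRing R] {G : ModuleCat.{u} R}
    (hG : gorensteinInjective G) : cotorsion G := by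
  intro F _
  obtain ⟨J, _, i, _, hC⟩ := hG.hasInjectiveCosyzygy
  have := Ext.subsingleton_of_injective F J
  refine subsingleton_ext_one_of_exists_lift (shortExact_cokernel i) fun f => ?_
  obtain ⟨U, _, ι, hι⟩ := exists_injective_extension
    (fun _ => exists_isBaerStep) (isBaerStage_of_flat F)
  obtain ⟨f', rfl⟩ := hι hC f
  have := hG.extInjectiveAcyclic U 0
  obtain ⟨g, rfl⟩ := exists_lift_of_subsingleton_ext (shortExact_cokernel i) f'
  exact ⟨ι ≫ g, by simp⟩

end Orthogonal

section Adjunction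

universe w v u₁

variable {C D : Type u₁} [Category.{v} C] [Category.{v} D] [Abelian C] [Abelian D] {L : C ⥤ D}
  {G : D ⥤ C} (adj : L ⊣ G)

lemma nonempty_retract_obj_cokernel_unit [L.PreservesZeroMorphisms] [PreservesFiniteLimits L]
    (X : C) [Mono (adj.unit.app X)] :
    Nonempty (Retract (L.obj (cokernel (adj.unit.app X))) (L.obj (G.obj (L.obj X)))) := by
  have := adj.leftAdjoint_preservesColimits
  have hT := (shortExact_cokernel (adj.unit.app X)).map_of_exact L
  let s := ShortComplex.Splitting.ofExactOfRetraction _ hT.exact (adj.counit.app _)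
    (adj.left_triangle_components X) hT.epi_g
  exact ⟨⟨s.s, L.map (cokernel.π _), s.s_g⟩⟩

variable [HasExt.{w} D] [G.PreservesZeroMorphisms] {T : ShortComplex D} (hT : T.ShortExact)
include adj hT

open Abelian in
lemma shortExact_map_of_subsingleton_ext {P : C} (p : P ⟶ G.obj T.X₃) [Epi p]
    [Subsingleton (Ext (L.obj P) T.X₁ 1)] : (T.map G).ShortExact := by
  have := adj.rightAdjoint_preservesLimits
  have := hT.mono_f
  obtain ⟨g, hg⟩ := exists_lift_of_subsingleton_ext hT ((adj.homEquiv _ _).symm p)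
  have : adj.homEquiv P T.X₂ g ≫ G.map T.g = p := by
    rw [← adj.homEquiv_naturality_right, hg, Equiv.apply_symm_apply]
  have : Epi (G.map T.g) := epi_of_epi_fac this
  exact
    { exact := hT.exact.map_of_mono_of_preservesKernel G hT.mono_f inferInstance
      mono_f := inferInstanceAs (Mono (G.map T.f))
      epi_g := this }

open Abelian in
lemma subsingleton_ext_one_iff_of_adjunction [HasExt.{w} C] (hG : (T.map G).ShortExact)
    [Injective T.X₂] [Injective (G.obj T.X₂)] (N : C) :
    Subsingleton (Ext N (G.obj T.X₁) 1) ↔ Subsingleton (Ext (L.obj N) T.X₁ 1) := by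
  constructor
  · intro (_ : Subsingleton (Ext N (T.map G).X₁ 1))
    have := Ext.subsingleton_of_injective (L.obj N) T.X₂
    refine subsingleton_ext_one_of_exists_lift hT fun h => ?_
    obtain ⟨g, hg⟩ : ∃ g, g ≫ G.map T.g = adj.homEquiv N T.X₃ h :=
      exists_lift_of_subsingleton_ext hG _
    exact ⟨(adj.homEquiv N T.X₂).symm g, by
      rw [← adj.homEquiv_naturality_right_symm, hg, Equiv.symm_apply_apply]⟩
  · intro _
    have : Subsingleton (Ext N (T.map G).X₂ 1) := Ext.subsingleton_of_injective N (G.obj T.X₂) 0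
    refine subsingleton_ext_one_of_exists_lift hG fun (h : N ⟶ G.obj T.X₃) => ?_
    obtain ⟨g, hg⟩ := exists_lift_of_subsingleton_ext hT ((adj.homEquiv N T.X₃).symm h)
    exact ⟨adj.homEquiv N T.X₂ g, (adj.homEquiv_naturality_right g T.g).symm.trans
      (by rw [hg, Equiv.apply_symm_apply])⟩

end Adjunction

section ChangeOfRings

open Abelian ModuleCat

variable {R S : Type u} [CommRing R] [CommRing S] {f : R →+* S}

variable (f) in
lemma flat_extendScalars (F : ModuleCat.{u} R) [Module.Flat R F] :
    Module.Flat S ((extendScalars.{u, u, u} f).obj F) := by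
  let _ := f.toAlgebra
  exact inferInstanceAs (Module.Flat S (TensorProduct R S F))

lemma flat_of_flat_extendScalars (hf : f.FaithfullyFlat) (F : ModuleCat.{u} R)
    [h : Module.Flat S ((extendScalars.{u, u, u} f).obj F)] : Module.Flat R F := by
  let _ := f.toAlgebra
  have : Module.FaithfullyFlat R S := hf
  have : Module.Flat S (TensorProduct R S F) := h
  exact Module.Flat.of_flat_tensorProduct R F S

lemma flat_restrictScalars (hf : f.Flat) (N : ModuleCat.{u} S) [Module.Flat S N] :
    Module.Flat R ((restrictScalars.{u, u, u} f).obj N) := by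
  let _ := f.toAlgebra
  have : Module.Flat R S := hf
  have : IsScalarTower R S ((restrictScalars.{u, u, u} f).obj N) :=
    .of_algebraMap_smul fun _ _ => rfl
  have : Module.Flat S ((restrictScalars.{u, u, u} f).obj N) := ‹Module.Flat S N›
  exact Module.Flat.trans R S _

lemma injective_restrictScalars (hf : f.Flat) (I : ModuleCat.{u} S) [Injective I] :
    Injective ((restrictScalars.{u, u, u} f).obj I) :=
  have := preservesFiniteLimits_extendScalars_of_flat hf
  (extendRestrictScalarsAdj.{u, u, u} f).map_injective I ‹_›

variable (f) in
lemma injective_coextendScalars (J : ModuleCat.{u} R) [Injective J] :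
    Injective ((coextendScalars.{u, u, u} f).obj J) :=
  (restrictCoextendScalarsAdj.{u, u, u} f).map_injective J ‹_›

lemma mono_unit_extendRestrictScalarsAdj (hf : f.FaithfullyFlat) (M : ModuleCat.{u} R) :
    Mono ((extendRestrictScalarsAdj.{u, u, u} f).unit.app M) := by
  let _ := f.toAlgebra
  have : Module.FaithfullyFlat R S := hf
  exact (ModuleCat.mono_iff_injective _).2
    (Module.FaithfullyFlat.tensorProduct_mk_injective (A := R) (B := S) M)

lemma flat_of_retract {M N : ModuleCat.{u} R} (h : Retract N M) [Module.Flat R M] :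
    Module.Flat R N :=
  .of_retract h.i.hom h.r.hom congr(($h.retract).hom)

lemma flat_cokernel_unit_extendRestrictScalarsAdj (hf : f.FaithfullyFlat) (F : ModuleCat.{u} R)
    [Module.Flat R F] :
    Module.Flat R (cokernel ((extendRestrictScalarsAdj.{u, u, u} f).unit.app F) : ModuleCat R) := by
  have := preservesFiniteLimits_extendScalars_of_flat hf.flat
  have := mono_unit_extendRestrictScalarsAdj hf F
  have := flat_extendScalars f F
  have := flat_restrictScalars hf.flat ((extendScalars.{u, u, u} f).obj F)
  have := flat_extendScalars f
    ((restrictScalars.{u, u, u} f).obj ((extendScalars.{u, u, u} f).obj F))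
  obtain ⟨r⟩ := nonempty_retract_obj_cokernel_unit (extendRestrictScalarsAdj.{u, u, u} f) F
  have := flat_of_retract r
  exact flat_of_flat_extendScalars hf _

lemma shortExact_coextendScalars (hf : f.Flat) {T : ShortComplex (ModuleCat.{u} R)}
    (hT : T.ShortExact) (h₁ : cotorsion T.X₁) :
    (T.map (coextendScalars.{u, u, u} f)).ShortExact := by
  let P : ModuleCat.{u} S := Projective.over ((coextendScalars.{u, u, u} f).obj T.X₃)
  have := flat_of_projective P
  have := flat_restrictScalars hf P
  have := h₁ ((restrictScalars.{u, u, u} f).obj P)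
  exact shortExact_map_of_subsingleton_ext (restrictCoextendScalarsAdj.{u, u, u} f) hT
    (Projective.π _)

lemma subsingleton_ext_coextendScalars_iff (hf : f.Flat) {M : ModuleCat.{u} R} (hM : cotorsion M)
    (N : ModuleCat.{u} S) : Subsingleton (Ext N ((coextendScalars.{u, u, u} f).obj M) 1) ↔
      Subsingleton (Ext ((restrictScalars.{u, u, u} f).obj N) M 1) :=
  have hT := shortExact_cokernel (Injective.ι M)
  have := injective_coextendScalars f (Injective.under M)
  subsingleton_ext_one_iff_of_adjunction (restrictCoextendScalarsAdj.{u, u, u} f) hT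
    (shortExact_coextendScalars hf hT hM) N

instance : (cotorsion (R := R)).IsClosedUnderIsomorphisms where
  of_iso e h F _ :=
    have := h F
    subsingleton_ext_of_iso_right e.symm F 1

lemma cotorsion_X₃ {T : ShortComplex (ModuleCat.{u} R)} (hT : T.ShortExact) [Injective T.X₂]
    (h : cotorsion T.X₁) : cotorsion T.X₃ := by
  intro F _
  have hP := shortExact_kernel (Projective.π F)
  have := flat_of_projective (Projective.over F)
  have : Module.Flat R (kernel (Projective.π F) : ModuleCat R) := flat_X₁ hP
  have := h (kernel (Projective.π F))
  have := hP.mono_f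
  have := Ext.subsingleton_of_projective (Projective.over F) T.X₃
  refine subsingleton_ext_one_of_exists_extension hP fun g => ?_
  obtain ⟨g', rfl⟩ := exists_lift_of_subsingleton_ext hT g
  exact ⟨Injective.factorThru g' (kernel.ι _) ≫ T.g, by simp⟩

lemma gorensteinInjective_coextendScalars [IsNoetherianRing R] (hf : f.Flat) {G : ModuleCat.{u} R}
    (hG : gorensteinInjective G) : gorensteinInjective ((coextendScalars.{u, u, u} f).obj G) := by
  refine gorensteinInjective.of_forall (gorensteinInjective.map (coextendScalars.{u, u, u} f))
    ?_ ?_ ?_ (ObjectProperty.prop_map_obj _ _ hG)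
  all_goals
    rintro X hX
    obtain ⟨G, hG, ⟨e⟩⟩ := (ObjectProperty.prop_map_iff _ _ _).1 hX
  · intro E _
    have := injective_restrictScalars hf E
    have := hG.extInjectiveAcyclic ((restrictScalars.{u, u, u} f).obj E) 0
    have := (subsingleton_ext_coextendScalars_iff hf (cotorsion_of_gorensteinInjective hG) E).2 this
    exact subsingleton_ext_of_iso_right e.symm E 1
  · obtain ⟨J, _, p, _, hp⟩ := hG.hasInjectiveSyzygy
    let T := ShortComplex.mk (kernel.ι p) p (kernel.condition p)
    have : Injective (T.map (coextendScalars.{u, u, u} f)).X₂ := injective_coextendScalars f J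
    have hT := shortExact_coextendScalars (T := T) hf (shortExact_kernel p)
      (cotorsion_of_gorensteinInjective hp)
    exact (HasInjectiveSyzygy.of_shortExact hT (ObjectProperty.prop_map_obj _ _ hp)).of_iso e
  · obtain ⟨J, _, i, _, hi⟩ := hG.hasInjectiveCosyzygy
    let T := ShortComplex.mk i (cokernel.π i) (cokernel.condition i)
    have : Injective (T.map (coextendScalars.{u, u, u} f)).X₂ := injective_coextendScalars f J
    have hT := shortExact_coextendScalars (T := T) hf (shortExact_cokernel i)
      (cotorsion_of_gorensteinInjective hG)
    exact (HasInjectiveCosyzygy.of_shortExact hT (ObjectProperty.prop_map_obj _ _ hi)).of_iso e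

/-- Transposing a retraction of `E ⟶ S ⊗[R] E` twice yields a map `E ⟶ Hom_R(S, E)`. -/
lemma nonempty_retract_coextendScalars (hf : f.FaithfullyFlat) (E : ModuleCat.{u} R)
    [Injective E] : Nonempty (Retract E
      ((restrictScalars.{u, u, u} f).obj ((coextendScalars.{u, u, u} f).obj E))) := by
  let ext := extendRestrictScalarsAdj.{u, u, u} f
  let coext := restrictCoextendScalarsAdj.{u, u, u} f
  have := mono_unit_extendRestrictScalarsAdj hf E
  let r := Injective.factorThru (𝟙 E) (ext.unit.app E)
  have hr : ext.unit.app E ≫ r = 𝟙 E := Injective.comp_factorThru _ _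
  refine ⟨⟨ext.homEquiv _ _ (coext.homEquiv _ _ r), coext.counit.app E, ?_⟩⟩
  rw [ext.homEquiv_unit, Category.assoc, ← coext.homEquiv_counit, Equiv.symm_apply_apply, hr]

lemma subsingleton_ext_one_of_gorensteinInjective_coextendScalars (hf : f.FaithfullyFlat)
    {M : ModuleCat.{u} R} (hM : cotorsion M)
    (h : gorensteinInjective ((coextendScalars.{u, u, u} f).obj M)) (E : ModuleCat.{u} R)
    [Injective E] : Subsingleton (Ext E M 1) := by
  have := injective_coextendScalars f E
  have := (subsingleton_ext_coextendScalars_iff hf.flat hM _).1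
    (h.extInjectiveAcyclic ((coextendScalars.{u, u, u} f).obj E) 0)
  obtain ⟨r⟩ := nonempty_retract_coextendScalars hf E
  exact subsingleton_ext_of_retract_left r M 1

lemma exists_lift_of_cotorsion (hf : f.FaithfullyFlat) {M : ModuleCat.{u} R} (hM : cotorsion M)
    {I : ModuleCat.{u} S} {p : I ⟶ (coextendScalars.{u, u, u} f).obj M} [Epi p]
    (hp : cotorsion (kernel p)) (F : ModuleCat.{u} R) [Module.Flat R F] (g : F ⟶ M) :
    ∃ g' : F ⟶ (restrictScalars.{u, u, u} f).obj I,
      g' ≫ ((restrictCoextendScalarsAdj.{u, u, u} f).homEquiv _ _).symm p = g := by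
  let ext := extendRestrictScalarsAdj.{u, u, u} f
  let coext := restrictCoextendScalarsAdj.{u, u, u} f
  have := mono_unit_extendRestrictScalarsAdj hf F
  have := flat_cokernel_unit_extendRestrictScalarsAdj hf F
  have := hM (cokernel (ext.unit.app F))
  obtain ⟨h, hh⟩ := exists_extension_of_subsingleton_ext (shortExact_cokernel (ext.unit.app F)) g
  have := flat_extendScalars f F
  have := hp ((extendScalars.{u, u, u} f).obj F)
  obtain ⟨q, hq⟩ := exists_lift_of_subsingleton_ext (shortExact_kernel p) (coext.homEquiv _ _ h)
  refine ⟨ext.homEquiv _ _ q, ?_⟩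
  rw [ext.homEquiv_unit, Category.assoc, ← coext.homEquiv_naturality_left_symm, hq,
    Equiv.symm_apply_apply, hh]

lemma epi_and_cotorsion_kernel_homEquiv_symm (hf : f.FaithfullyFlat) {M : ModuleCat.{u} R}
    (hM : cotorsion M) {I : ModuleCat.{u} S} [Injective I]
    {p : I ⟶ (coextendScalars.{u, u, u} f).obj M} [Epi p] (hp : cotorsion (kernel p)) :
    Epi (((restrictCoextendScalarsAdj.{u, u, u} f).homEquiv _ _).symm p) ∧
      cotorsion (kernel (((restrictCoextendScalarsAdj.{u, u, u} f).homEquiv _ _).symm p)) := by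
  set p' := ((restrictCoextendScalarsAdj.{u, u, u} f).homEquiv _ _).symm p
  have : Epi p' := by
    have := flat_of_projective (Projective.over M)
    obtain ⟨g, hg⟩ := exists_lift_of_cotorsion hf hM hp _ (Projective.π M)
    exact epi_of_epi_fac hg
  refine ⟨this, fun F _ => ?_⟩
  have := injective_restrictScalars hf.flat I
  have := Ext.subsingleton_of_injective F ((restrictScalars.{u, u, u} f).obj I)
  exact subsingleton_ext_one_of_exists_lift (shortExact_kernel p')
    (exists_lift_of_cotorsion hf hM hp F)

lemma gorensteinInjective_coextendScalars_kernel (hf : f.Flat) {M : ModuleCat.{u} R}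
    {I : ModuleCat.{u} S} [Injective I] {p : I ⟶ (coextendScalars.{u, u, u} f).obj M} [Epi p]
    (hK : gorensteinInjective (kernel p)) {p' : (restrictScalars.{u, u, u} f).obj I ⟶ M} [Epi p']
    (hp' : (restrictCoextendScalarsAdj.{u, u, u} f).homEquiv _ _ p' = p)
    (hL : cotorsion (kernel p')) :
    gorensteinInjective ((coextendScalars.{u, u, u} f).obj (kernel p')) := by
  let coext := restrictCoextendScalarsAdj.{u, u, u} f
  let T := ShortComplex.mk (kernel.ι p) p (kernel.condition p)
  let L := ShortComplex.mk (kernel.ι p') p' (kernel.condition p')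
  let T' := L.map (coextendScalars.{u, u, u} f)
  have hT : T.ShortExact := shortExact_kernel p
  have hT' : T'.ShortExact := shortExact_coextendScalars hf (shortExact_kernel p') hL
  have := hT'.mono_f
  let η : T.X₂ ⟶ T'.X₂ := coext.unit.app I
  have hη : η ≫ T'.g = T.g := (coext.homEquiv_unit ..).symm.trans hp'
  obtain ⟨τ₁, hτ₁⟩ := hT'.exact.lift' (T.f ≫ η)
    ((Category.assoc ..).trans ((congrArg _ hη).trans T.zero))
  let φ : T ⟶ T' := ⟨τ₁, η, 𝟙 T.X₃, hτ₁, hη.trans (Category.comp_id _).symm⟩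
  have : IsIso φ.τ₃ := inferInstanceAs (IsIso (𝟙 _))
  have := injective_restrictScalars hf I
  have : Injective T'.X₂ := injective_coextendScalars f ((restrictScalars.{u, u, u} f).obj I)
  have : Injective T.X₂ := ‹Injective I›
  have hbiprod : gorensteinInjective (T.X₂ ⊞ T'.X₁) :=
    .of_extension (shortExact_of_isIso_τ₃ hT hT' φ) hK (.of_injective T'.X₂)
  exact gorensteinInjective.of_cokernel
    (ShortComplex.Splitting.ofHasBinaryBiproduct T.X₂ T'.X₁).shortExact (.of_injective T.X₂) hbiprod

lemma gorensteinInjective_of_coextendScalars [IsNoetherianRing S] (hf : f.FaithfullyFlat)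
    {M : ModuleCat.{u} R} (hM : cotorsion M)
    (h : gorensteinInjective ((coextendScalars.{u, u, u} f).obj M)) : gorensteinInjective M := by
  refine gorensteinInjective.of_forall
    (cotorsion ⊓ gorensteinInjective.inverseImage (coextendScalars.{u, u, u} f)) ?_ ?_ ?_ ⟨hM, h⟩
  all_goals
    rintro X ⟨hX, hGX : gorensteinInjective ((coextendScalars.{u, u, u} f).obj X)⟩
  · intro E _
    exact subsingleton_ext_one_of_gorensteinInjective_coextendScalars hf hX hGX E
  · obtain ⟨I, _, p, _, hp⟩ := hGX.hasInjectiveSyzygy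
    obtain ⟨_, hL⟩ :=
      epi_and_cotorsion_kernel_homEquiv_symm hf hX (cotorsion_of_gorensteinInjective hp)
    exact ⟨_, injective_restrictScalars hf.flat I, _, ‹_›, hL,
      gorensteinInjective_coextendScalars_kernel hf.flat hp (Equiv.apply_symm_apply _ p) hL⟩
  · have hJ := shortExact_cokernel (Injective.ι X)
    have := injective_coextendScalars f (Injective.under X)
    exact ⟨_, inferInstance, Injective.ι X, inferInstance, cotorsion_X₃ hJ hX,
      gorensteinInjective.of_cokernel (shortExact_coextendScalars hf.flat hJ hX) hGX
        (gorensteinInjective.of_injective ((coextendScalars.{u, u, u} f).obj (Injective.under X)))⟩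

lemma gorensteinInjectiveDimLE_coextendScalars_iff [IsNoetherianRing R] [IsNoetherianRing S]
    (hf : f.FaithfullyFlat) (n : ℕ) {M : ModuleCat.{u} R} (hM : cotorsion M) :
    gorensteinInjectiveDimLE n ((coextendScalars.{u, u, u} f).obj M) ↔
      gorensteinInjectiveDimLE n M := by
  induction n generalizing M with
  | zero =>
    exact ⟨gorensteinInjective_of_coextendScalars hf hM,
      gorensteinInjective_coextendScalars hf.flat⟩
  | succ n ih =>
    let T := ShortComplex.mk (Injective.ι M) _ (cokernel.condition _)
    let T' := T.map (coextendScalars.{u, u, u} f)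
    have hT : T.ShortExact := shortExact_cokernel (Injective.ι M)
    have hT' : T'.ShortExact := shortExact_coextendScalars hf.flat hT hM
    have : Injective T.X₂ := inferInstanceAs (Injective (Injective.under M))
    have : Injective T'.X₂ := injective_coextendScalars f (Injective.under M)
    have hC := ih (cotorsion_X₃ hT hM)
    constructor <;> intro h
    · exact .succ_of_shortExact hT (.of_injective T.X₂) (hC.1 (.of_injective_X₂ hT' h))
    · exact .succ_of_shortExact hT' (.of_injective T'.X₂) (hC.2 (.of_injective_X₂ hT h))

end ChangeOfRings

section HomModule

open Abelian ModuleCat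

variable (R S : Type u) [CommRing R] [CommRing S] [Algebra R S]
  (M : Type u) [AddCommGroup M] [Module R M]

/-- The concrete module `S →ₗ[R] M` is the coextension of scalars of `M`. -/
noncomputable def homModuleIso :
    ModuleCat.of S (S →ₗ[R] M) ≅ (coextendScalars.{u, u, u} (algebraMap R S)).obj (of R M) :=
  let e : ((restrictScalars.{u, u, u} (algebraMap R S)).obj (of S S)) ≃ₗ[R] S :=
    { AddEquiv.refl S with map_smul' := fun r (s : S) => (Algebra.smul_def r s).symm }
  LinearEquiv.toModuleIso
    { (LinearEquiv.congrLeft M R e.symm).toAddEquiv.trans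
        (CoextendScalars.equiv (algebraMap R S) (of R M)).symm.toAddEquiv with
      map_smul' := fun s g => CoextendScalars.ext <| LinearMap.ext fun (t : S) =>
        congrArg g (mul_comm s t) }

theorem gid_eq_gid_hom_of_faithfullyFlat_of_cotorsion_general
    [IsNoetherianRing R] [IsNoetherianRing S] [Module.FaithfullyFlat R S]
    (hcotorsion : ∀ (F : Type u) [AddCommGroup F] [Module R F], Module.Flat R F →
      Subsingleton (Abelian.Ext (ModuleCat.of R F) (ModuleCat.of R M) 1)) :
    gid R M = gid S (S →ₗ[R] M) := by
  have hf : (algebraMap R S).FaithfullyFlat :=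
    RingHom.faithfullyFlat_algebraMap_iff.2 ‹_›
  have hM : cotorsion (of R M) := fun F _ => hcotorsion F ‹_›
  have hdim (n : ℕ) : gorensteinInjectiveDimLE n (of R M) ↔
      gorensteinInjectiveDimLE n (of S (S →ₗ[R] M)) :=
    (gorensteinInjectiveDimLE_coextendScalars_iff hf n hM).symm.trans
      (ObjectProperty.prop_iff_of_iso _ (homModuleIso R S M).symm)
  rw [gid_eq_sInf (of R M), gid_eq_sInf (of S (S →ₗ[R] M))]
  simp only [hdim]

end HomModule

theorem gid_eq_gid_hom_of_faithfullyFlat_of_cotorsion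
    (R S : Type u) [CommRing R] [CommRing S] [IsNoetherianRing R] [IsNoetherianRing S]
    [Algebra R S] [Module.FaithfullyFlat R S] (hdim : ringKrullDim S < ⊤)
    (M : Type u) [AddCommGroup M] [Module R M]
    (hcotorsion : ∀ (F : Type u) [AddCommGroup F] [Module R F], Module.Flat R F →
      Subsingleton (Abelian.Ext (ModuleCat.of R F) (ModuleCat.of R M) 1)) :
    gid R M = gid S (S →ₗ[R] M) ∧ (gid R M < ⊤ ↔ gid S (S →ₗ[R] M) < ⊤) := by
  have h := gid_eq_gid_hom_of_faithfullyFlat_of_cotorsion_general R S M hcotorsion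
  exact ⟨h, by rw [h]⟩
end

section
/- Let φ : R → S be a faithfully flat homomorphism of commutative noetherian rings and assume R is semi-local (R has only finitely many maximal ideals). For every R-module M there are equalities Gfd_S(S ⊗_R M) = Gfd_R(S ⊗_R M) = Gfd_R(M), where in the middle term S ⊗_R M is regarded as an R-module via φ. -/
/-!
Let `φ : R → S` be a faithfully flat homomorphism of commutative noetherian rings and
assume `R` is semi-local (finitely many maximal ideals). For every `R`-module `M` one has
`Gfd_S(S ⊗_R M) = Gfd_R(S ⊗_R M) = Gfd_R M`, where in the middle term `S ⊗_R M` is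
regarded as an `R`-module.
-/

universe u

open CategoryTheory TensorProduct

/-- A witness that `G` is a Gorenstein flat `R`-module: an exact complex `F` of flat
`R`-modules (with differentials `d i : F (i+1) →ₗ[R] F i`) such that `E ⊗_R F` is exact
for every injective `R`-module `E`, together with an isomorphism `G ≅ im (F 0 → F (-1))`. -/
structure GorensteinFlatWitness (R : Type u) [CommRing R]
    (G : Type u) [AddCommGroup G] [Module R G] : Type (u + 1) where
  F : ℤ → Type u
  [acg : ∀ i, AddCommGroup (F i)]
  [mod : ∀ i, Module R (F i)]
  flat : ∀ i, Module.Flat R (F i)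
  d : ∀ i : ℤ, F (i + 1) →ₗ[R] F i
  d_comp_d : ∀ i : ℤ, (d i).comp (d (i + 1)) = 0
  exact : ∀ i : ℤ, LinearMap.ker (d i) = LinearMap.range (d (i + 1))
  tensor_exact : ∀ (E : Type u) [AddCommGroup E] [Module R E], Module.Injective R E →
    ∀ i : ℤ, LinearMap.ker (LinearMap.lTensor E (d i)) =
      LinearMap.range (LinearMap.lTensor E (d (i + 1)))
  im_iso : Nonempty (G ≃ₗ[R] LinearMap.range (d (-1)))

/-- `G` is a Gorenstein flat `R`-module. -/
def IsGorensteinFlat (R : Type u) [CommRing R]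
    (G : Type u) [AddCommGroup G] [Module R G] : Prop :=
  Nonempty (GorensteinFlatWitness R G)

/-- A witness for an exact sequence `0 → Gₙ → ⋯ → G₁ → G₀ → M → 0` with each `Gᵢ`
Gorenstein flat (modules beyond index `n` are trivial, which encodes that the
sequence stops at `Gₙ`). -/
structure GfdWitness (R : Type u) [CommRing R]
    (M : Type u) [AddCommGroup M] [Module R M] (n : ℕ) : Type (u + 1) where
  G : ℕ → Type u
  [acg : ∀ i, AddCommGroup (G i)]
  [mod : ∀ i, Module R (G i)]
  gf : ∀ i ≤ n, IsGorensteinFlat R (G i)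
  triv : ∀ i, n < i → Subsingleton (G i)
  π : G 0 →ₗ[R] M
  π_surj : Function.Surjective π
  d : ∀ i : ℕ, G (i + 1) →ₗ[R] G i
  exact_zero : LinearMap.ker π = LinearMap.range (d 0)
  exact : ∀ i : ℕ, LinearMap.ker (d i) = LinearMap.range (d (i + 1))

/-- The Gorenstein flat dimension of a module: the least `n` admitting an exact
sequence `0 → Gₙ → ⋯ → G₀ → M → 0` of Gorenstein flat modules, as an element
of `ℕ∞` (`⊤` if there is no such `n`). -/
noncomputable def gfd (R : Type u) [CommRing R]
    (M : Type u) [AddCommGroup M] [Module R M] : ℕ∞ :=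
  sInf {c : ℕ∞ | ∃ n : ℕ, c = n ∧ Nonempty (GfdWitness R M n)}

/-!
Call a map *pure* if it stays injective after tensoring with injective modules. By the duality
`Hom(E ⊗ A, ℚ/ℤ) = Hom(A, E*)` this is an extension property against the character modules `E*` of
injective modules `E`. A complete flat resolution of `G` splits into two independent halves: the
vanishing of `Ext^{n+1}(G, E*) = Tor_{n+1}(E, G)*`, and a pure coresolution `0 → G → F₀ → F₁ → ⋯`
by flat modules. The first half behaves well in short exact sequences by dimension shifting. For
the second, coherence makes `E*` flat, so every flat `F` embeds purely, with flat cokernel, into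
`F**`, which is flat and injective relative to pure maps; coresolutions through such modules satisfy
a horseshoe lemma. Hence Gorenstein flat modules form a class closed under extensions and kernels
of epimorphisms, and by Schanuel's lemma any syzygy of a projective presentation computes the
Gorenstein flat dimension.

For a flat base change to `S ⊗ -`, regarded over `Q = S` or `Q = R`, everything ascends because an
injective `Q`-module is injective over `R`. For the descent, let `E` be injective over `R`. Then
`E*` is flat and the pure map `E* → (S ⊗ E*)**` splits over `R`, since the identity of `E*`
extends along it. So a map `A → E*` extends along the composite `A → S ⊗ A → X` whenever `S ⊗ A →
X` is pure over `Q`: first extend `S ⊗ A → S ⊗ E* → (S ⊗ E*)**` over `Q`, then retract. This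
transports the pure embedding of `S ⊗ A` into a flat `Q`-module to a pure embedding of `A`, and
its cokernel again becomes Gorenstein flat after tensoring with `S`.
-/

namespace GorensteinFlat

section ShortExact

variable {R : Type*} [Ring R]
variable {A B C D X Y : Type*} [AddCommGroup A] [Module R A] [AddCommGroup B] [Module R B]
  [AddCommGroup C] [Module R C] [AddCommGroup D] [Module R D]
  [AddCommGroup X] [Module R X] [AddCommGroup Y] [Module R Y]

theorem exists_comp_eq_of_ker_le_ker (g : B →ₗ[R] C) (hg : Function.Surjective g)
    (φ : B →ₗ[R] D) (h : LinearMap.ker g ≤ LinearMap.ker φ) : ∃ χ : C →ₗ[R] D, χ ∘ₗ g = φ :=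
  ⟨(LinearMap.ker g).liftQ φ h ∘ₗ (g.quotKerEquivOfSurjective hg).symm.toLinearMap, by
    ext b
    have hb : (g.quotKerEquivOfSurjective hg).symm (g b) = (LinearMap.ker g).mkQ b := by
      rw [LinearEquiv.symm_apply_eq]; rfl
    simp [hb]⟩

theorem exists_comp_eq_of_baer {E : Type*} [AddCommGroup E] [Module R E] (hE : Module.Baer R E)
    (g : B →ₗ[R] C) (φ : B →ₗ[R] E) (h : LinearMap.ker g ≤ LinearMap.ker φ) :
    ∃ χ : C →ₗ[R] E, χ ∘ₗ g = φ := by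
  obtain ⟨θ, hθ⟩ := exists_comp_eq_of_ker_le_ker g.rangeRestrict g.surjective_rangeRestrict φ
    (by rwa [LinearMap.ker_rangeRestrict])
  obtain ⟨χ, hχ⟩ := hE.extension_property _ (LinearMap.range g).injective_subtype θ
  exact ⟨χ, by rw [← hθ, ← hχ]; rfl⟩

/-- A short exact sequence `0 → A → B → C → 0` of modules. -/
structure IsShortExact (f : A →ₗ[R] B) (g : B →ₗ[R] C) : Prop where
  injective : Function.Injective f
  exact : Function.Exact f g
  surjective : Function.Surjective g

theorem isShortExact_subtype_ker {g : B →ₗ[R] C} (hg : Function.Surjective g) :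
    IsShortExact (LinearMap.ker g).subtype g :=
  ⟨Subtype.val_injective, LinearMap.exact_subtype_ker_map g, hg⟩

theorem exists_isShortExact_projective (R : Type u) [Ring R] (A : Type u) [AddCommGroup A]
    [Module R A] : ∃ (K L : ModuleCat.{u} R) (f : K →ₗ[R] L) (g : L →ₗ[R] A),
      Module.Projective R L ∧ IsShortExact f g :=
  ⟨.of R _, .of R (A →₀ R), _, _, inferInstanceAs (Module.Projective R (A →₀ R)),
    isShortExact_subtype_ker (Finsupp.linearCombination_id_surjective R A)⟩

theorem isShortExact_mkQ_range {f : A →ₗ[R] B} (hf : Function.Injective f) :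
    IsShortExact f (LinearMap.range f).mkQ :=
  ⟨hf, LinearMap.exact_map_mkQ_range f, Submodule.mkQ_surjective _⟩

theorem isShortExact_inl_snd : IsShortExact (LinearMap.inl R A B) (LinearMap.snd R A B) :=
  ⟨LinearMap.inl_injective, Function.Exact.inl_snd, LinearMap.snd_surjective⟩

theorem isShortExact_inr_fst : IsShortExact (LinearMap.inr R A B) (LinearMap.fst R A B) :=
  ⟨LinearMap.inr_injective, Function.Exact.inr_fst, LinearMap.fst_surjective⟩

theorem isShortExact_zero [Subsingleton C] (e : A ≃ₗ[R] B) :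
    IsShortExact e.toLinearMap (0 : B →ₗ[R] C) :=
  ⟨e.injective, (LinearMap.exact_zero_iff_surjective _ _).2 e.surjective,
    Function.surjective_to_subsingleton _⟩

namespace IsShortExact

theorem exists_comp_eq {f : A →ₗ[R] B} {g : B →ₗ[R] C} (h : IsShortExact f g)
    (φ : B →ₗ[R] D) (hφ : φ ∘ₗ f = 0) : ∃ χ : C →ₗ[R] D, χ ∘ₗ g = φ :=
  exists_comp_eq_of_ker_le_ker g h.surjective φ <| by
    rw [h.exact.linearMap_ker_eq]
    exact LinearMap.range_le_ker_iff.2 hφ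

theorem exists_eq_comp {f : A →ₗ[R] B} {g : B →ₗ[R] C} (h : IsShortExact f g)
    (φ : D →ₗ[R] B) (hφ : g ∘ₗ φ = 0) : ∃ χ : D →ₗ[R] A, f ∘ₗ χ = φ := by
  have hmem (x : D) : φ x ∈ LinearMap.range f := (h.exact _).1 (LinearMap.congr_fun hφ x)
  refine ⟨(LinearEquiv.ofInjective f h.injective).symm.toLinearMap ∘ₗ φ.codRestrict _ hmem, ?_⟩
  ext x
  exact congrArg Subtype.val ((LinearEquiv.ofInjective f h.injective).apply_symm_apply _)

theorem prodMap_id {f : A →ₗ[R] B} {g : B →ₗ[R] C} (h : IsShortExact f g) :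
    IsShortExact (LinearMap.inl R B X ∘ₗ f) (g.prodMap (LinearMap.id (M := X))) where
  injective := LinearMap.inl_injective.comp h.injective
  exact := by
    rintro ⟨b, x⟩
    constructor
    · intro hbx
      obtain ⟨hb, rfl⟩ : g b = 0 ∧ x = 0 := by simpa using hbx
      obtain ⟨a, rfl⟩ := (h.exact b).1 hb
      exact ⟨a, rfl⟩
    · rintro ⟨a, ha⟩
      simp [← ha, h.exact.apply_apply_eq_zero]
  surjective := h.surjective.prodMap Function.surjective_id

/-- The right square of a morphism of short exact sequences that is the identity on the left is
bicartesian. -/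
theorem exists_isShortExact_prod {f : A →ₗ[R] B} {g : B →ₗ[R] C} (h : IsShortExact f g)
    {j : A →ₗ[R] X} {p : X →ₗ[R] Y} (h' : IsShortExact j p) {k : B →ₗ[R] X} (hk : k ∘ₗ f = j) :
    ∃ q : X × C →ₗ[R] Y, IsShortExact (k.prod g) q := by
  have hkf (a : A) : k (f a) = j a := LinearMap.congr_fun hk a
  obtain ⟨w, hw⟩ := h.exists_comp_eq (p ∘ₗ k) (by
    rw [LinearMap.comp_assoc, hk, h'.exact.linearMap_comp_eq_zero])
  have hwg (b : B) : w (g b) = p (k b) := LinearMap.congr_fun hw b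
  refine ⟨p.coprod (-w), ?_, ?_, fun y ↦ ?_⟩
  · rw [injective_iff_map_eq_zero]
    intro b hb
    obtain ⟨hkb, hgb⟩ : k b = 0 ∧ g b = 0 := by simpa using hb
    obtain ⟨a, rfl⟩ := (h.exact b).1 hgb
    rw [h'.injective ((hkf a).symm.trans (hkb.trans (map_zero j).symm)), map_zero]
  · rintro ⟨x, c⟩
    obtain ⟨b, rfl⟩ := h.surjective c
    simp only [LinearMap.coprod_apply, LinearMap.neg_apply, hwg, ← sub_eq_add_neg, ← map_sub]
    constructor
    · intro hx
      obtain ⟨a, ha⟩ := (h'.exact _).1 hx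
      exact ⟨b + f a, by simp [hkf, ha, h.exact.apply_apply_eq_zero]⟩
    · rintro ⟨b', hb'⟩
      obtain ⟨rfl, hg⟩ : k b' = x ∧ g b' = g b := by simpa using hb'
      rw [map_sub, ← hwg, ← hwg, hg, sub_self]
  · obtain ⟨x, rfl⟩ := h'.surjective y
    exact ⟨(x, 0), by simp⟩

/-- The left square of a morphism of short exact sequences that is the identity on the right is
bicartesian. -/
theorem exists_isShortExact_coprod {f : A →ₗ[R] B} {g : B →ₗ[R] C} (h : IsShortExact f g)
    {i : X →ₗ[R] Y} {π : Y →ₗ[R] C} (h' : IsShortExact i π) {φ : Y →ₗ[R] B} (hφ : g ∘ₗ φ = π) :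
    ∃ s : X →ₗ[R] A × Y, IsShortExact s (f.coprod φ) := by
  have hgφ (y : Y) : g (φ y) = π y := LinearMap.congr_fun hφ y
  obtain ⟨σ, hσ⟩ := h.exists_eq_comp (φ ∘ₗ i) (by
    rw [← LinearMap.comp_assoc, hφ, h'.exact.linearMap_comp_eq_zero])
  have hfσ (x : X) : f (σ x) = φ (i x) := LinearMap.congr_fun hσ x
  refine ⟨(-σ).prod i, ?_, ?_, fun b ↦ ?_⟩
  · intro x y hxy
    exact h'.injective (congrArg Prod.snd hxy)
  · rintro ⟨a, y⟩
    constructor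
    · intro hy
      have hfa : f a = -φ y := eq_neg_of_add_eq_zero_left hy
      obtain ⟨x, rfl⟩ := (h'.exact y).1 (by
        rw [← hgφ, ← neg_eq_zero, ← map_neg, ← hfa, h.exact.apply_apply_eq_zero])
      exact ⟨x, Prod.ext (h.injective (by simp [hfσ, hfa])) rfl⟩
    · rintro ⟨x, hx⟩
      simp [← hx, hfσ]
  · obtain ⟨y, hy⟩ := h'.surjective (g b)
    obtain ⟨a, ha⟩ := (h.exact (b - φ y)).1 (by rw [map_sub, hgφ, hy, sub_self])
    exact ⟨(a, y), by simp [ha]⟩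

theorem exists_isShortExact_coker_comp {f : A →ₗ[R] B} {g : B →ₗ[R] C} (h : IsShortExact f g)
    {i : B →ₗ[R] D} {q : D →ₗ[R] Y} (hi : IsShortExact i q)
    {p : D →ₗ[R] X} (hp : IsShortExact (i ∘ₗ f) p) :
    ∃ (u : C →ₗ[R] X) (v : X →ₗ[R] Y), IsShortExact u v ∧ u ∘ₗ g = p ∘ₗ i := by
  obtain ⟨u, hu⟩ := h.exists_comp_eq (p ∘ₗ i) hp.exact.linearMap_comp_eq_zero
  obtain ⟨v, hv⟩ := hp.exists_comp_eq q (by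
    rw [← LinearMap.comp_assoc, hi.exact.linearMap_comp_eq_zero, LinearMap.zero_comp])
  have hug (b : B) : u (g b) = p (i b) := LinearMap.congr_fun hu b
  have hvp (d : D) : v (p d) = q d := LinearMap.congr_fun hv d
  refine ⟨u, v, ⟨?_, fun x ↦ ?_, ?_⟩, hu⟩
  · rw [injective_iff_map_eq_zero]
    intro c hc
    obtain ⟨b, rfl⟩ := h.surjective c
    obtain ⟨a, ha⟩ := (hp.exact _).1 ((hug b).symm.trans hc)
    rw [← hi.injective ha, h.exact.apply_apply_eq_zero]
  · obtain ⟨d, rfl⟩ := hp.surjective x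
    rw [hvp]
    constructor
    · intro hd
      obtain ⟨b, rfl⟩ := (hi.exact d).1 hd
      exact ⟨g b, hug b⟩
    · rintro ⟨c, hc⟩
      obtain ⟨b, rfl⟩ := h.surjective c
      rw [← hvp, ← hc, hug, hvp, hi.exact.apply_apply_eq_zero]
  · exact .of_comp (g := p) (by rw [← LinearMap.coe_comp, hv]; exact hi.surjective)

theorem exists_isShortExact_ker_comp {f : A →ₗ[R] B} {g : B →ₗ[R] C} (h : IsShortExact f g)
    {i : X →ₗ[R] C} {t : C →ₗ[R] Y} (ht : IsShortExact i t)
    {e : D →ₗ[R] B} (he : IsShortExact e (t ∘ₗ g)) :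
    ∃ (s : A →ₗ[R] D) (v : D →ₗ[R] X), IsShortExact s v := by
  obtain ⟨s, hs⟩ := he.exists_eq_comp f (by
    rw [LinearMap.comp_assoc, h.exact.linearMap_comp_eq_zero, LinearMap.comp_zero])
  obtain ⟨v, hv⟩ := ht.exists_eq_comp (g ∘ₗ e) he.exact.linearMap_comp_eq_zero
  have hes (a : A) : e (s a) = f a := LinearMap.congr_fun hs a
  have hiv (d : D) : i (v d) = g (e d) := LinearMap.congr_fun hv d
  refine ⟨s, v, ?_, fun d ↦ ?_, fun x ↦ ?_⟩
  · exact .of_comp (f := e) (by rw [← LinearMap.coe_comp, hs]; exact h.injective)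
  · rw [← (map_eq_zero_iff i ht.injective), hiv]
    constructor
    · intro hd
      obtain ⟨a, ha⟩ := (h.exact _).1 hd
      exact ⟨a, he.injective ((hes a).trans ha)⟩
    · rintro ⟨a, rfl⟩
      rw [hes, h.exact.apply_apply_eq_zero]
  · obtain ⟨b, hb⟩ := h.surjective (i x)
    obtain ⟨d, rfl⟩ := (he.exact b).1 (by simp [hb, ht.exact.apply_apply_eq_zero])
    exact ⟨d, ht.injective ((hiv d).trans hb)⟩

end IsShortExact

end ShortExact

section CharacterModule

variable {R : Type*} [CommRing R]
variable {A B C : Type*} [AddCommGroup A] [Module R A] [AddCommGroup B] [Module R B]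
  [AddCommGroup C] [Module R C]

theorem characterModule_sum_apply {ι : Type*} (s : Finset ι) (c : ι → CharacterModule A) (a : A) :
    (∑ i ∈ s, c i) a = ∑ i ∈ s, c i a :=
  AddMonoidHom.finsetSum_apply ..

theorem exact_dual {f : A →ₗ[R] B} {g : B →ₗ[R] C} (h : Function.Exact f g) :
    Function.Exact (CharacterModule.dual g) (CharacterModule.dual f) := by
  intro c
  constructor
  · intro hc
    obtain ⟨χ, hχ⟩ := exists_comp_eq_of_baer (R := ℤ) (Module.Baer.of_divisible (AddCircle (1 : ℚ)))
      g.toAddMonoidHom.toIntLinearMap (AddMonoidHom.toIntLinearMap c) (by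
        intro b hb
        obtain ⟨a, rfl⟩ := (h b).1 hb
        exact DFunLike.congr_fun hc a)
    exact ⟨χ.toAddMonoidHom, DFunLike.ext _ _ fun b ↦ LinearMap.congr_fun hχ b⟩
  · rintro ⟨d, rfl⟩
    ext a
    exact (congrArg d (h.apply_apply_eq_zero a)).trans (map_zero d)

theorem IsShortExact.dual {f : A →ₗ[R] B} {g : B →ₗ[R] C} (h : IsShortExact f g) :
    IsShortExact (CharacterModule.dual g) (CharacterModule.dual f) :=
  ⟨CharacterModule.dual_injective_of_surjective g h.surjective, exact_dual h.exact,
    CharacterModule.dual_surjective_of_injective f h.injective⟩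

variable (R A) in
/-- The evaluation map `A → A**` into the double character module. -/
noncomputable def doubleDualEval : A →ₗ[R] CharacterModule (CharacterModule A) where
  toFun a := AddMonoidHom.eval a
  map_add' a b := by ext c; exact map_add c a b
  map_smul' _ _ := rfl

theorem doubleDualEval_injective : Function.Injective (doubleDualEval R A) := by
  rw [injective_iff_map_eq_zero]
  exact fun a ha ↦ CharacterModule.eq_zero_of_character_apply fun c ↦ DFunLike.congr_fun ha c

theorem dual_doubleDualEval_comp : CharacterModule.dual (doubleDualEval R A) ∘ₗ
    doubleDualEval R (CharacterModule A) = LinearMap.id := rfl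

end CharacterModule

section Flat

theorem injective_of_comp_eq_id {R : Type u} [Ring R] {A B : Type u} [AddCommGroup A] [Module R A]
    [AddCommGroup B] [Module R B] [Module.Injective R B] (i : A →ₗ[R] B) (r : B →ₗ[R] A)
    (h : r ∘ₗ i = LinearMap.id) : Module.Injective R A where
  out X Y _ _ _ _ f hf g := by
    obtain ⟨k, hk⟩ := Module.Injective.out (Q := B) f hf (i ∘ₗ g)
    exact ⟨r ∘ₗ k, fun x ↦ by simpa [hk] using LinearMap.congr_fun h (g x)⟩

variable {R : Type u} [CommRing R]
variable {A B C : Type u} [AddCommGroup A] [Module R A] [AddCommGroup B] [Module R B]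
  [AddCommGroup C] [Module R C]

namespace IsShortExact

variable {f : A →ₗ[R] B} {g : B →ₗ[R] C}

theorem flat_right (h : IsShortExact f g) [Module.Flat R B]
    (s : CharacterModule A →ₗ[R] CharacterModule B)
    (hs : CharacterModule.dual f ∘ₗ s = LinearMap.id) : Module.Flat R C := by
  have : Module.Injective R (CharacterModule B) :=
    Module.Flat.iff_characterModule_injective.1 ‹_›
  obtain ⟨-, r, hr⟩ := (h.dual.exact.split_tfae'.out 0 1 rfl rfl).1 ⟨h.dual.injective, s, hs⟩
  exact Module.Flat.iff_characterModule_injective.2 (injective_of_comp_eq_id _ r hr)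

theorem flat_left (h : IsShortExact f g) [Module.Flat R B] [Module.Flat R C] :
    Module.Flat R A := by
  have : Module.Injective R (CharacterModule B) :=
    Module.Flat.iff_characterModule_injective.1 ‹_›
  have : Module.Injective R (CharacterModule C) :=
    Module.Flat.iff_characterModule_injective.1 ‹_›
  obtain ⟨r, hr⟩ := Module.Injective.extension_property R _ _ _ _ h.dual.injective LinearMap.id
  obtain ⟨-, s, hs⟩ := (h.dual.exact.split_tfae'.out 1 0 rfl rfl).1 ⟨h.dual.surjective, r, hr⟩
  exact Module.Flat.iff_characterModule_injective.2 (injective_of_comp_eq_id s _ hs)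

end IsShortExact

theorem flat_prod [Module.Flat R A] [Module.Flat R B] : Module.Flat R (A × B) := by
  have : Module.Injective R (CharacterModule A) :=
    Module.Flat.iff_characterModule_injective.1 ‹_›
  have : Module.Injective R (CharacterModule B) :=
    Module.Flat.iff_characterModule_injective.1 ‹_›
  refine Module.Flat.iff_characterModule_injective.2 ⟨fun X Y _ _ _ _ f hf φ ↦ ?_⟩
  obtain ⟨ψ, hψ⟩ := Module.Injective.out f hf (CharacterModule.dual (LinearMap.inl R A B) ∘ₗ φ)
  obtain ⟨χ, hχ⟩ := Module.Injective.out f hf (CharacterModule.dual (LinearMap.inr R A B) ∘ₗ φ)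
  refine ⟨CharacterModule.dual (LinearMap.fst R A B) ∘ₗ ψ +
    CharacterModule.dual (LinearMap.snd R A B) ∘ₗ χ, fun x ↦ ?_⟩
  ext ⟨a, b⟩
  change ψ (f x) a + χ (f x) b = φ x (a, b)
  rw [hψ, hχ]
  change φ x (a, 0) + φ x (0, b) = φ x (a, b)
  simp [← map_add]

end Flat

/-- A coherent ring: every finitely generated ideal is finitely presented. Noetherian rings are
coherent, and coherence is what makes character modules of injective modules flat. -/
class IsCoherentRing (R : Type*) [CommRing R] : Prop where
  finitePresentation_of_fg (I : Ideal R) : I.FG → Module.FinitePresentation R I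

instance (R : Type*) [CommRing R] [IsNoetherianRing R] : IsCoherentRing R :=
  ⟨fun I _ ↦ Module.finitePresentation_of_finite R I⟩

section Coherent

variable {R : Type u} [CommRing R]

theorem exists_exact_linearCombination [IsCoherentRing R] {ι : Type*} [Fintype ι] (f : ι → R) :
    ∃ (k : ℕ) (a : Fin k → ι → R),
      Function.Exact (Fintype.linearCombination R a) (Fintype.linearCombination R f) := by
  have hfg : (LinearMap.range (Fintype.linearCombination R f)).FG := by
    rw [LinearMap.range_eq_map]; exact Module.Finite.fg_top.map _
  have := IsCoherentRing.finitePresentation_of_fg _ hfg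
  have hker := Module.FinitePresentation.fg_ker _
    (Fintype.linearCombination R f).surjective_rangeRestrict
  rw [LinearMap.ker_rangeRestrict] at hker
  obtain ⟨k, a, ha⟩ := Submodule.fg_iff_exists_fin_generating_family.1 hker
  exact ⟨k, a, LinearMap.exact_iff.2 (by rw [← ha, Fintype.range_linearCombination])⟩

theorem exact_pi_of_injective {E : Type u} [AddCommGroup E] [Module R E] [Module.Injective R E]
    {ι κ : Type*} [Fintype ι] [Fintype κ] {f : ι → R} {a : κ → ι → R}
    (h : Function.Exact (Fintype.linearCombination R a) (Fintype.linearCombination R f)) :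
    Function.Exact (LinearMap.pi fun i ↦ f i • LinearMap.id : E →ₗ[R] ι → E)
      (LinearMap.pi fun j ↦ ∑ i, a j i • LinearMap.proj i : (ι → E) →ₗ[R] κ → E) := by
  classical
  have hfa (j : κ) : ∑ i, a j i * f i = 0 := by
    simpa [Fintype.linearCombination_apply] using h.apply_apply_eq_zero (Pi.single j 1)
  intro y
  constructor
  · intro hy
    have hay (j : κ) : ∑ i, a j i • y i = 0 := by simpa using congrFun hy j
    obtain ⟨θ, hθ⟩ := exists_comp_eq_of_baer (Module.Baer.of_injective ‹Module.Injective R E›)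
      (Fintype.linearCombination R f) (Fintype.linearCombination R y) (by
        rw [h.linearMap_ker_eq, LinearMap.range_le_ker_iff]
        ext j
        simpa [Fintype.linearCombination_apply] using hay j)
    refine ⟨θ 1, funext fun i ↦ ?_⟩
    simpa [← map_smul] using LinearMap.congr_fun hθ (Pi.single i 1)
  · rintro ⟨e, rfl⟩
    ext j
    simp [smul_smul, ← Finset.sum_smul, hfa]

theorem flat_characterModule [IsCoherentRing R] {E : Type u} [AddCommGroup E] [Module R E]
    [Module.Injective R E] : Module.Flat R (CharacterModule E) := by
  refine Module.Flat.of_forall_isTrivialRelation fun {l f x} hx ↦ ?_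
  obtain ⟨k, a, hfa⟩ := exists_exact_linearCombination f
  let ξ : CharacterModule (Fin l → E) :=
    ∑ i, CharacterModule.dual (LinearMap.proj i : (Fin l → E) →ₗ[R] E) (x i)
  have hξ (y : Fin l → E) : ξ y = ∑ i, x i (y i) := characterModule_sum_apply ..
  obtain ⟨ω, hω⟩ := (exact_dual (exact_pi_of_injective (E := E) hfa) ξ).1 (by
    ext e
    calc ξ (fun i ↦ f i • e) = ∑ i, x i (f i • e) := hξ _
      _ = (∑ i, f i • x i) e := (characterModule_sum_apply _ (fun i ↦ f i • x i) e).symm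
      _ = 0 := by rw [hx]; rfl)
  refine ⟨k, fun i j ↦ a j i, fun j ↦ CharacterModule.dual (LinearMap.single R (fun _ ↦ E) j) ω,
    fun i ↦ ?_, fun j ↦ ?_⟩
  · ext z
    have hz : (LinearMap.pi fun j ↦ ∑ i, a j i • LinearMap.proj i : (Fin l → E) →ₗ[R] Fin k → E)
        (Pi.single i z) = ∑ j, Pi.single j (a j i • z) := by
      rw [Finset.univ_sum_single]
      ext j
      simp [Pi.single_apply]
    calc x i z = ξ (Pi.single i z) := by
          rw [hξ, Finset.sum_eq_single_of_mem i (Finset.mem_univ i)] <;> simp +contextual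
      _ = ω (∑ j, Pi.single j (a j i • z)) := by rw [← hω, ← hz]; rfl
      _ = ∑ j, ω (Pi.single j (a j i • z)) := map_sum ..
      _ = _ := (characterModule_sum_apply _ (fun j ↦ a j i •
        CharacterModule.dual (LinearMap.single R (fun _ ↦ E) j) ω) z).symm
  · have := hfa.apply_apply_eq_zero (Pi.single j 1)
    simpa [Fintype.linearCombination_apply, mul_comm] using this

end Coherent

section Purity

variable {R : Type u} [CommRing R]
variable {A B C D X Y : Type u} [AddCommGroup A] [Module R A] [AddCommGroup B] [Module R B]
  [AddCommGroup C] [Module R C] [AddCommGroup D] [Module R D]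
  [AddCommGroup X] [Module R X] [AddCommGroup Y] [Module R Y]

/-- A linear map is pure relative to injectives if it stays injective after tensoring with any
injective module. This is the part of purity that the definition of Gorenstein flatness sees. -/
def IsInjPure (f : A →ₗ[R] B) : Prop :=
  ∀ (E : Type u) [AddCommGroup E] [Module R E], Module.Injective R E →
    Function.Injective (f.lTensor E)

theorem isInjPure_iff_extension {f : A →ₗ[R] B} :
    IsInjPure f ↔ ∀ (E : Type u) [AddCommGroup E] [Module R E], Module.Injective R E →
      ∀ φ : A →ₗ[R] CharacterModule E, ∃ ψ : B →ₗ[R] CharacterModule E, ψ ∘ₗ f = φ := by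
  refine forall_congr' fun E ↦ forall₃_congr fun _ _ _ ↦ ?_
  rw [LinearMap.lTensor_inj_iff_rTensor_inj, rTensor_injective_iff_lcomp_surjective]
  rfl

namespace IsInjPure

theorem exists_extension {f : A →ₗ[R] B} (hf : IsInjPure f) {E : Type u} [AddCommGroup E]
    [Module R E] [Module.Injective R E] (φ : A →ₗ[R] CharacterModule E) :
    ∃ ψ : B →ₗ[R] CharacterModule E, ψ ∘ₗ f = φ :=
  isInjPure_iff_extension.1 hf E ‹_› φ

theorem comp {g : B →ₗ[R] C} (hg : IsInjPure g) {f : A →ₗ[R] B} (hf : IsInjPure f) :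
    IsInjPure (g ∘ₗ f) := fun E _ _ hE ↦ by
  rw [LinearMap.lTensor_comp]
  exact (hg E hE).comp (hf E hE)

theorem of_comp {g : B →ₗ[R] C} {f : A →ₗ[R] B} (h : IsInjPure (g ∘ₗ f)) : IsInjPure f :=
  fun E _ _ hE ↦ .of_comp (f := g.lTensor E) (by
    rw [← LinearMap.coe_comp, ← LinearMap.lTensor_comp]; exact h E hE)

theorem of_comp_eq_id {f : A →ₗ[R] B} {r : B →ₗ[R] A} (h : r ∘ₗ f = LinearMap.id) :
    IsInjPure f :=
  .of_comp (g := r) (by rw [h]; intro E _ _ _; rw [LinearMap.lTensor_id]; exact fun _ _ ↦ id)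

end IsInjPure

theorem IsShortExact.isInjPure_of_flat {f : A →ₗ[R] B} {g : B →ₗ[R] C} (h : IsShortExact f g)
    [Module.Flat R C] : IsInjPure f := fun E _ _ _ ↦
  LinearMap.lTensor_injective_of_exact_of_flat g h.surjective f h.injective h.exact E

theorem isInjPure_doubleDualEval : IsInjPure (doubleDualEval R A) :=
  isInjPure_iff_extension.2 fun E _ _ _ φ ↦
    ⟨CharacterModule.dual (doubleDualEval R E) ∘ₗ CharacterModule.dual (CharacterModule.dual φ),
      rfl⟩

/-- A short exact sequence that stays exact after tensoring with any injective module. -/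
structure IsPureShortExact (f : A →ₗ[R] B) (g : B →ₗ[R] C) : Prop extends IsShortExact f g where
  isInjPure : IsInjPure f

namespace IsPureShortExact

theorem id_prodMap {f : A →ₗ[R] B} {g : B →ₗ[R] C} (h : IsPureShortExact f g) :
    IsPureShortExact (LinearMap.id.prodMap f : X × A →ₗ[R] X × B)
      (g ∘ₗ LinearMap.snd R X B) where
  injective := Function.injective_id.prodMap h.injective
  exact := by
    rintro ⟨x, b⟩
    refine (h.exact b).trans ⟨?_, ?_⟩
    · rintro ⟨a, rfl⟩
      exact ⟨(x, a), rfl⟩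
    · rintro ⟨⟨y, a⟩, hya⟩
      exact ⟨a, congrArg Prod.snd hya⟩
  surjective := h.surjective.comp LinearMap.snd_surjective
  isInjPure := isInjPure_iff_extension.2 fun E _ _ _ φ ↦ by
    obtain ⟨ψ, hψ⟩ := h.isInjPure.exists_extension (φ ∘ₗ LinearMap.inr R X A)
    refine ⟨(φ ∘ₗ LinearMap.inl R X A).coprod ψ, LinearMap.ext fun ⟨x, a⟩ ↦ ?_⟩
    have hψa : ψ (f a) = φ (0, a) := LinearMap.congr_fun hψ a
    simp [hψa, ← map_add]

theorem exists_isPureShortExact_prod {f : A →ₗ[R] B} {g : B →ₗ[R] C} (h : IsShortExact f g)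
    {j : A →ₗ[R] X} {p : X →ₗ[R] Y} (h' : IsPureShortExact j p) {k : B →ₗ[R] X}
    (hk : k ∘ₗ f = j) : ∃ q : X × C →ₗ[R] Y, IsPureShortExact (k.prod g) q := by
  obtain ⟨q, hq⟩ := h.exists_isShortExact_prod h'.toIsShortExact hk
  refine ⟨q, hq, isInjPure_iff_extension.2 fun E _ _ _ φ ↦ ?_⟩
  obtain ⟨ψ, hψ⟩ := h'.isInjPure.exists_extension (φ ∘ₗ f)
  obtain ⟨χ, hχ⟩ := h.exists_comp_eq (φ - ψ ∘ₗ k) (by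
    rw [LinearMap.sub_comp, LinearMap.comp_assoc, hk, hψ, sub_self])
  exact ⟨ψ.coprod χ, by rw [LinearMap.coprod_comp_prod, hχ, add_sub_cancel]⟩

theorem exists_isPureShortExact_coker_comp {f : A →ₗ[R] B} {g : B →ₗ[R] C}
    (h : IsShortExact f g) {i : B →ₗ[R] D} {q : D →ₗ[R] Y} (hi : IsPureShortExact i q)
    {p : D →ₗ[R] X} (hp : IsShortExact (i ∘ₗ f) p) :
    ∃ (u : C →ₗ[R] X) (v : X →ₗ[R] Y), IsPureShortExact u v := by
  obtain ⟨u, v, huv, hu⟩ := h.exists_isShortExact_coker_comp hi.toIsShortExact hp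
  refine ⟨u, v, huv, isInjPure_iff_extension.2 fun E _ _ _ φ ↦ ?_⟩
  obtain ⟨ψ, hψ⟩ := hi.isInjPure.exists_extension (φ ∘ₗ g)
  obtain ⟨χ, hχ⟩ := hp.exists_comp_eq ψ (by
    rw [← LinearMap.comp_assoc, hψ, LinearMap.comp_assoc, h.exact.linearMap_comp_eq_zero,
      LinearMap.comp_zero])
  refine ⟨χ, (LinearMap.cancel_right h.surjective).1 ?_⟩
  rw [LinearMap.comp_assoc, hu, ← LinearMap.comp_assoc, hχ, hψ]

end IsPureShortExact

end Purity

section PureFlatCoresolution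

variable (R : Type u) [CommRing R]

/-- `FlatStep R A C`: there is a pure short exact sequence `0 → A → F → C → 0` with `F` flat, that
is, `C` is a cosyzygy of `A` in a pure flat coresolution. -/
def FlatStep (A C : Type u) [AddCommGroup A] [Module R A] [AddCommGroup C] [Module R C] : Prop :=
  ∃ (F : ModuleCat.{u} R) (f : A →ₗ[R] F) (g : F →ₗ[R] C), Module.Flat R F ∧ IsPureShortExact f g

/-- A module has a pure flat coresolution if it starts an infinite exact sequence
`0 → A → F₀ → F₁ → ⋯` with `Fᵢ` flat that stays exact after tensoring with injectives. It is encoded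
coinductively, as membership in some class of modules in which every member has a cosyzygy. -/
def HasPureFlatCoresolution (A : Type u) [AddCommGroup A] [Module R A] : Prop :=
  ∃ P : ModuleCat.{u} R → Prop, P (.of R A) ∧ ∀ X, P X → ∃ Y, P Y ∧ FlatStep R X Y

/-- Injectivity relative to the maps that are pure relative to injectives. -/
def IsRelInjective (F : Type u) [AddCommGroup F] [Module R F] : Prop :=
  ∀ ⦃A B : Type u⦄ [AddCommGroup A] [Module R A] [AddCommGroup B] [Module R B] (f : A →ₗ[R] B),
    IsInjPure f → ∀ φ : A →ₗ[R] F, ∃ ψ : B →ₗ[R] F, ψ ∘ₗ f = φ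

/-- The closure under pure extensions of the class of modules with a pure flat coresolution; it
turns out not to be larger. -/
inductive IsIteratedPureExtension : ModuleCat.{u} R → Prop
  | of_coresolution (A : ModuleCat.{u} R) :
      HasPureFlatCoresolution R A → IsIteratedPureExtension A
  | extension (A B C : ModuleCat.{u} R) (f : A →ₗ[R] B) (g : B →ₗ[R] C) :
      IsPureShortExact f g → IsIteratedPureExtension A → IsIteratedPureExtension C →
        IsIteratedPureExtension B

variable {R}
variable {A B C D : Type u} [AddCommGroup A] [Module R A] [AddCommGroup B] [Module R B]
  [AddCommGroup C] [Module R C] [AddCommGroup D] [Module R D]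

theorem isRelInjective_characterModule [Module.Injective R A] :
    IsRelInjective R (CharacterModule A) :=
  fun _ _ _ _ _ _ _ hf φ ↦ hf.exists_extension φ

theorem IsRelInjective.prod (hA : IsRelInjective R A) (hB : IsRelInjective R B) :
    IsRelInjective R (A × B) := by
  intro X Y _ _ _ _ f hf φ
  obtain ⟨ψ, hψ⟩ := hA f hf (LinearMap.fst R A B ∘ₗ φ)
  obtain ⟨χ, hχ⟩ := hB f hf (LinearMap.snd R A B ∘ₗ φ)
  exact ⟨ψ.prod χ, LinearMap.ext fun x ↦
    Prod.ext (LinearMap.congr_fun hψ x) (LinearMap.congr_fun hχ x)⟩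

theorem HasPureFlatCoresolution.exists_flatStep (h : HasPureFlatCoresolution R A) :
    ∃ X : ModuleCat.{u} R, HasPureFlatCoresolution R X ∧ FlatStep R A X := by
  obtain ⟨P, hA, hP⟩ := h
  obtain ⟨X, hX, hAX⟩ := hP _ hA
  exact ⟨X, ⟨P, hX, hP⟩, hAX⟩

theorem HasPureFlatCoresolution.of_flatStep (hC : HasPureFlatCoresolution R C)
    (h : FlatStep R A C) : HasPureFlatCoresolution R A := by
  refine ⟨fun X ↦ ∃ Y : ModuleCat.{u} R, HasPureFlatCoresolution R Y ∧ FlatStep R X Y,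
    ⟨.of R C, hC, h⟩, ?_⟩
  rintro X ⟨Y, hY, hXY⟩
  exact ⟨Y, hY.exists_flatStep, hXY⟩

theorem hasPureFlatCoresolution_of_flat [Module.Flat R A] : HasPureFlatCoresolution R A := by
  refine ⟨fun X ↦ Module.Flat R X, ‹_›, fun X hX ↦ ⟨.of R PUnit.{u + 1}, ?_, X,
    LinearMap.id, 0, hX, isShortExact_zero (.refl R X), .of_comp_eq_id (r := LinearMap.id) rfl⟩⟩
  change Module.Flat R PUnit.{u + 1}
  infer_instance

/-- The double character module of a flat module is flat and relatively injective, and the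
evaluation map into it is pure with flat cokernel; so every coresolution may be rerouted through
relatively injective flat modules. -/
theorem IsPureShortExact.exists_isRelInjective [IsCoherentRing R] {F : Type u} [AddCommGroup F]
    [Module R F] [Module.Flat R F] {f : A →ₗ[R] F} {g : F →ₗ[R] B} (h : IsPureShortExact f g) :
    ∃ (G X Y : ModuleCat.{u} R) (f' : A →ₗ[R] G) (g' : G →ₗ[R] X) (u : B →ₗ[R] X) (v : X →ₗ[R] Y),
      Module.Flat R G ∧ IsRelInjective R G ∧ IsPureShortExact f' g' ∧ Module.Flat R Y ∧
        IsPureShortExact u v := by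
  have : Module.Injective R (CharacterModule F) := Module.Flat.iff_characterModule_injective.1 ‹_›
  have : Module.Flat R (CharacterModule (CharacterModule F)) := flat_characterModule
  have hev := isShortExact_mkQ_range (doubleDualEval_injective (R := R) (A := F))
  have hcomp := isShortExact_mkQ_range (f := doubleDualEval R F ∘ₗ f)
    ((doubleDualEval_injective (R := R)).comp h.injective)
  obtain ⟨u, v, huv⟩ := IsPureShortExact.exists_isPureShortExact_coker_comp h.toIsShortExact
    ⟨hev, isInjPure_doubleDualEval⟩ hcomp
  exact ⟨.of R (CharacterModule (CharacterModule F)),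
    .of R (_ ⧸ LinearMap.range (doubleDualEval R F ∘ₗ f)),
    .of R (_ ⧸ LinearMap.range (doubleDualEval R F)), _, _, u, v, ‹_›,
    isRelInjective_characterModule,
    ⟨hcomp, isInjPure_doubleDualEval.comp h.isInjPure⟩,
    hev.flat_right _ dual_doubleDualEval_comp, huv⟩

theorem IsPureShortExact.horseshoe {FA FC A' C' : Type u} [AddCommGroup FA] [Module R FA]
    [AddCommGroup FC] [Module R FC] [AddCommGroup A'] [Module R A'] [AddCommGroup C'] [Module R C']
    {f : A →ₗ[R] B} {g : B →ₗ[R] C} (h : IsPureShortExact f g)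
    {jA : A →ₗ[R] FA} {pA : FA →ₗ[R] A'} (hA : IsPureShortExact jA pA) (hFA : IsRelInjective R FA)
    {jC : C →ₗ[R] FC} {pC : FC →ₗ[R] C'} (hC : IsPureShortExact jC pC) :
    ∃ (B' : ModuleCat.{u} R) (j : B →ₗ[R] FA × FC) (p : FA × FC →ₗ[R] B') (u : A' →ₗ[R] B')
      (v : B' →ₗ[R] C'), IsPureShortExact j p ∧ IsPureShortExact u v := by
  obtain ⟨e, he⟩ := hFA f h.isInjPure jA
  obtain ⟨q, hq⟩ := exists_isPureShortExact_prod h.toIsShortExact hA he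
  have hi : IsPureShortExact (LinearMap.id.prodMap jC : FA × C →ₗ[R] FA × FC) _ := hC.id_prodMap
  have hj := isShortExact_mkQ_range (f := LinearMap.id.prodMap jC ∘ₗ e.prod g)
    (hi.injective.comp hq.injective)
  obtain ⟨u, v, huv⟩ := exists_isPureShortExact_coker_comp hq.toIsShortExact hi hj
  exact ⟨.of R _, _, _, u, v, ⟨hj, hi.isInjPure.comp hq.isInjPure⟩, huv⟩

theorem IsIteratedPureExtension.exists_isRelInjective [IsCoherentRing R] {B : ModuleCat.{u} R}
    (h : IsIteratedPureExtension R B) :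
    ∃ (B' F : ModuleCat.{u} R) (f : B →ₗ[R] F) (g : F →ₗ[R] B'), IsIteratedPureExtension R B' ∧
      Module.Flat R F ∧ IsRelInjective R F ∧ IsPureShortExact f g := by
  induction h with
  | of_coresolution A hA =>
    obtain ⟨A', hA', F, f, g, hF, hfg⟩ := hA.exists_flatStep
    obtain ⟨G, X, Y, f', g', u, v, hG, hGrel, hfg', hY, huv⟩ := hfg.exists_isRelInjective
    exact ⟨X, G, f', g', .extension A' X Y u v huv (.of_coresolution A' hA')
      (.of_coresolution Y hasPureFlatCoresolution_of_flat), hG, hGrel, hfg'⟩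
  | extension A B C f g hfg _ _ ihA ihC =>
    obtain ⟨A', FA, jA, pA, hA', hFA, hFArel, hjA⟩ := ihA
    obtain ⟨C', FC, jC, pC, hC', hFC, hFCrel, hjC⟩ := ihC
    obtain ⟨B', j, p, u, v, hjp, huv⟩ := hfg.horseshoe hjA hFArel hjC
    exact ⟨B', .of R (FA × FC), j, p, .extension A' B' C' u v huv hA' hC', flat_prod,
      hFArel.prod hFCrel, hjp⟩

theorem IsIteratedPureExtension.hasPureFlatCoresolution [IsCoherentRing R] {B : ModuleCat.{u} R}
    (h : IsIteratedPureExtension R B) : HasPureFlatCoresolution R B := by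
  refine ⟨IsIteratedPureExtension R, h, fun X hX ↦ ?_⟩
  obtain ⟨Y, F, f, g, hY, hF, -, hfg⟩ := hX.exists_isRelInjective
  exact ⟨Y, hY, F, f, g, hF, hfg⟩

namespace HasPureFlatCoresolution

variable {f : A →ₗ[R] B} {g : B →ₗ[R] C}

theorem exists_isRelInjective [IsCoherentRing R] (h : HasPureFlatCoresolution R A) :
    ∃ (A' F : ModuleCat.{u} R) (f : A →ₗ[R] F) (g : F →ₗ[R] A'), HasPureFlatCoresolution R A' ∧
      Module.Flat R F ∧ IsRelInjective R F ∧ IsPureShortExact f g := by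
  obtain ⟨A', F, f, g, hA', hF⟩ :=
    (IsIteratedPureExtension.of_coresolution (.of R A) h).exists_isRelInjective
  exact ⟨A', F, f, g, hA'.hasPureFlatCoresolution, hF⟩

theorem mid [IsCoherentRing R] (h : IsPureShortExact f g) (hA : HasPureFlatCoresolution R A)
    (hC : HasPureFlatCoresolution R C) : HasPureFlatCoresolution R B :=
  (IsIteratedPureExtension.extension (.of R A) (.of R B) (.of R C) f g h (.of_coresolution _ hA)
    (.of_coresolution _ hC)).hasPureFlatCoresolution

theorem left [IsCoherentRing R] (h : IsPureShortExact f g) (hB : HasPureFlatCoresolution R B)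
    (hC : HasPureFlatCoresolution R C) : HasPureFlatCoresolution R A := by
  obtain ⟨B', hB', F, j, p, hF, hj⟩ := hB.exists_flatStep
  have hX := isShortExact_mkQ_range (f := j ∘ₗ f) (hj.injective.comp h.injective)
  obtain ⟨u, v, huv⟩ :=
    IsPureShortExact.exists_isPureShortExact_coker_comp h.toIsShortExact hj hX
  exact (mid huv hC hB').of_flatStep ⟨F, _, _, hF, hX, hj.isInjPure.comp h.isInjPure⟩

theorem of_prod [IsCoherentRing R] (hA : HasPureFlatCoresolution R A)
    (h : HasPureFlatCoresolution R (A × C)) : HasPureFlatCoresolution R C :=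
  left ⟨isShortExact_inr_fst, .of_comp_eq_id (r := LinearMap.snd R A C) (LinearMap.snd_comp_inr ..)⟩
    h hA

theorem right_of_flat [IsCoherentRing R] (h : IsPureShortExact f g)
    (hA : HasPureFlatCoresolution R A) [Module.Flat R B] : HasPureFlatCoresolution R C := by
  obtain ⟨A', F, j, p, hA', hF, hFrel, hj⟩ := hA.exists_isRelInjective
  obtain ⟨k, hk⟩ := hFrel f h.isInjPure j
  obtain ⟨q, hq⟩ := IsPureShortExact.exists_isPureShortExact_prod h.toIsShortExact hj hk
  exact of_prod hasPureFlatCoresolution_of_flat (mid hq hasPureFlatCoresolution_of_flat hA')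

end HasPureFlatCoresolution

end PureFlatCoresolution

open CategoryTheory.Abelian

section Ext

variable {R : Type u} [Ring R]
variable {A B C N : Type u} [AddCommGroup A] [Module R A] [AddCommGroup B] [Module R B]
  [AddCommGroup C] [Module R C] [AddCommGroup N] [Module R N]
variable {f : A →ₗ[R] B} {g : B →ₗ[R] C}

namespace IsShortExact

theorem shortExact (h : IsShortExact f g) :
    (ShortComplex.mk (ModuleCat.ofHom f) (ModuleCat.ofHom g) (by
      rw [← ModuleCat.ofHom_comp, h.exact.linearMap_comp_eq_zero]; rfl)).ShortExact where
  exact := (ShortComplex.ShortExact.moduleCat_exact_iff_function_exact _).2 h.exact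
  mono_f := (ModuleCat.mono_iff_injective _).2 h.injective
  epi_g := (ModuleCat.epi_iff_surjective _).2 h.surjective

theorem exists_comp_eq_of_subsingleton_ext (h : IsShortExact f g)
    [hC : Subsingleton (Ext (ModuleCat.of R C) (ModuleCat.of R N) 1)] (φ : A →ₗ[R] N) :
    ∃ ψ : B →ₗ[R] N, ψ ∘ₗ f = φ := by
  obtain ⟨y, hy⟩ := Ext.contravariant_sequence_exact₁ h.shortExact (ModuleCat.of R N)
    (Ext.mk₀ (ModuleCat.ofHom φ)) (n₁ := 1) rfl (hC.elim _ _)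
  obtain ⟨ψ, rfl⟩ := (Ext.mk₀_bijective _ _).2 y
  rw [Ext.mk₀_comp_mk₀] at hy
  exact ⟨ψ.hom, congrArg ModuleCat.Hom.hom ((Ext.mk₀_bijective _ _).1 hy)⟩

theorem subsingleton_ext_left (h : IsShortExact f g) (n : ℕ)
    [hB : Subsingleton (Ext (ModuleCat.of R B) (ModuleCat.of R N) n)]
    [hC : Subsingleton (Ext (ModuleCat.of R C) (ModuleCat.of R N) (n + 1))] :
    Subsingleton (Ext (ModuleCat.of R A) (ModuleCat.of R N) n) := by
  refine subsingleton_of_forall_eq 0 fun x ↦ ?_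
  obtain ⟨y, rfl⟩ := Ext.contravariant_sequence_exact₁ h.shortExact (ModuleCat.of R N) x
    (n₁ := n + 1) (add_comm 1 n) (hC.elim _ _)
  rw [hB.elim y 0, Ext.comp_zero]

theorem subsingleton_ext_mid (h : IsShortExact f g) (n : ℕ)
    [hA : Subsingleton (Ext (ModuleCat.of R A) (ModuleCat.of R N) n)]
    [hC : Subsingleton (Ext (ModuleCat.of R C) (ModuleCat.of R N) n)] :
    Subsingleton (Ext (ModuleCat.of R B) (ModuleCat.of R N) n) := by
  refine subsingleton_of_forall_eq 0 fun x ↦ ?_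
  obtain ⟨y, rfl⟩ := Ext.contravariant_sequence_exact₂ h.shortExact (ModuleCat.of R N) x
    (hA.elim _ _)
  rw [hC.elim y 0, Ext.comp_zero]

theorem subsingleton_ext_right (h : IsShortExact f g) (n : ℕ)
    [hA : Subsingleton (Ext (ModuleCat.of R A) (ModuleCat.of R N) n)]
    [hB : Subsingleton (Ext (ModuleCat.of R B) (ModuleCat.of R N) (n + 1))] :
    Subsingleton (Ext (ModuleCat.of R C) (ModuleCat.of R N) (n + 1)) := by
  refine subsingleton_of_forall_eq 0 fun x ↦ ?_
  obtain ⟨y, rfl⟩ := Ext.contravariant_sequence_exact₃ h.shortExact (ModuleCat.of R N) x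
    (hB.elim _ _) (n₀ := n) (add_comm 1 n)
  rw [hA.elim y 0, Ext.comp_zero]

theorem subsingleton_ext_one_right (h : IsShortExact f g)
    (hext : ∀ φ : A →ₗ[R] N, ∃ ψ : B →ₗ[R] N, ψ ∘ₗ f = φ)
    [hB : Subsingleton (Ext (ModuleCat.of R B) (ModuleCat.of R N) 1)] :
    Subsingleton (Ext (ModuleCat.of R C) (ModuleCat.of R N) 1) := by
  refine subsingleton_of_forall_eq 0 fun x ↦ ?_
  obtain ⟨y, rfl⟩ := Ext.contravariant_sequence_exact₃ h.shortExact (ModuleCat.of R N) x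
    (hB.elim _ _) (n₀ := 0) rfl
  obtain ⟨φ, rfl⟩ := (Ext.mk₀_bijective _ _).2 y
  obtain ⟨ψ, hψ⟩ := hext φ.hom
  obtain rfl : ModuleCat.ofHom f ≫ ModuleCat.ofHom ψ = φ := ModuleCat.hom_ext hψ
  rw [← Ext.mk₀_comp_mk₀, ← Ext.comp_assoc_of_second_deg_zero,
    ShortComplex.ShortExact.extClass_comp, Ext.zero_comp]

end IsShortExact

end Ext

section TorVanishing

variable (R : Type u) [CommRing R]

/-- Vanishing of `Tor_{n+1}(E, A)` for every injective module `E`, phrased through the duality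
`Tor_n(E, A)* ≅ Ext^n(A, E*)`. -/
def TorInjVanishing (A : Type u) [AddCommGroup A] [Module R A] : Prop :=
  ∀ (E : Type u) [AddCommGroup E] [Module R E], Module.Injective R E → ∀ n : ℕ,
    Subsingleton (Ext (ModuleCat.of R A) (ModuleCat.of R (CharacterModule E)) (n + 1))

variable {R}
variable {A B C : Type u} [AddCommGroup A] [Module R A] [AddCommGroup B] [Module R B]
  [AddCommGroup C] [Module R C]
variable {f : A →ₗ[R] B} {g : B →ₗ[R] C}

namespace TorInjVanishing

theorem isInjPure (h : IsShortExact f g) (hC : TorInjVanishing R C) : IsInjPure f :=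
  isInjPure_iff_extension.2 fun E _ _ hE φ ↦
    have := hC E hE 0
    h.exists_comp_eq_of_subsingleton_ext φ

theorem left (h : IsShortExact f g) (hB : TorInjVanishing R B) (hC : TorInjVanishing R C) :
    TorInjVanishing R A := fun E _ _ hE n ↦
  have := hB E hE n
  have := hC E hE (n + 1)
  h.subsingleton_ext_left (n + 1)

theorem mid (h : IsShortExact f g) (hA : TorInjVanishing R A) (hC : TorInjVanishing R C) :
    TorInjVanishing R B := fun E _ _ hE n ↦
  have := hA E hE n
  have := hC E hE n
  h.subsingleton_ext_mid (n + 1)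

theorem of_projective [Module.Projective R A] : TorInjVanishing R A := fun _ _ _ _ _ ↦
  have : CategoryTheory.Projective (ModuleCat.of R A) :=
    (IsProjective.iff_projective A).1 inferInstance
  subsingleton_of_forall_eq 0 Ext.eq_zero_of_projective

end TorInjVanishing

/-- Dimension shifting along an infinite pure left resolution by modules with vanishing `Tor`. -/
theorem torInjVanishing_of_forall_exists (P : ModuleCat.{u} R → Prop)
    (hP : ∀ X, P X → ∃ (Y B : ModuleCat.{u} R) (f : Y →ₗ[R] B) (g : B →ₗ[R] X),
      P Y ∧ TorInjVanishing R B ∧ IsPureShortExact f g) (h : P (.of R A)) :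
    TorInjVanishing R A := fun E _ _ hE n ↦ by
  suffices H : ∀ X : ModuleCat.{u} R, P X →
      Subsingleton (Ext X (ModuleCat.of R (CharacterModule E)) (n + 1)) from H _ h
  clear h
  induction n with
  | zero =>
    intro X hX
    obtain ⟨Y, B, f, g, -, hB, hfg⟩ := hP X hX
    have := hB E hE 0
    exact hfg.subsingleton_ext_one_right hfg.isInjPure.exists_extension
  | succ n ih =>
    intro X hX
    obtain ⟨Y, B, f, g, hY, hB, hfg⟩ := hP X hX
    have := hB E hE (n + 1)
    have := ih Y hY
    exact hfg.subsingleton_ext_right (n + 1)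

namespace TorInjVanishing

theorem right (h : IsPureShortExact f g) (hA : TorInjVanishing R A) (hB : TorInjVanishing R B) :
    TorInjVanishing R C
  | E, _, _, hE, 0 =>
    have := hB E hE 0
    h.subsingleton_ext_one_right (isInjPure_iff_extension.1 h.isInjPure E hE)
  | E, _, _, hE, n + 1 =>
    have := hA E hE n
    have := hB E hE (n + 1)
    h.subsingleton_ext_right (n + 1)

theorem of_flat [Module.Flat R A] : TorInjVanishing R A := by
  refine torInjVanishing_of_forall_exists (fun X ↦ Module.Flat R X) (fun X hX ↦ ?_) ‹_›
  obtain ⟨K, L, f, g, _, hfg⟩ := exists_isShortExact_projective R X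
  exact ⟨K, L, f, g, hfg.flat_left, of_projective, hfg, hfg.isInjPure_of_flat⟩

end TorInjVanishing

end TorVanishing

section Complexes

theorem exists_int_sequence {α : Type*} {P : α → Prop} {r : α → α → Prop}
    (hl : ∀ a, P a → ∃ b, P b ∧ r b a) (hr : ∀ a, P a → ∃ b, P b ∧ r a b) {a : α} (ha : P a) :
    ∃ Z : ℤ → α, Z 0 = a ∧ ∀ i, r (Z (i + 1)) (Z i) := by
  have hl' (x : {a // P a}) : ∃ y : {a // P a}, r y x :=
    let ⟨y, hy, h⟩ := hl x x.2; ⟨⟨y, hy⟩, h⟩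
  have hr' (x : {a // P a}) : ∃ y : {a // P a}, r x y :=
    let ⟨y, hy, h⟩ := hr x x.2; ⟨⟨y, hy⟩, h⟩
  choose pred hpred using hl'
  choose succ hsucc using hr'
  refine ⟨fun
    | .ofNat n => (pred^[n] ⟨a, ha⟩).1
    | .negSucc n => (succ^[n + 1] ⟨a, ha⟩).1, rfl, fun
    | .ofNat n => ?_
    | .negSucc 0 => hsucc ⟨a, ha⟩
    | .negSucc (n + 1) => ?_⟩
  · change r (pred^[n + 1] ⟨a, ha⟩).1 (pred^[n] ⟨a, ha⟩).1
    rw [Function.iterate_succ_apply']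
    exact hpred _
  · change r (succ^[n + 1] ⟨a, ha⟩).1 (succ^[n + 1 + 1] ⟨a, ha⟩).1
    rw [Function.iterate_succ_apply' succ (n + 1)]
    exact hsucc _

section Ring

variable {R A B C D E : Type*} [Ring R] [AddCommGroup A] [Module R A] [AddCommGroup B]
  [Module R B] [AddCommGroup C] [Module R C] [AddCommGroup D] [Module R D] [AddCommGroup E]
  [Module R E]

theorem injective_of_exact_comp {f : A →ₗ[R] B} {g : B →ₗ[R] C} {i : C →ₗ[R] D}
    (hg : Function.Surjective g) (hgf : g ∘ₗ f = 0) (h : Function.Exact f (i ∘ₗ g)) :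
    Function.Injective i := by
  rw [injective_iff_map_eq_zero]
  intro c hc
  obtain ⟨b, rfl⟩ := hg c
  obtain ⟨a, rfl⟩ := (h b).1 hc
  exact LinearMap.congr_fun hgf a

theorem exact_comp_comp {g : A →ₗ[R] B} {f : B →ₗ[R] C} {g' : C →ₗ[R] D} {f' : D →ₗ[R] E}
    (hg : Function.Surjective g) (h : Function.Exact f g') (hf' : Function.Injective f') :
    Function.Exact (f ∘ₗ g) (f' ∘ₗ g') :=
  hg.comp_exact_iff_exact.2 (hf'.comp_exact_iff_exact.2 h)

end Ring

theorem isPureShortExact_range {R : Type u} [CommRing R] {A B C D : Type u} [AddCommGroup A]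
    [Module R A] [AddCommGroup B] [Module R B] [AddCommGroup C] [Module R C] [AddCommGroup D]
    [Module R D]
    {f : A →ₗ[R] B} {g : B →ₗ[R] C} {h : C →ₗ[R] D} (hgf : g ∘ₗ f = 0) (hgh : Function.Exact g h)
    (hE : ∀ (E : Type u) [AddCommGroup E] [Module R E], Module.Injective R E →
      Function.Exact (f.lTensor E) (g.lTensor E)) :
    IsPureShortExact (LinearMap.range g).subtype h.rangeRestrict where
  injective := Subtype.val_injective
  exact := by
    rw [LinearMap.exact_iff, LinearMap.ker_rangeRestrict, Submodule.range_subtype]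
    exact hgh.linearMap_ker_eq
  surjective := h.surjective_rangeRestrict
  isInjPure E _ _ hEinj := by
    have hgf' : g.rangeRestrict ∘ₗ f = 0 := LinearMap.ext fun x ↦
      Subtype.ext (LinearMap.congr_fun hgf x)
    refine injective_of_exact_comp (f := f.lTensor E) (g := g.rangeRestrict.lTensor E)
      (LinearMap.lTensor_surjective E g.surjective_rangeRestrict) ?_ ?_
    · rw [← LinearMap.lTensor_comp, hgf', LinearMap.lTensor_zero]
    · rw [← LinearMap.lTensor_comp]
      exact hE E hEinj

end Complexes

section GorensteinFlat

variable {R : Type u} [CommRing R]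
variable {A B C G : Type u} [AddCommGroup A] [Module R A] [AddCommGroup B] [Module R B]
  [AddCommGroup C] [Module R C] [AddCommGroup G] [Module R G]

attribute [instance] GorensteinFlatWitness.acg GorensteinFlatWitness.mod

theorem _root_.GorensteinFlatWitness.flatStep (W : GorensteinFlatWitness R G) (i : ℤ) :
    FlatStep R (LinearMap.range (W.d (i + 1))) (LinearMap.range (W.d i)) :=
  ⟨.of R (W.F (i + 1)), _, _, W.flat _, isPureShortExact_range (W.d_comp_d (i + 1))
    (LinearMap.exact_iff.2 (W.exact i))
    fun E _ _ hE ↦ LinearMap.exact_iff.2 (W.tensor_exact E hE (i + 1))⟩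

theorem _root_.IsGorensteinFlat.of_equiv (hA : IsGorensteinFlat R A) (e : B ≃ₗ[R] A) :
    IsGorensteinFlat R B :=
  have ⟨W⟩ := hA
  ⟨{ W with im_iso := W.im_iso.map e.trans }⟩

theorem isGorensteinFlat_of_flatStep (Z : ℤ → ModuleCat.{u} R)
    (hZ : ∀ i, FlatStep R (Z (i + 1)) (Z i)) : IsGorensteinFlat R (Z 0) := by
  choose F f g hF hfg using hZ
  refine ⟨{
    F := fun i ↦ F i
    flat := hF
    d := fun i ↦ f i ∘ₗ g (i + 1)
    d_comp_d := fun i ↦ ?_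
    exact := fun i ↦ ?_
    tensor_exact := fun E _ _ hE i ↦ ?_
    im_iso := ?_ }⟩
  · rw [LinearMap.comp_assoc, ← LinearMap.comp_assoc (g (i + 1 + 1)),
      (hfg (i + 1)).exact.linearMap_comp_eq_zero, LinearMap.zero_comp, LinearMap.comp_zero]
  · exact (exact_comp_comp (hfg (i + 1 + 1)).surjective (hfg (i + 1)).exact
      (hfg i).injective).linearMap_ker_eq
  · rw [LinearMap.lTensor_comp, LinearMap.lTensor_comp]
    exact (exact_comp_comp (LinearMap.lTensor_surjective E (hfg (i + 1 + 1)).surjective)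
      (lTensor_exact E (hfg (i + 1)).exact (hfg (i + 1)).surjective)
      ((hfg i).isInjPure E hE)).linearMap_ker_eq
  · rw [LinearMap.range_comp_of_range_eq_top _
      (LinearMap.range_eq_top.2 (hfg (-1 + 1)).surjective)]
    exact ⟨.ofInjective (f (-1)) (hfg (-1)).injective⟩

theorem isGorensteinFlat_iff_exists_flatStep :
    IsGorensteinFlat R G ↔ ∃ Z : ℤ → ModuleCat.{u} R,
      Nonempty (G ≃ₗ[R] Z 0) ∧ ∀ i, FlatStep R (Z (i + 1)) (Z i) := by
  refine ⟨fun ⟨W⟩ ↦ ⟨fun i ↦ .of R (LinearMap.range (W.d (i - 1))), by simpa using W.im_iso,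
    fun i ↦ ?_⟩,
    fun ⟨Z, ⟨e⟩, hZ⟩ ↦ (isGorensteinFlat_of_flatStep Z hZ).of_equiv e⟩
  beta_reduce
  rw [add_sub_right_comm]
  exact W.flatStep (i - 1)

theorem TorInjVanishing.of_equiv (hA : TorInjVanishing R A) (e : B ≃ₗ[R] A) :
    TorInjVanishing R B :=
  .left (isShortExact_zero e (C := PUnit)) hA .of_flat

theorem _root_.IsGorensteinFlat.torInjVanishing (hG : IsGorensteinFlat R G) :
    TorInjVanishing R G := by
  obtain ⟨Z, ⟨e⟩, hZ⟩ := isGorensteinFlat_iff_exists_flatStep.1 hG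
  refine .of_equiv (torInjVanishing_of_forall_exists (fun X ↦ ∃ i, X = Z i) ?_ ⟨0, rfl⟩) e
  rintro _ ⟨i, rfl⟩
  obtain ⟨F, f, g, hF, hfg⟩ := hZ i
  exact ⟨_, F, f, g, ⟨i + 1, rfl⟩, .of_flat, hfg⟩

theorem HasPureFlatCoresolution.of_equiv [IsCoherentRing R] (hA : HasPureFlatCoresolution R A)
    (e : B ≃ₗ[R] A) : HasPureFlatCoresolution R B :=
  have he := isShortExact_zero e (C := PUnit)
  .left ⟨he, he.isInjPure_of_flat⟩ hA hasPureFlatCoresolution_of_flat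

theorem _root_.IsGorensteinFlat.hasPureFlatCoresolution [IsCoherentRing R]
    (hG : IsGorensteinFlat R G) : HasPureFlatCoresolution R G := by
  obtain ⟨Z, ⟨e⟩, hZ⟩ := isGorensteinFlat_iff_exists_flatStep.1 hG
  refine .of_equiv ⟨fun X ↦ ∃ i, X = Z i, ⟨0, rfl⟩, ?_⟩ e
  rintro _ ⟨i, rfl⟩
  obtain ⟨j, rfl⟩ : ∃ j, i = j + 1 := ⟨i - 1, by ring⟩
  exact ⟨Z j, ⟨j, rfl⟩, hZ j⟩

theorem isGorensteinFlat_iff [IsCoherentRing R] :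
    IsGorensteinFlat R G ↔ TorInjVanishing R G ∧ HasPureFlatCoresolution R G := by
  refine ⟨fun h ↦ ⟨h.torInjVanishing, h.hasPureFlatCoresolution⟩, fun h ↦ ?_⟩
  let P (X : ModuleCat.{u} R) : Prop := TorInjVanishing R X ∧ HasPureFlatCoresolution R X
  have syzygy (X : ModuleCat.{u} R) (hX : P X) : ∃ Y, P Y ∧ FlatStep R Y X := by
    obtain ⟨K, L, f, g, _, hfg⟩ := exists_isShortExact_projective R X
    have hstep : FlatStep R K X := ⟨L, f, g, inferInstance, hfg, hX.1.isInjPure hfg⟩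
    exact ⟨K, ⟨.left hfg .of_flat hX.1, hX.2.of_flatStep hstep⟩, hstep⟩
  have cosyzygy (X : ModuleCat.{u} R) (hX : P X) : ∃ Y, P Y ∧ FlatStep R X Y := by
    obtain ⟨Y, hY, F, f, g, hF, hfg⟩ := hX.2.exists_flatStep
    exact ⟨Y, ⟨.right hfg hX.1 .of_flat, hY⟩, F, f, g, hF, hfg⟩
  obtain ⟨Z, hZ₀, hZ⟩ := exists_int_sequence (r := fun X Y : ModuleCat.{u} R ↦ FlatStep R X Y)
    syzygy cosyzygy (a := .of R G) h
  exact isGorensteinFlat_iff_exists_flatStep.2 ⟨Z, ⟨hZ₀ ▸ .refl R G⟩, hZ⟩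

theorem isGorensteinFlat_of_flat [IsCoherentRing R] [Module.Flat R A] : IsGorensteinFlat R A :=
  isGorensteinFlat_iff.2 ⟨.of_flat, hasPureFlatCoresolution_of_flat⟩

variable {f : A →ₗ[R] B} {g : B →ₗ[R] C} [IsCoherentRing R]

theorem _root_.IsGorensteinFlat.isPureShortExact (hC : IsGorensteinFlat R C)
    (h : IsShortExact f g) : IsPureShortExact f g :=
  ⟨h, (isGorensteinFlat_iff.1 hC).1.isInjPure h⟩

theorem _root_.IsGorensteinFlat.left (h : IsShortExact f g) (hB : IsGorensteinFlat R B)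
    (hC : IsGorensteinFlat R C) : IsGorensteinFlat R A :=
  have ⟨hB₁, hB₂⟩ := isGorensteinFlat_iff.1 hB
  have ⟨hC₁, hC₂⟩ := isGorensteinFlat_iff.1 hC
  isGorensteinFlat_iff.2 ⟨.left h hB₁ hC₁, .left (hC.isPureShortExact h) hB₂ hC₂⟩

theorem _root_.IsGorensteinFlat.mid (h : IsShortExact f g) (hA : IsGorensteinFlat R A)
    (hC : IsGorensteinFlat R C) : IsGorensteinFlat R B :=
  have ⟨hA₁, hA₂⟩ := isGorensteinFlat_iff.1 hA
  have ⟨hC₁, hC₂⟩ := isGorensteinFlat_iff.1 hC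
  isGorensteinFlat_iff.2 ⟨.mid h hA₁ hC₁, .mid (hC.isPureShortExact h) hA₂ hC₂⟩

theorem _root_.IsGorensteinFlat.right_of_flat (h : IsPureShortExact f g)
    (hA : IsGorensteinFlat R A) [Module.Flat R B] : IsGorensteinFlat R C :=
  have ⟨hA₁, hA₂⟩ := isGorensteinFlat_iff.1 hA
  isGorensteinFlat_iff.2 ⟨.right h hA₁ .of_flat, .right_of_flat h hA₂⟩

end GorensteinFlat

section Dimension

variable (R : Type u) [CommRing R]

/-- `HasGorensteinFlatResolution R n M`: there is an exact sequence
`0 → Gₙ → ⋯ → G₀ → M → 0` with each `Gᵢ` Gorenstein flat, built one short exact sequence at a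
time. -/
def HasGorensteinFlatResolution : ℕ → ModuleCat.{u} R → Prop
  | 0, M => IsGorensteinFlat R M
  | n + 1, M => ∃ (N G : ModuleCat.{u} R) (f : N →ₗ[R] G) (g : G →ₗ[R] M),
      IsShortExact f g ∧ IsGorensteinFlat R G ∧ HasGorensteinFlatResolution n N

variable {R}
variable {M N G A B C : Type u} [AddCommGroup M] [Module R M] [AddCommGroup N] [Module R N]
  [AddCommGroup G] [Module R G] [AddCommGroup A] [Module R A] [AddCommGroup B] [Module R B]
  [AddCommGroup C] [Module R C]
variable {n : ℕ}

namespace HasGorensteinFlatResolution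

variable {f : A →ₗ[R] B} {g : B →ₗ[R] C}

theorem succ (h : IsShortExact f g) (hA : HasGorensteinFlatResolution R n (.of R A))
    (hB : IsGorensteinFlat R B) : HasGorensteinFlatResolution R (n + 1) (.of R C) :=
  ⟨.of R A, .of R B, f, g, h, hB, hA⟩

theorem left [IsCoherentRing R] (h : IsShortExact f g)
    (hB : HasGorensteinFlatResolution R n (.of R B)) (hC : IsGorensteinFlat R C) :
    HasGorensteinFlatResolution R n (.of R A) :=
  match n, hB with
  | 0, hB => IsGorensteinFlat.left h hB hC
  | _ + 1, ⟨_, _, _, p, hip, hG, hN⟩ =>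
    have hker := isShortExact_subtype_ker (g := g ∘ₗ p) (h.surjective.comp hip.surjective)
    have ⟨_, _, hNK⟩ := hip.exists_isShortExact_ker_comp h hker
    succ hNK hN (.left hker hG hC)

theorem mid [IsCoherentRing R] (h : IsShortExact f g)
    (hA : HasGorensteinFlatResolution R n (.of R A)) (hC : IsGorensteinFlat R C) :
    HasGorensteinFlatResolution R n (.of R B) := by
  induction n generalizing A B C with
  | zero => exact IsGorensteinFlat.mid h hA hC
  | succ n ih =>
    obtain ⟨N, G, i, p, hip, hG, hN⟩ := hA
    obtain ⟨K, L, _, ε, _, hcover⟩ := exists_isShortExact_projective R C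
    obtain ⟨φ, hφ⟩ := Module.projective_lifting_property g ε h.surjective
    obtain ⟨_, hAL⟩ := h.exists_isShortExact_coprod hcover hφ
    have hGL := hip.prodMap_id (X := L)
    have hker := isShortExact_subtype_ker (g := f.coprod φ ∘ₗ p.prodMap .id)
      (hAL.surjective.comp hGL.surjective)
    obtain ⟨_, _, hNK⟩ := hGL.exists_isShortExact_ker_comp hAL hker
    exact succ hker (ih hNK hN (.left hcover isGorensteinFlat_of_flat hC))
      (.mid isShortExact_inl_snd hG isGorensteinFlat_of_flat)

/-- Schanuel's lemma: both first syzygies are compared with that of a projective module. -/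
theorem syzygy [IsCoherentRing R] (h : IsShortExact f g) (hB : IsGorensteinFlat R B)
    (hC : HasGorensteinFlatResolution R (n + 1) (.of R C)) :
    HasGorensteinFlatResolution R n (.of R A) := by
  obtain ⟨N, G, i, p, hip, hG, hN⟩ := hC
  obtain ⟨K, L, _, ε, _, hcover⟩ := exists_isShortExact_projective R C
  have hL : IsGorensteinFlat R L := isGorensteinFlat_of_flat
  obtain ⟨φ, hφ⟩ := Module.projective_lifting_property p ε hip.surjective
  obtain ⟨ψ, hψ⟩ := Module.projective_lifting_property g ε h.surjective
  obtain ⟨_, hNL⟩ := hip.exists_isShortExact_coprod hcover hφ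
  obtain ⟨_, hAL⟩ := h.exists_isShortExact_coprod hcover hψ
  have hK := left hNL (mid isShortExact_inl_snd hN hL) hG
  exact left isShortExact_inl_snd (mid hAL hK hB) hL

end HasGorensteinFlatResolution

attribute [instance] GfdWitness.acg GfdWitness.mod

theorem _root_.GfdWitness.isGorensteinFlat (W : GfdWitness R M 0) : IsGorensteinFlat R M := by
  have := W.triv 1 one_pos
  have hinj : Function.Injective W.π := by
    rw [← LinearMap.ker_eq_bot, W.exact_zero, Subsingleton.elim (W.d 0) 0, LinearMap.range_zero]
  exact (W.gf 0 le_rfl).of_equiv (LinearEquiv.ofBijective W.π ⟨hinj, W.π_surj⟩).symm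

theorem _root_.GfdWitness.nonempty_ker (W : GfdWitness R M (n + 1)) :
    Nonempty (GfdWitness R (LinearMap.ker W.π) n) :=
  have hd (x : W.G 1) : W.d 0 x ∈ LinearMap.ker W.π := W.exact_zero ▸ ⟨x, rfl⟩
  ⟨{ G := fun i ↦ W.G (i + 1)
     gf := fun i hi ↦ W.gf _ (Nat.succ_le_succ hi)
     triv := fun i hi ↦ W.triv _ (Nat.succ_lt_succ hi)
     π := (W.d 0).codRestrict _ hd
     π_surj := by
      rintro ⟨x, hx⟩
      obtain ⟨y, rfl⟩ := W.exact_zero ▸ hx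
      exact ⟨y, rfl⟩
     d := fun i ↦ W.d (i + 1)
     exact_zero := by rw [LinearMap.ker_codRestrict, W.exact]
     exact := fun i ↦ W.exact (i + 1) }⟩

theorem nonempty_gfdWitness_zero (hM : IsGorensteinFlat R M) : Nonempty (GfdWitness R M 0) :=
  let G : ℕ → ModuleCat.{u} R
    | 0 => .of R M
    | _ + 1 => .of R PUnit
  have (i : ℕ) : Subsingleton (G (i + 1)) := inferInstanceAs (Subsingleton PUnit)
  ⟨{ G := fun i ↦ G i
     gf := fun | 0, _ => hM
     triv := fun | i + 1, _ => this i
     π := (LinearMap.id : M →ₗ[R] M)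
     π_surj := Function.surjective_id
     d := fun _ ↦ 0
     exact_zero := LinearMap.ker_id.trans LinearMap.range_zero.symm
     exact := fun _ ↦ Subsingleton.elim _ _ }⟩

theorem nonempty_gfdWitness_succ {f : N →ₗ[R] G} {g : G →ₗ[R] M} (h : IsShortExact f g)
    (hG : IsGorensteinFlat R G) (W : GfdWitness R N n) : Nonempty (GfdWitness R M (n + 1)) :=
  let F : ℕ → ModuleCat.{u} R
    | 0 => .of R G
    | i + 1 => .of R (W.G i)
  ⟨{ G := fun i ↦ F i
     gf := fun
      | 0, _ => hG
      | i + 1, hi => W.gf i (Nat.le_of_succ_le_succ hi)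
     triv := fun | i + 1, hi => W.triv i (Nat.lt_of_succ_lt_succ hi)
     π := g
     π_surj := h.surjective
     d := fun
      | 0 => f ∘ₗ W.π
      | i + 1 => W.d i
     exact_zero := h.exact.linearMap_ker_eq.trans
      (LinearMap.range_comp_of_range_eq_top _ (LinearMap.range_eq_top.2 W.π_surj)).symm
     exact := fun
      | 0 => (LinearMap.ker_comp_of_ker_eq_bot _ (LinearMap.ker_eq_bot.2 h.injective)).trans
          W.exact_zero
      | i + 1 => W.exact i }⟩

theorem nonempty_gfdWitness_iff :
    Nonempty (GfdWitness R M n) ↔ HasGorensteinFlatResolution R n (.of R M) := by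
  induction n generalizing M with
  | zero => exact ⟨fun ⟨W⟩ ↦ W.isGorensteinFlat, nonempty_gfdWitness_zero⟩
  | succ n ih =>
    constructor
    · rintro ⟨W⟩
      exact .succ (isShortExact_subtype_ker W.π_surj) (ih.1 W.nonempty_ker)
        (W.gf 0 (Nat.zero_le _))
    · rintro ⟨N, G, f, g, h, hG, hN⟩
      obtain ⟨W⟩ := ih.2 hN
      exact nonempty_gfdWitness_succ h hG W

theorem gfd_congr {Q X : Type u} [CommRing Q] [AddCommGroup X] [Module Q X]
    (h : ∀ n, HasGorensteinFlatResolution R n (.of R M) ↔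
      HasGorensteinFlatResolution Q n (.of Q X)) : gfd R M = gfd Q X := by
  simp only [gfd, nonempty_gfdWitness_iff, h]

end Dimension

section BaseChange

open TensorProduct.AlgebraTensorModule (lTensor leftComm congr)

section Unit

variable {R : Type u} [CommRing R] {A : Type u} [AddCommGroup A] [Module R A]

theorem isInjPure_mk_one (S : Type u) [CommRing S] [Algebra R S] [Module.FaithfullyFlat R S] :
    IsInjPure (TensorProduct.mk R S A 1) := fun E _ _ _ ↦ by
  have h : (TensorProduct.leftComm R E S A).toLinearMap ∘ₗ (TensorProduct.mk R S A 1).lTensor E =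
      TensorProduct.mk R S (E ⊗[R] A) 1 := by
    ext; rfl
  refine .of_comp (f := TensorProduct.leftComm R E S A) ?_
  rw [← LinearEquiv.coe_coe, ← LinearMap.coe_comp, h]
  exact Module.FaithfullyFlat.tensorProduct_mk_injective (E ⊗[R] A)

variable {Q : Type u} [CommRing Q] [Algebra R Q] [Module Q A] [IsScalarTower R Q A]

instance : IsScalarTower R Q (CharacterModule A) where
  smul_assoc r q c := by
    apply CharacterModule.ext
    intro a
    change c ((r • q) • a) = c (q • r • a)
    rw [smul_assoc, smul_comm]

theorem injective_of_flat_algebra [Module.Flat R Q] [Module.Injective Q A] :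
    Module.Injective R A where
  out X Y _ _ _ _ f hf g := by
    obtain ⟨k, hk⟩ := Module.Injective.out (f.baseChange Q)
      (Module.Flat.lTensor_preserves_injective_linearMap f hf) (g.liftBaseChange Q)
    exact ⟨k.restrictScalars R ∘ₗ TensorProduct.mk R Q Y 1, fun x ↦ by simpa using hk (1 ⊗ₜ x)⟩

end Unit

variable {R : Type u} [CommRing R] (Q S : Type u) [CommRing Q] [CommRing S] [Algebra R Q]
  [Algebra R S] [Algebra Q S] [IsScalarTower R Q S]
variable {A B C : Type u} [AddCommGroup A] [Module R A] [AddCommGroup B] [Module R B]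
  [AddCommGroup C] [Module R C] {f : A →ₗ[R] B} {g : B →ₗ[R] C}

theorem flat_baseChange [Module.Flat Q S] [Module.Flat R A] : Module.Flat Q (S ⊗[R] A) :=
  Module.Flat.trans Q S (S ⊗[R] A)

theorem IsShortExact.baseChange [Module.Flat R S] (h : IsShortExact f g) :
    IsShortExact (lTensor Q S f) (lTensor Q S g) where
  injective := Module.Flat.lTensor_preserves_injective_linearMap f h.injective
  exact := lTensor_exact S h.exact h.surjective
  surjective := LinearMap.lTensor_surjective S h.surjective

theorem IsInjPure.baseChange [Module.Flat R Q] [Module.Flat Q S] (hf : IsInjPure f) :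
    IsInjPure (lTensor Q S f) := fun J _ _ _ ↦ by
  let : Module R J := Module.compHom J (algebraMap R Q)
  have : IsScalarTower R Q J := .of_algebraMap_smul fun _ _ ↦ rfl
  have hJ : Function.Injective (lTensor Q J f) := hf J (injective_of_flat_algebra (Q := Q))
  have h : (leftComm R Q J S B).toLinearMap ∘ₗ (lTensor Q S f).lTensor J =
      (lTensor Q J f).lTensor S ∘ₗ (leftComm R Q J S A).toLinearMap := by
    ext; rfl
  refine .of_comp (f := leftComm R Q J S B) ?_
  change Function.Injective ((leftComm R Q J S B).toLinearMap ∘ₗ _)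
  rw [h, LinearMap.coe_comp]
  exact (Module.Flat.lTensor_preserves_injective_linearMap _ hJ).comp (leftComm R Q J S A).injective

theorem IsPureShortExact.baseChange [Module.Flat R Q] [Module.Flat Q S]
    (h : IsPureShortExact f g) : IsPureShortExact (lTensor Q S f) (lTensor Q S g) :=
  have : Module.Flat R S := .trans R Q S
  ⟨h.toIsShortExact.baseChange Q S, h.isInjPure.baseChange Q S⟩

theorem FlatStep.baseChange [Module.Flat R Q] [Module.Flat Q S]
    (h : FlatStep R A C) : FlatStep Q (S ⊗[R] A) (S ⊗[R] C) :=
  have ⟨F, _, _, _, hfg⟩ := h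
  ⟨.of Q (S ⊗[R] F), _, _, flat_baseChange Q S, hfg.baseChange Q S⟩

theorem _root_.IsGorensteinFlat.baseChange [Module.Flat R Q] [Module.Flat Q S]
    (h : IsGorensteinFlat R A) : IsGorensteinFlat Q (S ⊗[R] A) :=
  have ⟨Z, ⟨e⟩, hZ⟩ := isGorensteinFlat_iff_exists_flatStep.1 h
  isGorensteinFlat_iff_exists_flatStep.2
    ⟨fun i ↦ .of Q (S ⊗[R] Z i), ⟨congr (.refl Q S) e⟩, fun i ↦ (hZ i).baseChange Q S⟩

theorem HasGorensteinFlatResolution.baseChange [Module.Flat R Q] [Module.Flat Q S]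
    {n : ℕ} {M : ModuleCat.{u} R} (h : HasGorensteinFlatResolution R n M) :
    HasGorensteinFlatResolution Q n (.of Q (S ⊗[R] M)) := by
  induction n generalizing M with
  | zero => exact IsGorensteinFlat.baseChange Q S h
  | succ n ih =>
    have : Module.Flat R S := .trans R Q S
    obtain ⟨N, G, f, g, hfg, hG, hN⟩ := h
    exact .succ (hfg.baseChange Q S) (ih hN) (hG.baseChange Q S)

/-- For `E` injective, the inclusion `E* → (S ⊗ E*)**` is split over `R`, and its target is the
character module of an injective `Q`-module, so it receives extensions along `v`. -/
theorem IsInjPure.comp_mk_one [IsCoherentRing R] [Module.FaithfullyFlat R S] [Module.Flat Q S]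
    {X : Type u} [AddCommGroup X] [Module R X] [Module Q X] [IsScalarTower R Q X]
    {v : S ⊗[R] A →ₗ[Q] X} (hv : IsInjPure v) :
    IsInjPure (v.restrictScalars R ∘ₗ TensorProduct.mk R S A 1) :=
  isInjPure_iff_extension.2 fun E _ _ _ φ ↦ by
    have : Module.Flat R (CharacterModule E) := flat_characterModule
    have : Module.Injective Q (CharacterModule (S ⊗[R] CharacterModule E)) :=
      Module.Flat.iff_characterModule_injective.1 (flat_baseChange Q S)
    obtain ⟨r, hr⟩ := (isInjPure_doubleDualEval.comp (isInjPure_mk_one S)).exists_extension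
      (LinearMap.id : CharacterModule E →ₗ[R] CharacterModule E)
    obtain ⟨ψ, hψ⟩ := hv.exists_extension
      (doubleDualEval Q (S ⊗[R] CharacterModule E) ∘ₗ lTensor Q S φ)
    refine ⟨r ∘ₗ ψ.restrictScalars R, LinearMap.ext fun a ↦ ?_⟩
    have hψa : ψ (v (1 ⊗ₜ a)) = doubleDualEval R (S ⊗[R] CharacterModule E) (1 ⊗ₜ φ a) :=
      LinearMap.congr_fun hψ (1 ⊗ₜ a)
    exact (congrArg r hψa).trans (LinearMap.congr_fun hr (φ a))

section Descent

variable [IsCoherentRing R] [Module.FaithfullyFlat R S] [Module.Flat Q S]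

theorem IsInjPure.of_baseChange (h : IsInjPure (lTensor Q S f)) : IsInjPure f :=
  .of_comp (g := TensorProduct.mk R S B 1) h.comp_mk_one

theorem TorInjVanishing.of_baseChange (h : TorInjVanishing Q (S ⊗[R] A)) : TorInjVanishing R A := by
  refine torInjVanishing_of_forall_exists
    (fun X : ModuleCat.{u} R ↦ TorInjVanishing Q (S ⊗[R] X)) (fun X hX ↦ ?_) (A := A) h
  obtain ⟨K, L, f, g, _, hfg⟩ := exists_isShortExact_projective R X
  have : Module.Flat Q (S ⊗[R] L) := flat_baseChange Q S
  have hfg' := hfg.baseChange Q S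
  exact ⟨K, L, f, g, .left hfg' .of_flat hX, .of_flat, hfg, (hX.isInjPure hfg').of_baseChange Q S⟩

variable [IsCoherentRing Q] [Module.Flat R Q]

theorem _root_.IsGorensteinFlat.exists_flatStep_of_baseChange (h : IsGorensteinFlat Q (S ⊗[R] A)) :
    ∃ C : ModuleCat.{u} R, IsGorensteinFlat Q (S ⊗[R] C) ∧ FlatStep R A C := by
  obtain ⟨_, _, F, u, v, hF, huv⟩ := h.hasPureFlatCoresolution.exists_flatStep
  let : Module R F := Module.compHom F (algebraMap R Q)
  have : IsScalarTower R Q F := .of_algebraMap_smul fun _ _ ↦ rfl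
  have : Module.Flat R F := .trans R Q F
  have hs := isShortExact_mkQ_range (f := u.restrictScalars R ∘ₗ TensorProduct.mk R S A 1)
    (huv.injective.comp (Module.FaithfullyFlat.tensorProduct_mk_injective A))
  have hpure : IsPureShortExact _ _ := ⟨hs, huv.isInjPure.comp_mk_one⟩
  have : Module.Flat Q (S ⊗[R] F) := flat_baseChange Q S
  exact ⟨.of R _, .right_of_flat (hpure.baseChange Q S) h, .of R F, _, _, ‹_›, hpure⟩

theorem _root_.IsGorensteinFlat.of_baseChange (h : IsGorensteinFlat Q (S ⊗[R] A)) :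
    IsGorensteinFlat R A :=
  isGorensteinFlat_iff.2 ⟨h.torInjVanishing.of_baseChange Q S,
    fun X ↦ IsGorensteinFlat Q (S ⊗[R] X), h, fun _ hX ↦ hX.exists_flatStep_of_baseChange Q S⟩

theorem HasGorensteinFlatResolution.of_baseChange {n : ℕ} {M : ModuleCat.{u} R}
    (h : HasGorensteinFlatResolution Q n (.of Q (S ⊗[R] M))) :
    HasGorensteinFlatResolution R n M := by
  induction n generalizing M with
  | zero => exact IsGorensteinFlat.of_baseChange Q S h
  | succ n ih =>
    obtain ⟨K, L, f, g, _, hfg⟩ := exists_isShortExact_projective R M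
    have : Module.Flat Q (S ⊗[R] L) := flat_baseChange Q S
    exact .succ hfg (ih (.syzygy (hfg.baseChange Q S) isGorensteinFlat_of_flat h))
      isGorensteinFlat_of_flat

theorem gfd_baseChange (M : Type u) [AddCommGroup M] [Module R M] :
    gfd Q (S ⊗[R] M) = gfd R M :=
  gfd_congr fun _ ↦ ⟨.of_baseChange Q S (M := .of R M), .baseChange Q S⟩

end Descent

end BaseChange

end GorensteinFlat

theorem gfd_baseChange_eq_of_faithfullyFlat_of_semilocal_general
    (R S : Type u) [CommRing R] [CommRing S] [GorensteinFlat.IsCoherentRing R]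
    [GorensteinFlat.IsCoherentRing S] [Algebra R S] [Module.FaithfullyFlat R S]
    (M : Type u) [AddCommGroup M] [Module R M] :
    gfd S (S ⊗[R] M) = gfd R (S ⊗[R] M) ∧ gfd R (S ⊗[R] M) = gfd R M :=
  have hS : gfd S (S ⊗[R] M) = gfd R M := GorensteinFlat.gfd_baseChange S S M
  have hR : gfd R (S ⊗[R] M) = gfd R M := GorensteinFlat.gfd_baseChange R S M
  ⟨hS.trans hR.symm, hR⟩

theorem gfd_baseChange_eq_of_faithfullyFlat_of_semilocal
    (R S : Type u) [CommRing R] [CommRing S] [IsNoetherianRing R] [IsNoetherianRing S]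
    [Algebra R S] [Module.FaithfullyFlat R S]
    (hsemilocal : {I : Ideal R | I.IsMaximal}.Finite)
    (M : Type u) [AddCommGroup M] [Module R M] :
    gfd S (S ⊗[R] M) = gfd R (S ⊗[R] M) ∧ gfd R (S ⊗[R] M) = gfd R M :=
  gfd_baseChange_eq_of_faithfullyFlat_of_semilocal_general R S M
end
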